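/- arXiv:1405.6634 — 7 statements merged into one kernel-verified Lean document; each statement's English description precedes it below -/
import Mathlib

section
/- Let ν be a compactly supported probability measure on ℝ with ∫ v dν(v) = 0, let I_ν be the smallest closed interval containing supp ν, and assume there is ϖ > 0 such that ∫ dν(v)/(v − x)² ≥ 1 + ϖ for every x ∈ I_ν (the integral possibly being +∞). Then the equation ∫ dν(v)/(v − ζ)² = 1 has exactly two real solutions; both lie outside I_ν, and denoting them ζ− < ζ+, one has ζ− < inf I_ν ≤ 0 ≤ sup I_ν < ζ+; in particular ζ− < 0 < ζ+. -/
open MeasureTheory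

/-! Write `Φ(x) = ∫ dν(v)/(v − x)²`. If `ν` is carried by `(-∞, b]`, then `Φ` is continuous and
strictly decreasing on `(b, ∞)` and vanishes at infinity, while Fatou's lemma keeps `Φ` above any
level `t < Φ(b)` just to the right of `b`, whether or not `Φ(b)` is finite. Hence `Φ` takes each
such level `t ≠ 0` exactly once on `(b, ∞)`; the half-line to the left of the support follows by
reflection, and on the interval itself `Φ > t` by assumption. -/

open Set Filter Topology
open scoped ENNReal

/-- The inverse-square potential `x ↦ ∫ dν(v)/(v − x)²` of a measure `ν` on `ℝ`. It is valued in
`ℝ≥0∞`, and the integrand is `∞` at `v = x`. -/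
noncomputable def inverseSquarePotential (ν : Measure ℝ) (x : ℝ) : ℝ≥0∞ :=
  ∫⁻ v, (ENNReal.ofReal ((v - x) ^ 2))⁻¹ ∂ν

section InverseSquarePotential

variable {ν : Measure ℝ} {a b x r : ℝ} {t : ℝ≥0∞}

lemma continuous_inv_ofReal_sub_sq (v : ℝ) :
    Continuous fun x : ℝ ↦ (ENNReal.ofReal ((v - x) ^ 2))⁻¹ :=
  (ENNReal.continuous_ofReal.comp (by fun_prop : Continuous fun x : ℝ ↦ (v - x) ^ 2)).inv

lemma inv_ofReal_sq_le_of_le_abs {y : ℝ} (hr : 0 ≤ r) (hy : r ≤ |y|) :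
    (ENNReal.ofReal (y ^ 2))⁻¹ ≤ (ENNReal.ofReal (r ^ 2))⁻¹ := by
  rw [← sq_abs y]
  gcongr

lemma inv_ofReal_sq_ne_top (hr : r ≠ 0) : (ENNReal.ofReal (r ^ 2))⁻¹ ≠ ∞ := by
  simpa using hr

lemma inverseSquarePotential_le_of_le_abs_sub (hr : 0 ≤ r) (h : ∀ᵐ v ∂ν, r ≤ |v - x|) :
    inverseSquarePotential ν x ≤ (ENNReal.ofReal (r ^ 2))⁻¹ * ν univ := by
  rw [← lintegral_const]
  exact lintegral_mono_ae (h.mono fun v hv ↦ inv_ofReal_sq_le_of_le_abs hr hv)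

lemma inverseSquarePotential_map_neg (ν : Measure ℝ) (x : ℝ) :
    inverseSquarePotential (ν.map Neg.neg) x = inverseSquarePotential ν (-x) := by
  unfold inverseSquarePotential
  rw [lintegral_map (by fun_prop) measurable_neg]
  refine lintegral_congr fun v ↦ ?_
  rw [show (-v - x) ^ 2 = (v - -x) ^ 2 by ring]

theorem lowerSemicontinuous_inverseSquarePotential (ν : Measure ℝ) :
    LowerSemicontinuous (inverseSquarePotential ν) := by
  refine lowerSemicontinuous_iff_le_liminf.2 fun x ↦ ?_
  calc inverseSquarePotential ν x
      = ∫⁻ v, liminf (fun y ↦ (ENNReal.ofReal ((v - y) ^ 2))⁻¹) (𝓝 x) ∂ν :=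
        lintegral_congr fun v ↦ ((continuous_inv_ofReal_sub_sq v).tendsto x).liminf_eq.symm
    _ ≤ liminf (inverseSquarePotential ν) (𝓝 x) := lintegral_liminf_le fun y ↦ by fun_prop

theorem continuousAt_inverseSquarePotential [IsFiniteMeasure ν] {s : Set ℝ} (hs : IsClosed s)
    (hν : ∀ᵐ v ∂ν, v ∈ s) (hx : x ∉ s) : ContinuousAt (inverseSquarePotential ν) x := by
  obtain ⟨ε, hε, hball⟩ := Metric.isOpen_iff.1 hs.isOpen_compl x hx
  have le_abs_sub {y v : ℝ} (hy : y ∈ Metric.ball x (ε / 2)) (hv : v ∈ s) :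
      ε / 2 ≤ |v - y| := by
    by_contra! hvy
    refine hball (?_ : dist v x < ε) hv
    linarith [dist_triangle v y x, Real.dist_eq v y, Metric.mem_ball.1 hy]
  refine tendsto_lintegral_filter_of_dominated_convergence
    (fun _ ↦ (ENNReal.ofReal ((ε / 2) ^ 2))⁻¹) (.of_forall fun y ↦ by fun_prop) ?_ ?_
    (.of_forall fun v ↦ (continuous_inv_ofReal_sub_sq v).tendsto x)
  · filter_upwards [Metric.ball_mem_nhds x (half_pos hε)] with y hy
    filter_upwards [hν] with v hv
    exact inv_ofReal_sq_le_of_le_abs (half_pos hε).le (le_abs_sub hy hv)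
  · rw [lintegral_const]
    exact ENNReal.mul_ne_top (inv_ofReal_sq_ne_top (half_pos hε).ne') (measure_ne_top ν univ)

lemma inverseSquarePotential_le_of_ae_le (hb : ∀ᵐ v ∂ν, v ≤ b) (hx : b ≤ x) :
    inverseSquarePotential ν x ≤ (ENNReal.ofReal ((x - b) ^ 2))⁻¹ * ν univ := by
  refine inverseSquarePotential_le_of_le_abs_sub (sub_nonneg.2 hx) (hb.mono fun v hv ↦ ?_)
  linarith [neg_abs_le (v - x)]

theorem strictAntiOn_inverseSquarePotential [IsFiniteMeasure ν] [NeZero ν]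
    (hb : ∀ᵐ v ∂ν, v ≤ b) : StrictAntiOn (inverseSquarePotential ν) (Ioi b) := by
  intro x hx y hy hxy
  rw [mem_Ioi] at hx hy
  have finite_at_y : inverseSquarePotential ν y ≠ ∞ :=
    ne_top_of_le_ne_top
      (ENNReal.mul_ne_top (inv_ofReal_sq_ne_top (sub_pos.2 hy).ne') (measure_ne_top ν univ))
      (inverseSquarePotential_le_of_ae_le hb hy.le)
  refine lintegral_strict_mono (NeZero.ne ν) (by fun_prop) finite_at_y (hb.mono fun v hv ↦ ?_)
  have sq_lt : (v - x) ^ 2 < (v - y) ^ 2 := by nlinarith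
  exact ENNReal.inv_lt_inv.2 ((ENNReal.ofReal_lt_ofReal_iff_of_nonneg (sq_nonneg _)).2 sq_lt)

theorem tendsto_inverseSquarePotential_atTop [IsFiniteMeasure ν] (hb : ∀ᵐ v ∂ν, v ≤ b) :
    Tendsto (inverseSquarePotential ν) atTop (𝓝 0) := by
  have sq_atTop : Tendsto (fun x : ℝ ↦ (x - b) ^ 2) atTop atTop :=
    (tendsto_pow_atTop two_ne_zero).comp (tendsto_atTop_add_const_right atTop (-b) tendsto_id)
  have bound_tendsto :
      Tendsto (fun x ↦ (ENNReal.ofReal ((x - b) ^ 2))⁻¹ * ν univ) atTop (𝓝 0) := by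
    simpa using ENNReal.Tendsto.mul_const
      (tendsto_inv_iff.2 (ENNReal.tendsto_ofReal_atTop.comp sq_atTop))
      (Or.inr (measure_ne_top ν univ))
  refine tendsto_of_tendsto_of_tendsto_of_le_of_le' tendsto_const_nhds bound_tendsto
    (.of_forall fun _ ↦ zero_le) ?_
  filter_upwards [eventually_ge_atTop b] with x hx
  exact inverseSquarePotential_le_of_ae_le hb hx

theorem existsUnique_gt_inverseSquarePotential_eq [IsFiniteMeasure ν] [NeZero ν]
    (hb : ∀ᵐ v ∂ν, v ≤ b) (ht₀ : t ≠ 0) (ht : t < inverseSquarePotential ν b) :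
    ∃! ζ, b < ζ ∧ inverseSquarePotential ν ζ = t := by
  obtain ⟨c, hc, hbc⟩ : ∃ c, t < inverseSquarePotential ν c ∧ b < c :=
    ((((lowerSemicontinuous_inverseSquarePotential ν) b t ht).filter_mono
      nhdsWithin_le_nhds).and self_mem_nhdsWithin : ∀ᶠ c in 𝓝[>] b, _).exists
  obtain ⟨d, hd, hcd⟩ : ∃ d, inverseSquarePotential ν d < t ∧ c ≤ d :=
    (((tendsto_inverseSquarePotential_atTop hb).eventually_lt_const
      (pos_iff_ne_zero.2 ht₀)).and (eventually_ge_atTop c)).exists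
  have cont : ContinuousOn (inverseSquarePotential ν) (Icc c d) := fun x hx ↦
    (continuousAt_inverseSquarePotential isClosed_Iic hb
      (hbc.trans_le hx.1).not_ge).continuousWithinAt
  obtain ⟨ζ, hζ, hζt⟩ := intermediate_value_Icc' hcd cont ⟨hd.le, hc.le⟩
  have hbζ : b < ζ := hbc.trans_le hζ.1
  exact ⟨ζ, ⟨hbζ, hζt⟩, fun y ⟨hby, hyt⟩ ↦
    (strictAntiOn_inverseSquarePotential hb).injOn hby hbζ (hyt.trans hζt.symm)⟩

theorem existsUnique_lt_inverseSquarePotential_eq [IsFiniteMeasure ν] [NeZero ν]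
    (ha : ∀ᵐ v ∂ν, a ≤ v) (ht₀ : t ≠ 0) (ht : t < inverseSquarePotential ν a) :
    ∃! ζ, ζ < a ∧ inverseSquarePotential ν ζ = t := by
  have : NeZero (ν.map Neg.neg) :=
    ⟨(Measure.map_ne_zero_iff measurable_neg.aemeasurable).2 (NeZero.ne ν)⟩
  have hb : ∀ᵐ v ∂ν.map Neg.neg, v ≤ -a :=
    (ae_map_iff measurable_neg.aemeasurable measurableSet_Iic).2
      (ha.mono fun _ hv ↦ neg_le_neg hv)
  rw [← (Equiv.neg ℝ).existsUnique_congr_right]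
  simpa only [Equiv.neg_apply, neg_lt (b := a), inverseSquarePotential_map_neg] using
    existsUnique_gt_inverseSquarePotential_eq hb ht₀
      (by rwa [inverseSquarePotential_map_neg, neg_neg])

end InverseSquarePotential

theorem stmt_1_general (ν : Measure ℝ) [IsFiniteMeasure ν] [NeZero ν] {a b : ℝ}
    (hν : ∀ᵐ v ∂ν, v ∈ Icc a b) {t : ℝ≥0∞} (ht₀ : t ≠ 0)
    (ht : ∀ x ∈ Icc a b, t < inverseSquarePotential ν x) :
    ∃ ζm ζp : ℝ, ζm < ζp ∧
      inverseSquarePotential ν ζm = t ∧ inverseSquarePotential ν ζp = t ∧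
      ζm ∉ Icc a b ∧ ζp ∉ Icc a b ∧
      ζm < a ∧ a ≤ ⨍ v, v ∂ν ∧ ⨍ v, v ∂ν ≤ b ∧ b < ζp ∧
      ζm < ⨍ v, v ∂ν ∧ ⨍ v, v ∂ν < ζp ∧
      ∀ ζ : ℝ, inverseSquarePotential ν ζ = t → ζ = ζm ∨ ζ = ζp := by
  obtain ⟨ham, hmb⟩ : ⨍ v, v ∂ν ∈ Icc a b :=
    (convex_Icc a b).average_mem isClosed_Icc hν (.of_mem_Icc a b aemeasurable_id hν)
  have hab : a ≤ b := ham.trans hmb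
  obtain ⟨ζm, ⟨hζm, hm⟩, hm_unique⟩ := existsUnique_lt_inverseSquarePotential_eq
    (hν.mono fun _ hv ↦ hv.1) ht₀ (ht a (left_mem_Icc.2 hab))
  obtain ⟨ζp, ⟨hζp, hp⟩, hp_unique⟩ := existsUnique_gt_inverseSquarePotential_eq
    (hν.mono fun _ hv ↦ hv.2) ht₀ (ht b (right_mem_Icc.2 hab))
  refine ⟨ζm, ζp, by linarith, hm, hp, notMem_Icc_of_lt hζm, notMem_Icc_of_gt hζp, hζm, ham,
    hmb, hζp, hζm.trans_le ham, hmb.trans_lt hζp, fun ζ hζ ↦ ?_⟩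
  rcases lt_or_ge ζ a with hζa | haζ
  · exact .inl (hm_unique ζ ⟨hζa, hζ⟩)
  rcases lt_or_ge b ζ with hbζ | hζb
  · exact .inr (hp_unique ζ ⟨hbζ, hζ⟩)
  exact absurd hζ (ht ζ ⟨haζ, hζb⟩).ne'

/-- Let `ν` be a compactly supported centered probability measure on `ℝ`,
with `Set.Icc a b` its smallest closed supporting interval, satisfying the edge assumption
`∫ dν(v)/(v − x)² ≥ 1 + ϖ` for all `x ∈ [a,b]` (the integral possibly `+∞`, formalized via
the `ℝ≥0∞`-valued integral).  Then the equation `∫ dν(v)/(v − ζ)² = 1` has exactly two real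
solutions `ζ− < ζ+`, both outside `[a,b]`, and `ζ− < a ≤ 0 ≤ b < ζ+`; in particular
`ζ− < 0 < ζ+`. -/
theorem stmt_1 (ν : Measure ℝ) [IsProbabilityMeasure ν]
    (a b : ℝ) (hab : a ≤ b)
    (hsupp : ν (Set.Icc a b)ᶜ = 0)
    (hmin : ∀ a' b' : ℝ, ν (Set.Icc a' b')ᶜ = 0 → Set.Icc a b ⊆ Set.Icc a' b')
    (hcent : ∫ v, v ∂ν = 0)
    (ϖ : ℝ) (hϖ : 0 < ϖ)
    (hedge : ∀ x ∈ Set.Icc a b,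
      ENNReal.ofReal (1 + ϖ) ≤ ∫⁻ v, (ENNReal.ofReal ((v - x) ^ 2))⁻¹ ∂ν) :
    ∃ ζm ζp : ℝ, ζm < ζp ∧
      (∫⁻ v, (ENNReal.ofReal ((v - ζm) ^ 2))⁻¹ ∂ν) = 1 ∧
      (∫⁻ v, (ENNReal.ofReal ((v - ζp) ^ 2))⁻¹ ∂ν) = 1 ∧
      ζm ∉ Set.Icc a b ∧ ζp ∉ Set.Icc a b ∧
      ζm < a ∧ a ≤ 0 ∧ 0 ≤ b ∧ b < ζp ∧
      ζm < 0 ∧ 0 < ζp ∧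
      (∀ ζ : ℝ, (∫⁻ v, (ENNReal.ofReal ((v - ζ) ^ 2))⁻¹ ∂ν) = 1 → ζ = ζm ∨ ζ = ζp) := by
  simpa only [average_eq_integral, hcent, inverseSquarePotential] using
    stmt_1_general ν hsupp one_ne_zero fun x hx ↦
      (ENNReal.one_lt_ofReal.2 (lt_add_of_pos_right 1 hϖ)).trans_le (hedge x hx)
end

section
/- Let ν be a compactly supported probability measure on ℝ with ∫ v dν(v) = 0 satisfying the edge assumption, and let ζ− < ζ+ be the two real solutions of ∫ dν(v)/(v − ζ)² = 1 (both lying outside I_ν). Define L− := ζ− − ∫ dν(v)/(v − ζ−) and L+ := ζ+ − ∫ dν(v)/(v − ζ+). Then L− ≤ −2 and L+ ≥ 2; in particular L− < 0 < L+. -/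
open MeasureTheory

/-!
Integrating `2 ≤ x + x⁻¹` at `x = ζ₊ - v > 0` against `ν`, whose mean is zero, gives
`2 ≤ ζ₊ - ∫ (v - ζ₊)⁻¹ dν(v) = L₊`. The bound on `L₋` comes from the same inequality at
`x = v - ζ₋`.
-/

lemma two_le_add_inv_of_pos {K : Type*} [Field K] [LinearOrder K] [IsStrictOrderedRing K] {x : K}
    (hx : 0 < x) : 2 ≤ x + x⁻¹ := by
  have sub_two_eq_sq_mul_inv : x + x⁻¹ - 2 = (x - 1) ^ 2 * x⁻¹ := by
    field_simp
    ring
  have : 0 ≤ (x - 1) ^ 2 * x⁻¹ := by positivity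
  linarith

section RandomVariable

variable {α : Type*} [MeasurableSpace α] {μ : Measure α} {X : α → ℝ} {c ζ : ℝ}

lemma integrable_inv_of_ae_le [IsFiniteMeasure μ] (hX : AEMeasurable X μ) (hc : 0 < c)
    (hcX : ∀ᵐ ω ∂μ, c ≤ X ω) : Integrable (fun ω ↦ (X ω)⁻¹) μ :=
  .of_mem_Icc 0 c⁻¹ hX.inv <| hcX.mono fun _ h ↦
    ⟨inv_nonneg.2 (hc.le.trans h), inv_anti₀ hc h⟩

lemma two_le_integral_add_integral_inv [IsProbabilityMeasure μ] (hX : Integrable X μ)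
    (hXinv : Integrable (fun ω ↦ (X ω)⁻¹) μ) (hpos : ∀ᵐ ω ∂μ, 0 < X ω) :
    2 ≤ ∫ ω, X ω ∂μ + ∫ ω, (X ω)⁻¹ ∂μ :=
  calc
    (2 : ℝ) = ∫ _, 2 ∂μ := by simp
    _ ≤ ∫ ω, (X ω + (X ω)⁻¹) ∂μ :=
      integral_mono_ae (integrable_const _) (hX.add hXinv)
        (hpos.mono fun _ ↦ two_le_add_inv_of_pos)
    _ = ∫ ω, X ω ∂μ + ∫ ω, (X ω)⁻¹ ∂μ := integral_add hX hXinv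

lemma sub_integral_inv_sub_le_integral_sub_two [IsProbabilityMeasure μ] (hX : Integrable X μ)
    (hcX : ∀ᵐ ω ∂μ, c ≤ X ω) (hζ : ζ < c) :
    ζ - ∫ ω, (X ω - ζ)⁻¹ ∂μ ≤ ∫ ω, X ω ∂μ - 2 := by
  have hint : Integrable (fun ω ↦ X ω - ζ) μ := hX.sub (integrable_const ζ)
  have hgap : ∀ᵐ ω ∂μ, c - ζ ≤ X ω - ζ := hcX.mono fun _ h ↦ sub_le_sub_right h ζ
  have hgap_pos : 0 < c - ζ := sub_pos.2 hζ
  have hamgm := two_le_integral_add_integral_inv hint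
    (integrable_inv_of_ae_le hint.aemeasurable hgap_pos hgap) (hgap.mono fun _ ↦ hgap_pos.trans_le)
  have hmean : ∫ ω, (X ω - ζ) ∂μ = ∫ ω, X ω ∂μ - ζ := by
    rw [integral_sub hX (integrable_const ζ), integral_const, probReal_univ, one_smul]
  linarith

lemma integral_add_two_le_sub_integral_inv_sub [IsProbabilityMeasure μ] (hX : Integrable X μ)
    (hXc : ∀ᵐ ω ∂μ, X ω ≤ c) (hζ : c < ζ) :
    ∫ ω, X ω ∂μ + 2 ≤ ζ - ∫ ω, (X ω - ζ)⁻¹ ∂μ := by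
  have hreflected := sub_integral_inv_sub_le_integral_sub_two hX.neg
    (hXc.mono fun _ ↦ neg_le_neg) (neg_lt_neg hζ)
  have hneg_inv : ∀ ω, (-X ω - -ζ)⁻¹ = -(X ω - ζ)⁻¹ := fun ω ↦ by
    rw [← inv_neg, neg_sub_neg, neg_sub]
  simp only [Pi.neg_apply, hneg_inv, integral_neg] at hreflected
  linarith

end RandomVariable

theorem stmt_2_general (ν : Measure ℝ) [IsProbabilityMeasure ν] (a b : ℝ)
    (hsupp : ν (Set.Icc a b)ᶜ = 0) (hcent : ∫ v, v ∂ν = 0)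
    (ζm ζp : ℝ) (hζm_out : ζm < a) (hζp_out : b < ζp) :
    (ζm - ∫ v, (v - ζm)⁻¹ ∂ν) ≤ -2 ∧ 2 ≤ ζp - ∫ v, (v - ζp)⁻¹ ∂ν ∧
    (ζm - ∫ v, (v - ζm)⁻¹ ∂ν) < 0 ∧ 0 < ζp - ∫ v, (v - ζp)⁻¹ ∂ν := by
  have hmem : ∀ᵐ v ∂ν, v ∈ Set.Icc a b := hsupp
  have hint : Integrable (fun v : ℝ ↦ v) ν := .of_mem_Icc a b aemeasurable_id' hmem
  have hlower := sub_integral_inv_sub_le_integral_sub_two hint (hmem.mono fun _ ↦ And.left) hζm_out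
  have hupper := integral_add_two_le_sub_integral_inv_sub hint (hmem.mono fun _ ↦ And.right) hζp_out
  rw [hcent] at hlower hupper
  refine ⟨?_, ?_, ?_, ?_⟩ <;> linarith

/-- Under the standing assumptions on the compactly supported centered
probability measure `ν` (smallest supporting interval `[a,b]`, edge assumption with `ϖ > 0`),
let `ζ− < ζ+` be the two real solutions of `∫ dν(v)/(v − ζ)² = 1`, lying outside `[a,b]`.
Define `L± := ζ± − ∫ dν(v)/(v − ζ±)`.  Then `L− ≤ −2` and `L+ ≥ 2`; in particular
`L− < 0 < L+`. -/
theorem stmt_2 (ν : Measure ℝ) [IsProbabilityMeasure ν]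
    (a b : ℝ) (hab : a ≤ b)
    (hsupp : ν (Set.Icc a b)ᶜ = 0)
    (hmin : ∀ a' b' : ℝ, ν (Set.Icc a' b')ᶜ = 0 → Set.Icc a b ⊆ Set.Icc a' b')
    (hcent : ∫ v, v ∂ν = 0)
    (ϖ : ℝ) (hϖ : 0 < ϖ)
    (hedge : ∀ x ∈ Set.Icc a b,
      ENNReal.ofReal (1 + ϖ) ≤ ∫⁻ v, (ENNReal.ofReal ((v - x) ^ 2))⁻¹ ∂ν)
    (ζm ζp : ℝ) (hζζ : ζm < ζp)
    (hζm_out : ζm < a) (hζp_out : b < ζp)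
    (hζm : ∫ v, ((v - ζm) ^ 2)⁻¹ ∂ν = 1)
    (hζp : ∫ v, ((v - ζp) ^ 2)⁻¹ ∂ν = 1) :
    (ζm - ∫ v, (v - ζm)⁻¹ ∂ν) ≤ -2 ∧ 2 ≤ ζp - ∫ v, (v - ζp)⁻¹ ∂ν ∧
    (ζm - ∫ v, (v - ζm)⁻¹ ∂ν) < 0 ∧ 0 < ζp - ∫ v, (v - ζp)⁻¹ ∂ν :=
  stmt_2_general ν a b hsupp hcent ζm ζp hζm_out hζp_out
end

section
/- Let ν be a probability measure on ℝ and let ζ ∈ ℝ satisfy either ζ > sup(supp ν) or ζ < inf(supp ν). If ∫ dν(v)/(v − ζ)² = 1, then |∫ dν(v)/(v − ζ)³| ≥ 1. -/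
open MeasureTheory

/-!
On a probability space the `Lᵖ` norm is monotone in `p`, which in terms of moments reads
`(∫ |f|ᵖ)^q ≤ (∫ |f|^q)ᵖ` for `p ≤ q`. The resolvent `f v = (v - ζ)⁻¹` has constant sign on the
support of `ν`, so the absolute values may be moved outside the integrals. The case `p = 2`,
`q = 3`, `∫ f² = 1` gives `1 ≤ (∫ f³)²`.
-/

section Moments

variable {Ω E : Type*} [MeasurableSpace Ω] {μ : Measure Ω} [NormedAddCommGroup E]

lemma lpNorm_natCast_pow_eq_integral {f : Ω → E} {p : ℕ} (hp : p ≠ 0)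
    (hf : AEStronglyMeasurable f μ) : lpNorm f p μ ^ p = ∫ x, ‖f x‖ ^ p ∂μ := by
  have hnonneg : 0 ≤ ∫ x, ‖f x‖ ^ p ∂μ := integral_nonneg fun x ↦ by positivity
  rw [lpNorm_eq_integral_norm_rpow_toReal (mod_cast hp) (ENNReal.natCast_ne_top p) hf]
  simpa only [ENNReal.toReal_natCast, Real.rpow_natCast] using
    Real.rpow_inv_natCast_pow hnonneg hp

lemma lpNorm_le_lpNorm_of_exponent_le [IsProbabilityMeasure μ] {f : Ω → E} {p q : ENNReal}
    (hpq : p ≤ q) (hf : MemLp f q μ) : lpNorm f p μ ≤ lpNorm f q μ := by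
  rw [← toReal_eLpNorm hf.aestronglyMeasurable, ← toReal_eLpNorm hf.aestronglyMeasurable]
  exact ENNReal.toReal_mono hf.eLpNorm_ne_top
    (eLpNorm_le_eLpNorm_of_exponent_le hpq hf.aestronglyMeasurable)

theorem integral_norm_pow_pow_le_integral_norm_pow_pow [IsProbabilityMeasure μ] {f : Ω → E}
    {p q : ℕ} (hpq : p ≤ q) (hf : AEStronglyMeasurable f μ)
    (hint : Integrable (fun x ↦ ‖f x‖ ^ q) μ) :
    (∫ x, ‖f x‖ ^ p ∂μ) ^ q ≤ (∫ x, ‖f x‖ ^ q ∂μ) ^ p := by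
  obtain rfl | hp := eq_or_ne p 0
  · simp
  have hq : q ≠ 0 := by lia
  have hLq : MemLp f q μ := by
    rw [← integrable_norm_rpow_iff hf (mod_cast hq) (ENNReal.natCast_ne_top q)]
    simpa using hint
  calc (∫ x, ‖f x‖ ^ p ∂μ) ^ q = lpNorm f p μ ^ (p * q) := by
        rw [← lpNorm_natCast_pow_eq_integral hp hf, pow_mul]
    _ ≤ lpNorm f q μ ^ (p * q) :=
        pow_le_pow_left₀ lpNorm_nonneg (lpNorm_le_lpNorm_of_exponent_le (mod_cast hpq) hLq) _
    _ = (∫ x, ‖f x‖ ^ q ∂μ) ^ p := by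
        rw [← lpNorm_natCast_pow_eq_integral hq hf, pow_mul']

lemma abs_integral_pow_of_ae_nonneg_or_ae_nonpos {f : Ω → ℝ} (hf : 0 ≤ᵐ[μ] f ∨ f ≤ᵐ[μ] 0)
    (n : ℕ) : |∫ x, f x ^ n ∂μ| = ∫ x, |f x| ^ n ∂μ := by
  have hnonneg : 0 ≤ ∫ x, |f x| ^ n ∂μ := integral_nonneg fun x ↦ by positivity
  rcases hf with hpos | hneg
  · have h : ∫ x, f x ^ n ∂μ = ∫ x, |f x| ^ n ∂μ :=
      integral_congr_ae (hpos.mono fun x hx ↦ by simp only [abs_of_nonneg hx])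
    rw [h, abs_of_nonneg hnonneg]
  · have h : ∫ x, f x ^ n ∂μ = (-1) ^ n * ∫ x, |f x| ^ n ∂μ := by
      rw [← integral_const_mul]
      refine integral_congr_ae (hneg.mono fun x hx ↦ ?_)
      simp only [abs_of_nonpos hx, ← mul_pow, neg_one_mul, neg_neg]
    rw [h, abs_mul, abs_neg_one_pow, one_mul, abs_of_nonneg hnonneg]

end Moments

lemma integrable_inv_sub_pow {ν : Measure ℝ} [IsFiniteMeasure ν] {K : Set ℝ} (hK : IsClosed K)
    (hν : ∀ᵐ v ∂ν, v ∈ K) {ζ : ℝ} (hζ : ζ ∉ K) (n : ℕ) :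
    Integrable (fun v ↦ ((v - ζ) ^ n)⁻¹) ν := by
  obtain ⟨r, hr, hball⟩ := Metric.isOpen_iff.1 hK.isOpen_compl ζ hζ
  refine Integrable.of_bound (by fun_prop) (r ^ n)⁻¹ (hν.mono fun v hv ↦ ?_)
  have hdist : r ≤ |v - ζ| := not_lt.1 fun h ↦ hball (by rwa [Metric.mem_ball, Real.dist_eq]) hv
  rw [norm_inv, norm_pow, Real.norm_eq_abs]
  gcongr

theorem stmt_3_general {ν : Measure ℝ} [IsProbabilityMeasure ν] {ζ : ℝ} {p q : ℕ} (hpq : p ≤ q)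
    (hζ : (∀ᵐ v ∂ν, ζ < v) ∨ ∀ᵐ v ∂ν, v < ζ)
    (hint : Integrable (fun v ↦ ((v - ζ) ^ q)⁻¹) ν) :
    |∫ v, ((v - ζ) ^ p)⁻¹ ∂ν| ^ q ≤ |∫ v, ((v - ζ) ^ q)⁻¹ ∂ν| ^ p := by
  have hsign : 0 ≤ᵐ[ν] (fun v ↦ (v - ζ)⁻¹) ∨ (fun v ↦ (v - ζ)⁻¹) ≤ᵐ[ν] 0 :=
    hζ.imp (fun h ↦ h.mono fun v hv ↦ inv_nonneg.2 (sub_nonneg.2 hv.le))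
      (fun h ↦ h.mono fun v hv ↦ inv_nonpos.2 (sub_nonpos.2 hv.le))
  simp only [← inv_pow] at hint ⊢
  rw [abs_integral_pow_of_ae_nonneg_or_ae_nonpos hsign,
    abs_integral_pow_of_ae_nonneg_or_ae_nonpos hsign]
  have hmeas : AEStronglyMeasurable (fun v ↦ (v - ζ)⁻¹) ν := by fun_prop
  exact integral_norm_pow_pow_le_integral_norm_pow_pow hpq hmeas
    (by simpa only [norm_pow] using hint.norm)

/-- Let `ν` be a probability measure on `ℝ` supported in a closed interval
`[a,b]` and let `ζ ∈ ℝ` lie strictly outside this interval (i.e. `ζ > sup(supp ν)` or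
`ζ < inf(supp ν)`).  If `∫ dν(v)/(v − ζ)² = 1`, then `|∫ dν(v)/(v − ζ)³| ≥ 1`. -/
theorem stmt_3 (ν : Measure ℝ) [IsProbabilityMeasure ν]
    (a b : ℝ) (hsupp : ν (Set.Icc a b)ᶜ = 0)
    (ζ : ℝ) (hζ : ζ < a ∨ b < ζ)
    (h1 : ∫ v, ((v - ζ) ^ 2)⁻¹ ∂ν = 1) :
    1 ≤ |∫ v, ((v - ζ) ^ 3)⁻¹ ∂ν| := by
  have hν : ∀ᵐ v ∂ν, v ∈ Set.Icc a b := hsupp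
  have hout : ζ ∉ Set.Icc a b := fun h ↦ hζ.elim h.1.not_gt h.2.not_gt
  have hside : (∀ᵐ v ∂ν, ζ < v) ∨ ∀ᵐ v ∂ν, v < ζ :=
    hζ.imp (fun h ↦ hν.mono fun v hv ↦ h.trans_le hv.1) fun h ↦ hν.mono fun v hv ↦ hv.2.trans_lt h
  simpa [h1] using stmt_3_general (by norm_num : 2 ≤ 3) hside
    (integrable_inv_sub_pow isClosed_Icc hν hout 3)
end

section
/- Let ν be a compactly supported probability measure on ℝ, let t₀ ∈ ℝ, and set ϑ(t) := e^{−(t−t₀)/2}. Let m : [0,∞) × ℂ⁺ → ℂ be continuously differentiable as a function of (t, Re z, Im z), holomorphic in z ∈ ℂ⁺ for each fixed t, satisfy Im m(t,z) ≥ 0, and satisfy the functional equation m(t,z) = ∫ dν(v)/(ϑ(t) v − z − m(t,z)) for all t ≥ 0 and z ∈ ℂ⁺. Then m satisfies the complex Burgers equation ∂_t m(t,z) = ½ ∂_z[ m(t,z) (m(t,z) + z) ] for all t ≥ 0 and z ∈ ℂ⁺. -/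
open MeasureTheory

/-!
The dilated functional equation says that `m(t, ·)` satisfies `m = c G(c (z + m))`, where `G` is the
Stieltjes transform of `ν` and `c = 1 / ϑ`. Write `c' = κ c` and `a = c² G'(c (z + m))`.
Differentiating in `z` gives `∂_z m = a (1 + ∂_z m)`, that is `(1 + ∂_z m)(1 - a) = 1`, and
differentiating in `t` gives `(1 - a) ∂_t m = κ (m + a (z + m))`. Multiplying the latter by
`1 + ∂_z m` eliminates `G'` and leaves `∂_t m = κ ∂_z [m (m + z)]`.
-/

open Filter Topology

section SelfConsistent

variable {𝕜 : Type*} [NontriviallyNormedField 𝕜] {G : 𝕜 → 𝕜}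

lemma deriv_eq_of_eventuallyEq_mul_comp {c z f' : 𝕜} {f : 𝕜 → 𝕜}
    (hG : DifferentiableAt 𝕜 G (c * (z + f z))) (hf : HasDerivAt f f' z)
    (heq : f =ᶠ[𝓝 z] fun w => c * G (c * (w + f w))) :
    f' = c ^ 2 * deriv G (c * (z + f z)) * (1 + f') := by
  have hinner : HasDerivAt (fun w => c * (w + f w)) (c * (1 + f')) z :=
    ((hasDerivAt_id z).add hf).const_mul c
  have hrhs := (hG.hasDerivAt.comp z hinner).const_mul c
  linear_combination hf.unique (hrhs.congr_of_eventuallyEq heq)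

variable {𝕝 : Type*} [NontriviallyNormedField 𝕝] [NormedAlgebra 𝕝 𝕜] {T : Set 𝕝} {t : 𝕝}

lemma derivWithin_eq_of_eventuallyEq_mul_comp {c f : 𝕝 → 𝕜} {κ z f' : 𝕜}
    (hT : UniqueDiffWithinAt 𝕝 T t)
    (hG : DifferentiableAt 𝕜 G (c t * (z + f t)))
    (hc : HasDerivWithinAt c (κ * c t) T t) (hf : HasDerivWithinAt f f' T t)
    (heq : f =ᶠ[𝓝[T] t] fun s => c s * G (c s * (z + f s)))
    (heq_self : f t = c t * G (c t * (z + f t))) :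
    f' = κ * f t + c t ^ 2 * deriv G (c t * (z + f t)) * (κ * (z + f t) + f') := by
  have hinner : HasDerivWithinAt (fun s => c s * (z + f s)) (κ * c t * (z + f t) + c t * f') T t :=
    hc.mul (hf.const_add z)
  have hrhs := hc.mul (hG.hasDerivAt.comp_hasDerivWithinAt t hinner)
  have hderiv := hT.eq_deriv _ hf (hrhs.congr_of_eventuallyEq heq heq_self)
  simp only [Function.comp_apply] at hderiv
  linear_combination hderiv - κ * heq_self

theorem burgers_of_eventuallyEq_mul_comp {c : 𝕝 → 𝕜} {m : 𝕝 → 𝕜 → 𝕜} {κ z mt : 𝕜}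
    (hT : UniqueDiffWithinAt 𝕝 T t)
    (hG : DifferentiableAt 𝕜 G (c t * (z + m t z)))
    (hc : HasDerivWithinAt c (κ * c t) T t)
    (hmt : HasDerivWithinAt (fun s => m s z) mt T t)
    (hmz : DifferentiableAt 𝕜 (m t) z)
    (heq_time : ∀ᶠ s in 𝓝[T] t, m s z = c s * G (c s * (z + m s z)))
    (heq_space : ∀ᶠ w in 𝓝 z, m t w = c t * G (c t * (w + m t w))) :
    mt = κ * deriv (fun w => m t w * (m t w + w)) z := by
  have hz := deriv_eq_of_eventuallyEq_mul_comp hG hmz.hasDerivAt heq_space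
  have ht := derivWithin_eq_of_eventuallyEq_mul_comp hT hG hc hmt heq_time heq_space.self_of_nhds
  have hflux : deriv (fun w => m t w * (m t w + w)) z =
      deriv (m t) z * (m t z + z) + m t z * (deriv (m t) z + 1) :=
    (hmz.hasDerivAt.mul (hmz.hasDerivAt.add (hasDerivAt_id z))).deriv
  rw [hflux]
  linear_combination (1 + deriv (m t) z) * ht - (mt + κ * (z + m t z)) * hz

end SelfConsistent

lemma integral_inv_ofReal_mul_sub (ν : Measure ℝ) {r : ℝ} (hr : r ≠ 0) (w : ℂ) :
    ∫ v : ℝ, (((r * v : ℝ) : ℂ) - w)⁻¹ ∂ν =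
      (r : ℂ)⁻¹ * resolventTransform ν ((r : ℂ)⁻¹ * w) := by
  rw [resolventTransform_apply, ← integral_const_mul]
  congr with v
  have hr' : (r : ℂ) ≠ 0 := Complex.ofReal_ne_zero.2 hr
  rw [resolvent, Ring.inverse_eq_inv', ← mul_inv, mul_sub, mul_inv_cancel_left₀ hr',
    Complex.coe_algebraMap, Complex.ofReal_mul]

lemma differentiableAt_resolventTransform_of_im_ne_zero (ν : Measure ℝ) [IsFiniteMeasure ν] {w : ℂ}
    (hw : w.im ≠ 0) : DifferentiableAt ℂ (resolventTransform ν) w := by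
  refine (hasDerivAt_resolventTransform w ?_).differentiableAt
  rintro ⟨x, -, rfl⟩
  exact hw (Complex.ofReal_im x)

lemma hasDerivAt_exp_neg_sub_div_two (t₀ t : ℝ) :
    HasDerivAt (fun s => Real.exp (-(s - t₀) / 2)) (-(1 / 2 * Real.exp (-(t - t₀) / 2))) t :=
  (((hasDerivAt_id t).sub_const t₀).fun_neg.div_const 2).exp.congr_deriv (by simp only [id]; ring)

theorem stmt_5_general (ν : Measure ℝ) [IsFiniteMeasure ν] {ϑ κ : ℝ → ℝ} {m mt : ℝ → ℂ → ℂ}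
    (hϑ₀ : ∀ t ≥ (0 : ℝ), ϑ t ≠ 0)
    (hϑ : ∀ t ≥ (0 : ℝ), HasDerivWithinAt ϑ (-(κ t * ϑ t)) (Set.Ici 0) t)
    (him : ∀ t ≥ (0 : ℝ), ∀ z : ℂ, 0 < z.im → 0 ≤ (m t z).im)
    (heq : ∀ t ≥ (0 : ℝ), ∀ z : ℂ, 0 < z.im →
      m t z = ∫ v : ℝ, (((ϑ t * v : ℝ) : ℂ) - z - m t z)⁻¹ ∂ν)
    (hholo : ∀ t ≥ (0 : ℝ), DifferentiableOn ℂ (m t) {z : ℂ | 0 < z.im})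
    (hmt : ∀ t ≥ (0 : ℝ), ∀ z : ℂ, 0 < z.im →
      HasDerivWithinAt (fun s => m s z) (mt t z) (Set.Ici 0) t) :
    ∀ t ≥ (0 : ℝ), ∀ z : ℂ, 0 < z.im →
      mt t z = κ t * deriv (fun w => m t w * (m t w + w)) z := by
  intro t ht z hz
  have hnhds : {w : ℂ | 0 < w.im} ∈ 𝓝 z := UpperHalfPlane.isOpen_upperHalfPlaneSet.mem_nhds hz
  have hfixed : ∀ s ≥ (0 : ℝ), ∀ w : ℂ, 0 < w.im →
      m s w = ((ϑ s)⁻¹ : ℝ) * resolventTransform ν (((ϑ s)⁻¹ : ℝ) * (w + m s w)) := by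
    intro s hs w hw
    rw [Complex.ofReal_inv, ← integral_inv_ofReal_mul_sub ν (hϑ₀ s hs)]
    simpa only [sub_sub] using heq s hs w hw
  have him_ne : (((ϑ t)⁻¹ : ℝ) * (z + m t z)).im ≠ 0 := by
    rw [Complex.im_ofReal_mul, Complex.add_im]
    exact mul_ne_zero (inv_ne_zero (hϑ₀ t ht)) (add_pos_of_pos_of_nonneg hz (him t ht z hz)).ne'
  have hscale : HasDerivWithinAt (fun s => (((ϑ s)⁻¹ : ℝ) : ℂ)) (κ t * ((ϑ t)⁻¹ : ℝ))
      (Set.Ici 0) t := by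
    convert! ((hϑ t ht).inv (hϑ₀ t ht)).ofReal_comp using 1
    rw [← Complex.ofReal_mul]
    congr 1
    field_simp [hϑ₀ t ht]
  exact burgers_of_eventuallyEq_mul_comp (uniqueDiffOn_Ici 0 t ht)
    (differentiableAt_resolventTransform_of_im_ne_zero ν him_ne) hscale (hmt t ht z hz)
    ((hholo t ht).differentiableAt hnhds)
    (eventually_mem_nhdsWithin.mono fun s hs => hfixed s hs z hz)
    (mem_of_superset hnhds fun w hw => hfixed t ht w hw)

/-- Let `ν` be a compactly supported probability measure on `ℝ`, `t₀ ∈ ℝ`,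
and `ϑ(t) := exp(−(t−t₀)/2)`.  Suppose `m : [0,∞) × ℂ⁺ → ℂ` is continuously differentiable
(partial derivatives `mt` in `t` and `mz` in `z` exist and are jointly continuous),
holomorphic in `z` for each fixed `t`, has nonnegative imaginary part, and satisfies the
functional equation `m(t,z) = ∫ dν(v)/(ϑ(t) v − z − m(t,z))`.  Then `m` satisfies the
complex Burgers equation `∂_t m(t,z) = ½ ∂_z [ m(t,z)(m(t,z) + z) ]` on `[0,∞) × ℂ⁺`. -/
theorem stmt_5 (ν : Measure ℝ) [IsProbabilityMeasure ν]
    (K : ℝ) (hsupp : ν (Set.Icc (-K) K)ᶜ = 0)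
    (t₀ : ℝ) (m mt mz : ℝ → ℂ → ℂ)
    (him : ∀ t ≥ (0:ℝ), ∀ z : ℂ, 0 < z.im → 0 ≤ (m t z).im)
    (heq : ∀ t ≥ (0:ℝ), ∀ z : ℂ, 0 < z.im →
      m t z = ∫ v : ℝ, (((Real.exp (-(t - t₀) / 2) * v : ℝ) : ℂ) - z - m t z)⁻¹ ∂ν)
    (hholo : ∀ t ≥ (0:ℝ), DifferentiableOn ℂ (m t) {z : ℂ | 0 < z.im})
    (hmt : ∀ t ≥ (0:ℝ), ∀ z : ℂ, 0 < z.im →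
      HasDerivWithinAt (fun s => m s z) (mt t z) (Set.Ici 0) t)
    (hmz : ∀ t ≥ (0:ℝ), ∀ z : ℂ, 0 < z.im → HasDerivAt (fun w => m t w) (mz t z) z)
    (hcontm : ContinuousOn (fun p : ℝ × ℂ => m p.1 p.2) (Set.Ici 0 ×ˢ {z : ℂ | 0 < z.im}))
    (hcontt : ContinuousOn (fun p : ℝ × ℂ => mt p.1 p.2) (Set.Ici 0 ×ˢ {z : ℂ | 0 < z.im}))
    (hcontz : ContinuousOn (fun p : ℝ × ℂ => mz p.1 p.2) (Set.Ici 0 ×ˢ {z : ℂ | 0 < z.im})) :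
    ∀ t ≥ (0:ℝ), ∀ z : ℂ, 0 < z.im →
      mt t z = (1 / 2) * deriv (fun w => m t w * (m t w + w)) z := by
  simpa using stmt_5_general ν (κ := fun _ => 1 / 2) (fun t _ => (Real.exp_pos _).ne')
    (fun t _ => (hasDerivAt_exp_neg_sub_div_two t₀ t).hasDerivWithinAt) him heq hholo hmt
end

section
/- Under the standing assumptions on ν and on the solution m of the functional equation, there exists a constant C > 1 such that: for every E ∈ (L−, L+), C⁻¹ √κ_E ≤ liminf_{η↓0} Im m(E + iη) ≤ limsup_{η↓0} Im m(E + iη) ≤ C √κ_E; and for every E ∈ ℝ \ [L−, L+], lim_{η↓0} Im m(E + iη) = 0. In particular, the deformed semicircle law ρ_fc is supported on [L−, L+] and has strictly positive density in (L−, L+). -/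
open MeasureTheory Filter

/-!
Write `φ ζ = ζ - ∫ (v - ζ)⁻¹ ∂ν`, so that the functional equation reads `φ (z + m z) = z`. A limit
`ζ` of `z + m z` as `z → E` satisfies `φ ζ = E`, and by Fatou's lemma it inherits the bound
`∫ |v - ζ|⁻² ∂ν ≤ 1` valid in the upper half-plane, with equality if `Im ζ > 0`. This energy exceeds
`1` on the convex hull `[a, b]` of the support, so by lower semicontinuity and compactness `Im ζ` is
bounded below as long as `Re ζ ∈ [a, b]`.

The points `ζ±` are critical for `φ`, and Taylor's formula there reads
`φ ζ - L± = -(ζ - ζ±)² ∫ (v - ζ±)⁻² (v - ζ)⁻¹ ∂ν`. For real `ζ` outside `[a, b]` its sign forces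
`E ∉ (L₋, L₊)`. For `Im ζ > 0` its real and imaginary parts, combined with the energy equality, give
`|E - L±| ≍ |ζ - ζ±|²`, and `|ζ - ζ±|² ≤ 2 (Im ζ)²` when `Re ζ` lies on the side of `ζ±`
that does not meet `(a, b)`.
-/

open scoped ENNReal Topology

theorem liminf_le_limsup_and_mem_of_mapClusterPt {α X : Type*} [ConditionallyCompleteLinearOrder X]
    [TopologicalSpace X] [OrderTopology X] {l : Filter α} [l.NeBot] {u : α → X} {c C : X}
    {S : Set X}
    (hu : ∀ᶠ x in l, u x ∈ Set.Icc c C) (hS : ∀ y, MapClusterPt y l u → y ∈ S) :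
    liminf u l ≤ limsup u l ∧ liminf u l ∈ S ∧ limsup u l ∈ S := by
  have h_le : IsBoundedUnder (· ≤ ·) l u := isBoundedUnder_of_eventually_le (hu.mono fun _ h => h.2)
  have h_ge : IsBoundedUnder (· ≥ ·) l u := isBoundedUnder_of_eventually_ge (hu.mono fun _ h => h.1)
  exact ⟨liminf_le_limsup h_le h_ge, hS _ (.liminf h_le.isCoboundedUnder_ge h_ge),
    hS _ (.limsup h_ge.isCoboundedUnder_le h_le)⟩

theorem inv_mul_sqrt_le_and_le_mul_sqrt {A B C κ y : ℝ} (hC : 0 < C) (hAC : √A ≤ C) (hBC : √B ≤ C)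
    (hκ : 0 ≤ κ) (hy : 0 ≤ y) (hA : y ^ 2 ≤ A * κ) (hB : κ ≤ B * y ^ 2) :
    C⁻¹ * √κ ≤ y ∧ y ≤ C * √κ := by
  constructor
  · rw [inv_mul_le_iff₀ hC]
    calc √κ ≤ √(B * y ^ 2) := Real.sqrt_le_sqrt hB
      _ = √B * y := by rw [Real.sqrt_mul' _ (sq_nonneg y), Real.sqrt_sq hy]
      _ ≤ C * y := mul_le_mul_of_nonneg_right hBC hy
  · calc y ≤ √(A * κ) := Real.le_sqrt_of_sq_le hA
      _ = √A * √κ := Real.sqrt_mul' A hκ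
      _ ≤ C * √κ := mul_le_mul_of_nonneg_right hAC (Real.sqrt_nonneg κ)

theorem mul_eq_normSq_mul_of_ofReal_eq_neg_sq_mul {d : ℂ} {x p q : ℝ} (hd : d.im ≠ 0)
    (h : (x : ℂ) = -(d ^ 2 * (p - starRingEnd ℂ d * q))) :
    2 * d.re * p = Complex.normSq d * q ∧ x = Complex.normSq d * p := by
  have h_expand : (x : ℂ) = (Complex.normSq d * q : ℝ) * d - (p : ℝ) * d ^ 2 := by
    rw [h, Complex.ofReal_mul, ← Complex.mul_conj]
    ring
  have h_im : 0 = Complex.normSq d * q * d.im - p * (2 * d.re * d.im) := by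
    simpa [sq, two_mul, add_mul, mul_comm d.im] using congrArg Complex.im h_expand
  have h_re : x = Complex.normSq d * q * d.re - p * (d.re * d.re - d.im * d.im) := by
    simpa [sq] using congrArg Complex.re h_expand
  have h_first : 2 * d.re * p = Complex.normSq d * q :=
    mul_left_cancel₀ hd (by linear_combination h_im)
  refine ⟨h_first, ?_⟩
  rw [Complex.normSq_apply] at h_first h_re ⊢
  linear_combination h_re - d.re * h_first

theorem integral_mul_mem_Icc {Ω : Type*} [MeasurableSpace Ω] {μ : Measure Ω} {f w : Ω → ℝ}
    {c C : ℝ} (hw : Integrable w μ) (hfw : Integrable (fun ω => f ω * w ω) μ) (hw₀ : 0 ≤ᵐ[μ] w)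
    (hf : ∀ᵐ ω ∂μ, f ω ∈ Set.Icc c C) :
    ∫ ω, f ω * w ω ∂μ ∈ Set.Icc (c * ∫ ω, w ω ∂μ) (C * ∫ ω, w ω ∂μ) := by
  rw [← integral_const_mul, ← integral_const_mul]
  constructor
  · refine integral_mono_ae (hw.const_mul c) hfw ?_
    filter_upwards [hw₀, hf] with ω hω hfω using mul_le_mul_of_nonneg_right hfω.1 hω
  · refine integral_mono_ae hfw (hw.const_mul C) ?_
    filter_upwards [hw₀, hf] with ω hω hfω using mul_le_mul_of_nonneg_right hfω.2 hω

theorem resolvent_complex_apply (ζ : ℂ) (v : ℝ) : resolvent ζ v = ((v : ℂ) - ζ)⁻¹ := by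
  simp [resolvent]

theorem resolventTransform_eq_integral_inv (ν : Measure ℝ) (ζ : ℂ) :
    resolventTransform ν ζ = ∫ v : ℝ, ((v : ℂ) - ζ)⁻¹ ∂ν := by
  simp only [resolventTransform_apply, resolvent_complex_apply]

theorem notMem_algebraMap_image_of_im_ne_zero {ζ : ℂ} (hζ : ζ.im ≠ 0) (s : Set ℝ) :
    ζ ∉ algebraMap ℝ ℂ '' s := by
  rintro ⟨x, -, rfl⟩
  exact hζ (Complex.ofReal_im x)

section Integrability

variable {ν : Measure ℝ} {e ζ : ℂ}

theorem integrable_inv_sub [IsFiniteMeasure ν] (hζ : ζ ∉ algebraMap ℝ ℂ '' ν.support) :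
    Integrable (fun v : ℝ => ((v : ℂ) - ζ)⁻¹) ν :=
  (integrable_resolvent hζ).congr (.of_forall fun v => resolvent_complex_apply ζ v)

theorem integrable_inv_sub_mul {f : ℝ → ℂ} (hf : Integrable f ν)
    (he : e ∉ algebraMap ℝ ℂ '' ν.support) :
    Integrable (fun v : ℝ => ((v : ℂ) - e)⁻¹ * f v) ν := by
  refine hf.bdd_mul (Measurable.aestronglyMeasurable (by fun_prop)) ?_
    (c := (Metric.infDist e (algebraMap ℝ ℂ '' ν.support))⁻¹)
  filter_upwards [Measure.support_mem_ae] with v hv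
  rw [← resolvent_complex_apply]
  exact norm_resolvent_le_inv_infDist_support he hv

theorem resolventTransform_taylor [IsFiniteMeasure ν] (he : e ∉ algebraMap ℝ ℂ '' ν.support)
    (hζ : ζ ∉ algebraMap ℝ ℂ '' ν.support) :
    resolventTransform ν ζ = resolventTransform ν e
      + (ζ - e) * ∫ v : ℝ, (((v : ℂ) - e) ^ 2)⁻¹ ∂ν
      + (ζ - e) ^ 2 * ∫ v : ℝ, (((v : ℂ) - e) ^ 2)⁻¹ * ((v : ℂ) - ζ)⁻¹ ∂ν := by
  have h₁ := integrable_inv_sub he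
  have h₂ : Integrable (fun v : ℝ => (((v : ℂ) - e) ^ 2)⁻¹) ν := by
    simpa only [sq, mul_inv] using integrable_inv_sub_mul h₁ he
  have h₃ : Integrable (fun v : ℝ => (((v : ℂ) - e) ^ 2)⁻¹ * ((v : ℂ) - ζ)⁻¹) ν := by
    simpa only [sq, mul_inv, mul_assoc] using
      integrable_inv_sub_mul (integrable_inv_sub_mul (integrable_inv_sub hζ) he) he
  have h₁₂ : Integrable (fun v : ℝ => ((v : ℂ) - e)⁻¹ + (ζ - e) * (((v : ℂ) - e) ^ 2)⁻¹) ν :=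
    h₁.add (h₂.const_mul _)
  simp only [resolventTransform_eq_integral_inv]
  rw [← integral_const_mul, ← integral_const_mul, ← integral_add h₁ (h₂.const_mul _),
    ← integral_add h₁₂ (h₃.const_mul _)]
  refine integral_congr_ae ?_
  filter_upwards [Measure.support_mem_ae] with v hv
  have hve : (v : ℂ) - e ≠ 0 := sub_ne_zero.2 fun h => he ⟨v, hv, h⟩
  have hvζ : (v : ℂ) - ζ ≠ 0 := sub_ne_zero.2 fun h => hζ ⟨v, hv, h⟩
  field_simp
  ring

end Integrability

/-- The map `φ ζ = ζ - ∫ (v - ζ)⁻¹ ∂ν`, a left inverse of the subordination function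
`z ↦ z + m z` of the free convolution of `ν` with the semicircle law. -/
noncomputable def inverseSubordination (ν : Measure ℝ) (ζ : ℂ) : ℂ :=
  ζ - resolventTransform ν ζ

theorem inverseSubordination_ofReal (ν : Measure ℝ) (x : ℝ) :
    inverseSubordination ν x = ((x - ∫ v, (v - x)⁻¹ ∂ν : ℝ) : ℂ) := by
  rw [inverseSubordination, resolventTransform_eq_integral_inv, Complex.ofReal_sub,
    ← integral_complex_ofReal]
  simp only [Complex.ofReal_inv, Complex.ofReal_sub]

theorem continuousAt_inverseSubordination {ν : Measure ℝ} [IsFiniteMeasure ν] {ζ : ℂ}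
    (hζ : ζ ∉ algebraMap ℝ ℂ '' ν.support) : ContinuousAt (inverseSubordination ν) ζ :=
  continuousAt_id.sub (hasDerivAt_resolventTransform ζ hζ).continuousAt

section UpperHalfPlane

variable {ν : Measure ℝ} {ζ : ℂ}

theorem integrable_inv_normSq_sub [IsFiniteMeasure ν] (hζ : ζ ∉ algebraMap ℝ ℂ '' ν.support) :
    Integrable (fun v : ℝ => (Complex.normSq ((v : ℂ) - ζ))⁻¹) ν := by
  have h := (integrable_inv_sub_mul (integrable_inv_sub hζ) hζ).norm
  simpa only [norm_mul, norm_inv, ← mul_inv, Complex.norm_mul_self_eq_normSq] using h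

theorem inverseSubordination_im [IsFiniteMeasure ν] (hζ : ζ ∉ algebraMap ℝ ℂ '' ν.support) :
    (inverseSubordination ν ζ).im =
      ζ.im * (1 - ∫ v : ℝ, (Complex.normSq ((v : ℂ) - ζ))⁻¹ ∂ν) := by
  have h : (∫ v : ℝ, ((v : ℂ) - ζ)⁻¹ ∂ν).im = ∫ v : ℝ, (((v : ℂ) - ζ)⁻¹).im ∂ν :=
    (integral_im (integrable_inv_sub hζ)).symm
  have h_im (v : ℝ) : (((v : ℂ) - ζ)⁻¹).im = ζ.im * (Complex.normSq ((v : ℂ) - ζ))⁻¹ := by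
    simp [Complex.inv_im, div_eq_mul_inv]
  rw [inverseSubordination, resolventTransform_eq_integral_inv, Complex.sub_im, h]
  simp only [h_im, integral_const_mul]
  ring

theorem norm_resolventTransform_le_one [IsProbabilityMeasure ν]
    (hζ : ζ ∉ algebraMap ℝ ℂ '' ν.support)
    (h : ∫ v : ℝ, (Complex.normSq ((v : ℂ) - ζ))⁻¹ ∂ν ≤ 1) : ‖resolventTransform ν ζ‖ ≤ 1 := by
  have h_int := integrable_inv_normSq_sub hζ
  rw [resolventTransform_eq_integral_inv]
  calc ‖∫ v : ℝ, ((v : ℂ) - ζ)⁻¹ ∂ν‖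
      ≤ ∫ v : ℝ, (1 + (Complex.normSq ((v : ℂ) - ζ))⁻¹) / 2 ∂ν := by
        refine norm_integral_le_of_norm_le (((integrable_const 1).add h_int).div_const 2)
          (Eventually.of_forall fun v => ?_)
        -- AM-GM: `|w| ≤ (1 + |w|²) / 2`.
        rw [norm_inv, Complex.normSq_eq_norm_sq, ← inv_pow]
        linarith [sq_nonneg (‖(v : ℂ) - ζ‖⁻¹ - 1)]
    _ = (1 + ∫ v : ℝ, (Complex.normSq ((v : ℂ) - ζ))⁻¹ ∂ν) / 2 := by
        rw [integral_div, integral_add (integrable_const 1) h_int, integral_const,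
          probReal_univ, one_smul]
    _ ≤ 1 := by linarith

end UpperHalfPlane

/-- The energy `∫ |v - ζ|⁻² ∂ν`, with value `∞` allowed, so that it makes sense and is lower
semicontinuous up to the support of `ν`. -/
noncomputable def resolventEnergy (ν : Measure ℝ) (ζ : ℂ) : ℝ≥0∞ :=
  ∫⁻ v : ℝ, (ENNReal.ofReal (Complex.normSq ((v : ℂ) - ζ)))⁻¹ ∂ν

theorem resolventEnergy_ofReal (ν : Measure ℝ) (x : ℝ) :
    resolventEnergy ν x = ∫⁻ v, (ENNReal.ofReal ((v - x) ^ 2))⁻¹ ∂ν := by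
  simp only [resolventEnergy, ← Complex.ofReal_sub, Complex.normSq_ofReal, sq]

theorem resolventEnergy_eq_ofReal_integral {ν : Measure ℝ} [IsFiniteMeasure ν] {ζ : ℂ}
    (hζ : ζ ∉ algebraMap ℝ ℂ '' ν.support) :
    resolventEnergy ν ζ = ENNReal.ofReal (∫ v : ℝ, (Complex.normSq ((v : ℂ) - ζ))⁻¹ ∂ν) := by
  rw [ofReal_integral_eq_lintegral_ofReal (integrable_inv_normSq_sub hζ)
    (Eventually.of_forall fun v => inv_nonneg.2 (Complex.normSq_nonneg _))]
  refine lintegral_congr_ae ?_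
  filter_upwards [Measure.support_mem_ae] with v hv
  have hvζ : (v : ℂ) - ζ ≠ 0 := sub_ne_zero.2 fun h => hζ ⟨v, hv, h⟩
  exact (ENNReal.ofReal_inv_of_pos (Complex.normSq_pos.2 hvζ)).symm

theorem lowerSemicontinuous_resolventEnergy (ν : Measure ℝ) :
    LowerSemicontinuous (resolventEnergy ν) := by
  have h_cont (v : ℝ) : Continuous fun ζ : ℂ => (ENNReal.ofReal (Complex.normSq ((v : ℂ) - ζ)))⁻¹ :=
    (ENNReal.continuous_ofReal.comp
      (Complex.continuous_normSq.comp (continuous_const.sub continuous_id))).inv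
  refine lowerSemicontinuous_iff_le_liminf.2 fun ζ => ?_
  calc resolventEnergy ν ζ
      = ∫⁻ v : ℝ, liminf (fun ξ => (ENNReal.ofReal (Complex.normSq ((v : ℂ) - ξ)))⁻¹) (𝓝 ζ) ∂ν :=
        lintegral_congr fun v => ((h_cont v).tendsto ζ).liminf_eq.symm
    _ ≤ liminf (resolventEnergy ν) (𝓝 ζ) := lintegral_liminf_le fun ξ => by
        have : Measurable fun v : ℝ => Complex.normSq ((v : ℂ) - ξ) :=
          Complex.continuous_normSq.measurable.comp (by fun_prop)
        fun_prop

theorem exists_pos_le_abs_im_of_resolventEnergy_le {ν : Measure ℝ} {K : Set ℝ} {c : ℝ≥0∞}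
    (hK : IsCompact K) (h : ∀ x ∈ K, c < resolventEnergy ν x) :
    ∃ y₀ > 0, ∀ ζ : ℂ, ζ.re ∈ K → resolventEnergy ν ζ ≤ c → y₀ ≤ |ζ.im| := by
  have h_open : IsOpen {ζ | c < resolventEnergy ν ζ} :=
    (lowerSemicontinuous_resolventEnergy ν).isOpen_preimage c
  obtain ⟨y₀, hy₀, h_sub⟩ := (hK.image Complex.continuous_ofReal).exists_thickening_subset_open
    h_open (Set.image_subset_iff.2 h)
  refine ⟨y₀, hy₀, fun ζ hζ hζc => not_lt.1 fun h_lt => (h_sub ?_).not_ge hζc⟩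
  refine Metric.mem_thickening_iff.2 ⟨ζ.re, Set.mem_image_of_mem _ hζ, ?_⟩
  rwa [Complex.dist_of_re_eq (Complex.ofReal_re _).symm, Complex.ofReal_im, Real.dist_0_eq_abs]

theorem integral_inv_normSq_sub_le_one {ν : Measure ℝ} [IsFiniteMeasure ν] {ζ : ℂ} (hζ : 0 < ζ.im)
    (h : 0 ≤ (inverseSubordination ν ζ).im) :
    ∫ v : ℝ, (Complex.normSq ((v : ℂ) - ζ))⁻¹ ∂ν ≤ 1 := by
  rw [inverseSubordination_im (notMem_algebraMap_image_of_im_ne_zero hζ.ne' _)] at h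
  exact sub_nonneg.1 (nonneg_of_mul_nonneg_right h hζ)

section BoundaryPoints

variable {ν : Measure ℝ} {ζ : ℂ}

theorem notMem_image_support_of_resolventEnergy_le {c : ℝ≥0∞}
    (hν : ∀ x ∈ ν.support, c < resolventEnergy ν x) (h : resolventEnergy ν ζ ≤ c) :
    ζ ∉ algebraMap ℝ ℂ '' ν.support := by
  rintro ⟨x, hx, rfl⟩
  exact (hν x hx).not_ge h

/-- The candidates `ζ` for the boundary values at `E` of the subordination function `z ↦ z + m z`:
points of the closed upper half-plane that the inverse subordination map sends to `E`, and at
which the energy satisfies the bound inherited from the open half-plane. -/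
structure IsBoundaryPoint (ν : Measure ℝ) (E : ℝ) (ζ : ℂ) : Prop where
  im_nonneg : 0 ≤ ζ.im
  energy_le : resolventEnergy ν ζ ≤ 1
  map_eq : inverseSubordination ν ζ = E

theorem isBoundaryPoint_of_tendsto [IsFiniteMeasure ν]
    (hν : ∀ x ∈ ν.support, 1 < resolventEnergy ν x) {ι : Type*} {l : Filter ι} [l.NeBot]
    {Z : ι → ℂ} {E : ℝ} (hZ : ∀ᶠ i in l, 0 < (Z i).im)
    (hφ : ∀ᶠ i in l, 0 ≤ (inverseSubordination ν (Z i)).im) (hζ : Tendsto Z l (𝓝 ζ))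
    (hE : Tendsto (fun i => inverseSubordination ν (Z i)) l (𝓝 E)) :
    IsBoundaryPoint ν E ζ := by
  have h_energy : ∀ᶠ i in l, resolventEnergy ν (Z i) ≤ 1 := by
    filter_upwards [hZ, hφ] with i hi hφi
    rw [resolventEnergy_eq_ofReal_integral (notMem_algebraMap_image_of_im_ne_zero hi.ne' _)]
    exact ENNReal.ofReal_le_one.2 (integral_inv_normSq_sub_le_one hi hφi)
  have hζ_energy : resolventEnergy ν ζ ≤ 1 :=
    ((lowerSemicontinuous_resolventEnergy ν).isClosed_preimage 1).mem_of_tendsto hζ h_energy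
  have hζ_cont : ContinuousAt (inverseSubordination ν) ζ :=
    continuousAt_inverseSubordination (notMem_image_support_of_resolventEnergy_le hν hζ_energy)
  exact ⟨ge_of_tendsto ((Complex.continuous_im.tendsto ζ).comp hζ) (hZ.mono fun _ => le_of_lt),
    hζ_energy, tendsto_nhds_unique (hζ_cont.tendsto.comp hζ) hE⟩

theorem inverseSubordination_add_self {z w : ℂ} (h : w = ∫ v : ℝ, ((v : ℂ) - z - w)⁻¹ ∂ν) :
    inverseSubordination ν (z + w) = z := by
  rw [inverseSubordination, resolventTransform_eq_integral_inv]
  simp only [← sub_sub]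
  rw [← h, add_sub_cancel_right]

theorem norm_le_one_of_eq_integral_inv [IsProbabilityMeasure ν] {z w : ℂ} (hz : 0 < z.im)
    (hw : 0 ≤ w.im) (h : w = ∫ v : ℝ, ((v : ℂ) - z - w)⁻¹ ∂ν) : ‖w‖ ≤ 1 := by
  have him : 0 < (z + w).im := by rw [Complex.add_im]; positivity
  have hφ : inverseSubordination ν (z + w) = z := inverseSubordination_add_self h
  have h_eq : w = resolventTransform ν (z + w) := by
    rw [inverseSubordination] at hφ
    linear_combination hφ
  rw [h_eq]
  exact norm_resolventTransform_le_one (notMem_algebraMap_image_of_im_ne_zero him.ne' _)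
    (integral_inv_normSq_sub_le_one him (by rw [hφ]; exact hz.le))

theorem exists_isBoundaryPoint_of_mapClusterPt [IsProbabilityMeasure ν] {m : ℂ → ℂ}
    (hν : ∀ x ∈ ν.support, 1 < resolventEnergy ν x) (him : ∀ z : ℂ, 0 < z.im → 0 ≤ (m z).im)
    (heq : ∀ z : ℂ, 0 < z.im → m z = ∫ v : ℝ, ((v : ℂ) - z - m z)⁻¹ ∂ν) {E y : ℝ}
    (hy : MapClusterPt y (𝓝[>] 0) fun η : ℝ => (m (E + η * Complex.I)).im) :
    ∃ ζ, IsBoundaryPoint ν E ζ ∧ ζ.im = y := by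
  set z : ℝ → ℂ := fun η => E + η * Complex.I with hz_def
  obtain ⟨U, hU, hUy⟩ := mapClusterPt_iff_ultrafilter.1 hy
  have hU_pos : ∀ᶠ η in U, 0 < (z η).im := by
    filter_upwards [hU self_mem_nhdsWithin] with η (hη : 0 < η)
    simpa [hz_def] using hη
  have hz_tendsto : Tendsto z U (𝓝 E) := by
    have h_cont : Continuous z := by fun_prop
    simpa [hz_def] using (h_cont.tendsto 0).mono_left (hU.trans nhdsWithin_le_nhds)
  obtain ⟨μ, -, hμ⟩ : ∃ μ ∈ Metric.closedBall (0 : ℂ) 1, Tendsto (fun η => m (z η)) U (𝓝 μ) :=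
    (isCompact_closedBall (0 : ℂ) 1).ultrafilter_le_nhds' (U.map fun η => m (z η)) <|
      Ultrafilter.mem_map.2 <| hU_pos.mono fun η hη =>
        mem_closedBall_zero_iff.2 (norm_le_one_of_eq_integral_inv hη (him _ hη) (heq _ hη))
  have hφ : ∀ᶠ η in U, z η = inverseSubordination ν (z η + m (z η)) :=
    hU_pos.mono fun η hη => (inverseSubordination_add_self (heq _ hη)).symm
  refine ⟨E + μ, isBoundaryPoint_of_tendsto hν (Z := fun η => z η + m (z η)) ?_ ?_
    (hz_tendsto.add hμ) (hz_tendsto.congr' hφ), ?_⟩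
  · filter_upwards [hU_pos] with η hη using add_pos_of_pos_of_nonneg hη (him _ hη)
  · filter_upwards [hU_pos, hφ] with η hη hφη using hφη ▸ hη.le
  · simpa using tendsto_nhds_unique ((Complex.continuous_im.tendsto μ).comp hμ) hUy

end BoundaryPoints

/-- `e` is a critical point of the inverse subordination map lying outside the support of `ν`, with
critical value `L`. For `s = 1` it lies below the support and `L` is the lower edge; for `s = -1`
it lies above the support and `L` is the upper edge. The numbers `δ` and `R` bound the distances
from `e` to the support. -/
structure IsEdge (ν : Measure ℝ) (s δ R e L : ℝ) : Prop where
  sq_sign : s ^ 2 = 1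
  pos : 0 < δ
  dist_mem : ∀ᵐ v ∂ν, s * (v - e) ∈ Set.Icc δ R
  critical : ∫ v, ((v - e) ^ 2)⁻¹ ∂ν = 1
  map_eq : e - ∫ v, (v - e)⁻¹ ∂ν = L

namespace IsEdge

variable {ν : Measure ℝ} {s δ R e L : ℝ} {ζ : ℂ}

theorem notMem_image_support (h : IsEdge ν s δ R e L) :
    (e : ℂ) ∉ algebraMap ℝ ℂ '' ν.support := by
  have h_sub : ν.support ⊆ {v | s * (v - e) ∈ Set.Icc δ R} :=
    Measure.support_subset_of_isClosed (isClosed_Icc.preimage (by fun_prop)) h.dist_mem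
  rintro ⟨x, hx, hxe⟩
  have hδ : δ ≤ s * (x - e) := (h_sub hx).1
  rw [show x = e from Complex.ofReal_injective hxe, sub_self, mul_zero] at hδ
  exact h.pos.not_ge hδ

theorem radius_pos (h : IsEdge ν s δ R e L) : 0 < R := by
  have : NeZero ν := ⟨fun h₀ => by simpa [h₀] using h.critical⟩
  obtain ⟨v, hv⟩ := h.dist_mem.exists
  exact h.pos.trans_le (hv.1.trans hv.2)

theorem inverseSubordination_sub [IsFiniteMeasure ν] (h : IsEdge ν s δ R e L)
    (hζ : ζ ∉ algebraMap ℝ ℂ '' ν.support) :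
    inverseSubordination ν ζ - L =
      -((ζ - e) ^ 2 * ∫ v : ℝ, (((v : ℂ) - e) ^ 2)⁻¹ * ((v : ℂ) - ζ)⁻¹ ∂ν) := by
  have h_critical : ∫ v : ℝ, (((v : ℂ) - e) ^ 2)⁻¹ ∂ν = 1 := by
    rw [← Complex.ofReal_one, ← h.critical, ← integral_complex_ofReal]
    simp only [Complex.ofReal_inv, Complex.ofReal_pow, Complex.ofReal_sub]
  have h_edge : (e : ℂ) - resolventTransform ν (e : ℂ) = L := by
    rw [← h.map_eq, ← inverseSubordination_ofReal]
    rfl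
  rw [inverseSubordination, resolventTransform_taylor h.notMem_image_support hζ, h_critical]
  linear_combination h_edge

theorem mul_sub_nonpos_of_ofReal [IsFiniteMeasure ν] (h : IsEdge ν s δ R e L) {ξ E : ℝ}
    (hξ : (ξ : ℂ) ∉ algebraMap ℝ ℂ '' ν.support) (hE : inverseSubordination ν ξ = E)
    (h_side : ∀ᵐ v ∂ν, 0 ≤ s * (v - ξ)) : s * (E - L) ≤ 0 := by
  have h_real : E - L = -((ξ - e) ^ 2 * ∫ v, ((v - e) ^ 2)⁻¹ * (v - ξ)⁻¹ ∂ν) := by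
    have h_complex := h.inverseSubordination_sub hξ
    rw [hE] at h_complex
    apply Complex.ofReal_injective
    push_cast [← integral_complex_ofReal]
    exact h_complex
  have h_nonneg : 0 ≤ ∫ v, s * (((v - e) ^ 2)⁻¹ * (v - ξ)⁻¹) ∂ν := by
    refine integral_nonneg_of_ae ?_
    filter_upwards [h_side] with v hv
    have h_sign : s * (v - ξ)⁻¹ = s * (v - ξ) * ((v - ξ)⁻¹) ^ 2 := by
      rcases eq_or_ne (v - ξ) 0 with h₀ | h₀
      · simp [h₀]
      · field_simp
    rw [Pi.zero_apply, mul_left_comm, h_sign]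
    positivity
  rw [integral_const_mul] at h_nonneg
  rw [h_real]
  linarith [mul_nonneg (sq_nonneg (ξ - e)) h_nonneg]

end IsEdge

/-- The moment of order `k` of the reciprocal distances to `e` (`s` being the side of the support,
as in `IsEdge`), against the weight `|v - ζ|⁻²`. -/
noncomputable def edgeMoment (ν : Measure ℝ) (s e : ℝ) (ζ : ℂ) (k : ℕ) : ℝ :=
  ∫ v : ℝ, (s * (v - e))⁻¹ ^ k * (Complex.normSq ((v : ℂ) - ζ))⁻¹ ∂ν

theorem edgeMoment_zero_eq_one {ν : Measure ℝ} [IsFiniteMeasure ν] {s e E : ℝ} {ζ : ℂ}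
    (hζ : 0 < ζ.im) (hE : inverseSubordination ν ζ = E) :
    edgeMoment ν s e ζ 0 = 1 := by
  have h_im : ζ.im * (1 - ∫ v : ℝ, (Complex.normSq ((v : ℂ) - ζ))⁻¹ ∂ν) = 0 := by
    rw [← inverseSubordination_im (notMem_algebraMap_image_of_im_ne_zero hζ.ne' _), hE,
      Complex.ofReal_im]
  have h_one := (mul_eq_zero.1 h_im).resolve_left hζ.ne'
  simp only [edgeMoment, pow_zero, one_mul]
  linarith

namespace IsEdge

variable {ν : Measure ℝ} {s δ R e L E : ℝ} {ζ : ℂ}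

theorem inv_dist_mem (h : IsEdge ν s δ R e L) :
    ∀ᵐ v ∂ν, (s * (v - e))⁻¹ ∈ Set.Icc R⁻¹ δ⁻¹ := by
  filter_upwards [h.dist_mem] with v hv
  exact ⟨inv_anti₀ (h.pos.trans_le hv.1) hv.2, inv_anti₀ h.pos hv.1⟩

theorem integrable_edgeMoment [IsFiniteMeasure ν] (h : IsEdge ν s δ R e L)
    (hζ : ζ ∉ algebraMap ℝ ℂ '' ν.support) (k : ℕ) :
    Integrable (fun v : ℝ => (s * (v - e))⁻¹ ^ k * (Complex.normSq ((v : ℂ) - ζ))⁻¹) ν := by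
  refine (integrable_inv_normSq_sub hζ).bdd_mul (c := δ⁻¹ ^ k)
    (Measurable.aestronglyMeasurable (by fun_prop)) ?_
  filter_upwards [h.dist_mem, h.inv_dist_mem] with v hv hv_inv
  have h_nonneg : 0 ≤ (s * (v - e))⁻¹ := inv_nonneg.2 (h.pos.le.trans hv.1)
  rw [norm_pow, Real.norm_of_nonneg h_nonneg]
  exact pow_le_pow_left₀ h_nonneg hv_inv.2 k

theorem edgeMoment_succ_mem [IsFiniteMeasure ν] (h : IsEdge ν s δ R e L)
    (hζ : ζ ∉ algebraMap ℝ ℂ '' ν.support) (k : ℕ) :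
    edgeMoment ν s e ζ (k + 1) ∈
      Set.Icc (R⁻¹ * edgeMoment ν s e ζ k) (δ⁻¹ * edgeMoment ν s e ζ k) := by
  have h_succ := h.integrable_edgeMoment hζ (k + 1)
  simp only [pow_succ', mul_assoc] at h_succ
  simp only [edgeMoment, pow_succ', mul_assoc]
  refine integral_mul_mem_Icc (h.integrable_edgeMoment hζ k) h_succ ?_ h.inv_dist_mem
  filter_upwards [h.dist_mem] with v hv
  have h_nonneg : 0 ≤ (s * (v - e))⁻¹ := inv_nonneg.2 (h.pos.le.trans hv.1)
  exact mul_nonneg (pow_nonneg h_nonneg k) (inv_nonneg.2 (Complex.normSq_nonneg _))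

theorem integral_eq_edgeMoment [IsFiniteMeasure ν] (h : IsEdge ν s δ R e L)
    (hζ : ζ ∉ algebraMap ℝ ℂ '' ν.support) :
    ∫ v : ℝ, (((v : ℂ) - e) ^ 2)⁻¹ * ((v : ℂ) - ζ)⁻¹ ∂ν =
      s * edgeMoment ν s e ζ 1 - starRingEnd ℂ (ζ - e) * edgeMoment ν s e ζ 2 := by
  have h_int (k : ℕ) : Integrable (fun v : ℝ =>
      (((s * (v - e))⁻¹ ^ k * (Complex.normSq ((v : ℂ) - ζ))⁻¹ : ℝ) : ℂ)) ν :=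
    (h.integrable_edgeMoment hζ k).ofReal
  rw [edgeMoment, edgeMoment, ← integral_complex_ofReal, ← integral_complex_ofReal,
    ← integral_const_mul, ← integral_const_mul,
    ← integral_sub ((h_int 1).const_mul _) ((h_int 2).const_mul _)]
  refine integral_congr_ae ?_
  filter_upwards [h.dist_mem] with v hv
  have hs : (s : ℂ) ^ 2 = 1 := mod_cast h.sq_sign
  have hs₀ : (s : ℂ) ≠ 0 := fun h₀ => by simp [h₀] at hs
  have hve : (v : ℂ) - e ≠ 0 := fun h₀ => by
    have : v - e = 0 := mod_cast h₀
    simp only [this, mul_zero] at hv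
    exact h.pos.not_ge hv.1
  have h_conj : starRingEnd ℂ ((v : ℂ) - ζ) = v - e - starRingEnd ℂ (ζ - e) := by
    simp only [map_sub, Complex.conj_ofReal]
    ring
  rw [Complex.inv_def ((v : ℂ) - ζ), h_conj]
  push_cast
  field_simp
  linear_combination -(starRingEnd ℂ (ζ - e) * (Complex.normSq (v - ζ) : ℂ)⁻¹) * hs

theorem mul_edgeMoment_eq [IsFiniteMeasure ν] (h : IsEdge ν s δ R e L) (hζ : 0 < ζ.im)
    (hE : inverseSubordination ν ζ = E) :
    2 * (s * (ζ.re - e)) * edgeMoment ν s e ζ 1 =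
        Complex.normSq (ζ - e) * edgeMoment ν s e ζ 2 ∧
      s * (E - L) = Complex.normSq (ζ - e) * edgeMoment ν s e ζ 1 := by
  have h_off := notMem_algebraMap_image_of_im_ne_zero hζ.ne' ν.support
  have h_eq := h.inverseSubordination_sub h_off
  rw [hE, h.integral_eq_edgeMoment h_off] at h_eq
  have h_split := mul_eq_normSq_mul_of_ofReal_eq_neg_sq_mul (d := ζ - e) (by simpa using hζ.ne')
    (mod_cast h_eq : ((E - L : ℝ) : ℂ) =
      -((ζ - e) ^ 2 * ((s * edgeMoment ν s e ζ 1 : ℝ) -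
        starRingEnd ℂ (ζ - e) * edgeMoment ν s e ζ 2)))
  rw [Complex.sub_re, Complex.ofReal_re] at h_split
  constructor
  · linear_combination h_split.1
  · linear_combination s * h_split.2 +
      Complex.normSq (ζ - e) * edgeMoment ν s e ζ 1 * h.sq_sign

theorem edgeMoment_one_mem [IsFiniteMeasure ν] (h : IsEdge ν s δ R e L) (hζ : 0 < ζ.im)
    (hE : inverseSubordination ν ζ = E) : edgeMoment ν s e ζ 1 ∈ Set.Icc R⁻¹ δ⁻¹ := by
  simpa [edgeMoment_zero_eq_one hζ hE] using
    h.edgeMoment_succ_mem (notMem_algebraMap_image_of_im_ne_zero hζ.ne' _) 0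

theorem mul_sub_mem [IsFiniteMeasure ν] (h : IsEdge ν s δ R e L) (hζ : 0 < ζ.im)
    (hE : inverseSubordination ν ζ = E) :
    s * (E - L) ∈ Set.Icc (Complex.normSq (ζ - e) * R⁻¹) (Complex.normSq (ζ - e) * δ⁻¹) := by
  have h_mem := h.edgeMoment_one_mem hζ hE
  have h_nonneg := Complex.normSq_nonneg (ζ - e)
  rw [(h.mul_edgeMoment_eq hζ hE).2]
  exact ⟨mul_le_mul_of_nonneg_left h_mem.1 h_nonneg, mul_le_mul_of_nonneg_left h_mem.2 h_nonneg⟩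

theorem mul_sub_pos [IsFiniteMeasure ν] (h : IsEdge ν s δ R e L) (hζ : 0 < ζ.im)
    (hE : inverseSubordination ν ζ = E) : 0 < s * (E - L) := by
  have h_ne : ζ - e ≠ 0 := fun h₀ => hζ.ne' (by simpa using congrArg Complex.im h₀)
  exact (mul_pos (Complex.normSq_pos.2 h_ne) (inv_pos.2 h.radius_pos)).trans_le
    (h.mul_sub_mem hζ hE).1

theorem abs_sub_eq [IsFiniteMeasure ν] (h : IsEdge ν s δ R e L) (hζ : 0 < ζ.im)
    (hE : inverseSubordination ν ζ = E) : |E - L| = s * (E - L) := by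
  have hs : |s| = 1 :=
    (pow_eq_one_iff_of_nonneg (abs_nonneg s) two_ne_zero).1 (by rw [sq_abs, h.sq_sign])
  rw [← abs_of_pos (h.mul_sub_pos hζ hE), abs_mul, hs, one_mul]

theorem sq_im_le [IsFiniteMeasure ν] (h : IsEdge ν s δ R e L) (hζ : 0 < ζ.im)
    (hE : inverseSubordination ν ζ = E) : ζ.im ^ 2 ≤ R * |E - L| :=
  calc ζ.im ^ 2 ≤ Complex.normSq (ζ - e) := by
        simpa [sq] using Complex.im_sq_le_normSq (ζ - e)
    _ ≤ R * (s * (E - L)) := (mul_inv_le_iff₀' h.radius_pos).1 (h.mul_sub_mem hζ hE).1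
    _ = R * |E - L| := by rw [h.abs_sub_eq hζ hE]

theorem normSq_sub_le_two_mul_sq_im [IsFiniteMeasure ν] (h : IsEdge ν s δ R e L)
    (hζ : 0 < ζ.im) (hE : inverseSubordination ν ζ = E) (h_re : s * (ζ.re - e) ≤ δ) :
    Complex.normSq (ζ - e) ≤ 2 * ζ.im ^ 2 := by
  have hM₁ : 0 < edgeMoment ν s e ζ 1 :=
    (inv_pos.2 h.radius_pos).trans_le (h.edgeMoment_one_mem hζ hE).1
  have hM₂ := h.edgeMoment_succ_mem (notMem_algebraMap_image_of_im_ne_zero hζ.ne' _) 1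
  have h_eq := (h.mul_edgeMoment_eq hζ hE).1
  have h_normSq := Complex.normSq_nonneg (ζ - e)
  have h_re_nonneg : 0 ≤ s * (ζ.re - e) := by
    have hM₂_nonneg := (mul_nonneg (inv_nonneg.2 h.radius_pos.le) hM₁.le).trans hM₂.1
    have h_mul := mul_nonneg h_normSq hM₂_nonneg
    rw [← h_eq] at h_mul
    linarith [nonneg_of_mul_nonneg_left h_mul hM₁]
  have h_re_le : 2 * (s * (ζ.re - e)) * δ ≤ Complex.normSq (ζ - e) := by
    rw [← le_mul_inv_iff₀ h.pos]
    refine le_of_mul_le_mul_right ?_ hM₁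
    rw [h_eq, mul_assoc]
    exact mul_le_mul_of_nonneg_left hM₂.2 h_normSq
  have h_sq : (s * (ζ.re - e)) ^ 2 ≤ s * (ζ.re - e) * δ := by
    rw [sq]
    exact mul_le_mul_of_nonneg_left h_re h_re_nonneg
  have h_pythagoras : Complex.normSq (ζ - e) = (s * (ζ.re - e)) ^ 2 + ζ.im ^ 2 := by
    rw [mul_pow, h.sq_sign, Complex.normSq_apply]
    simp [sq]
  linarith

theorem abs_sub_le [IsFiniteMeasure ν] (h : IsEdge ν s δ R e L) (hζ : 0 < ζ.im)
    (hE : inverseSubordination ν ζ = E) (h_re : s * (ζ.re - e) ≤ δ) :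
    |E - L| ≤ 2 / δ * ζ.im ^ 2 :=
  calc |E - L| = s * (E - L) := h.abs_sub_eq hζ hE
    _ ≤ Complex.normSq (ζ - e) * δ⁻¹ := (h.mul_sub_mem hζ hE).2
    _ ≤ 2 * ζ.im ^ 2 * δ⁻¹ := mul_le_mul_of_nonneg_right
      (h.normSq_sub_le_two_mul_sq_im hζ hE h_re) (inv_nonneg.2 h.pos.le)
    _ = 2 / δ * ζ.im ^ 2 := by ring

end IsEdge

section TwoEdges

variable {ν : Measure ℝ} {a b e₁ e₂ R₁ R₂ L₁ L₂ E : ℝ} {ζ : ℂ}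

theorem ae_mem_Icc_of_isEdge (lower : IsEdge ν 1 (a - e₁) R₁ e₁ L₁)
    (upper : IsEdge ν (-1) (e₂ - b) R₂ e₂ L₂) : ∀ᵐ v ∂ν, v ∈ Set.Icc a b := by
  filter_upwards [lower.dist_mem, upper.dist_mem] with v hv₁ hv₂
  exact ⟨by linarith [hv₁.1], by linarith [hv₂.1]⟩

variable [IsFiniteMeasure ν]

theorem mem_Ioo_of_im_pos {δ₁ δ₂ : ℝ} (lower : IsEdge ν 1 δ₁ R₁ e₁ L₁)
    (upper : IsEdge ν (-1) δ₂ R₂ e₂ L₂) (hζ : 0 < ζ.im) (hE : inverseSubordination ν ζ = E) :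
    E ∈ Set.Ioo L₁ L₂ :=
  ⟨by linarith [lower.mul_sub_pos hζ hE], by linarith [upper.mul_sub_pos hζ hE]⟩

theorem IsBoundaryPoint.im_pos (h : IsBoundaryPoint ν E ζ)
    (hν : ∀ x ∈ Set.Icc a b, 1 < resolventEnergy ν x) (lower : IsEdge ν 1 (a - e₁) R₁ e₁ L₁)
    (upper : IsEdge ν (-1) (e₂ - b) R₂ e₂ L₂) (hE : E ∈ Set.Ioo L₁ L₂) : 0 < ζ.im := by
  refine h.im_nonneg.lt_of_ne' fun h_im => ?_
  obtain ⟨ξ, rfl⟩ : ∃ ξ : ℝ, (ξ : ℂ) = ζ := ⟨ζ.re, Complex.ext rfl h_im.symm⟩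
  have h_ae := ae_mem_Icc_of_isEdge lower upper
  have h_off : (ξ : ℂ) ∉ algebraMap ℝ ℂ '' ν.support :=
    notMem_image_support_of_resolventEnergy_le
      (fun x hx => hν x (Measure.support_subset_of_isClosed isClosed_Icc h_ae hx)) h.energy_le
  have h_ξ : ξ ∉ Set.Icc a b := fun hξ => (hν ξ hξ).not_ge h.energy_le
  rcases lt_or_ge ξ a with h_lt | h_ge
  · have := lower.mul_sub_nonpos_of_ofReal h_off h.map_eq <| by
      filter_upwards [h_ae] with v hv
      linarith [hv.1]
    linarith [hE.1]
  · have h_gt : b < ξ := not_le.1 fun h_le => h_ξ ⟨h_ge, h_le⟩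
    have := upper.mul_sub_nonpos_of_ofReal h_off h.map_eq <| by
      filter_upwards [h_ae] with v hv
      linarith [hv.2]
    linarith [hE.2]

theorem sq_im_le_max_mul_min {δ₁ δ₂ : ℝ} (lower : IsEdge ν 1 δ₁ R₁ e₁ L₁)
    (upper : IsEdge ν (-1) δ₂ R₂ e₂ L₂) (hζ : 0 < ζ.im) (hE : inverseSubordination ν ζ = E) :
    ζ.im ^ 2 ≤ max R₁ R₂ * min |E - L₁| |E - L₂| := by
  rcases min_choice |E - L₁| |E - L₂| with h | h <;> rw [h]
  · exact (lower.sq_im_le hζ hE).trans (by gcongr; exact le_max_left R₁ R₂)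
  · exact (upper.sq_im_le hζ hE).trans (by gcongr; exact le_max_right R₁ R₂)

theorem exists_min_abs_sub_le_mul_sq_im (hν : ∀ x ∈ Set.Icc a b, 1 < resolventEnergy ν x)
    (lower : IsEdge ν 1 (a - e₁) R₁ e₁ L₁) (upper : IsEdge ν (-1) (e₂ - b) R₂ e₂ L₂) :
    ∃ B, ∀ (E : ℝ) (ζ : ℂ), IsBoundaryPoint ν E ζ → 0 < ζ.im →
      min |E - L₁| |E - L₂| ≤ B * ζ.im ^ 2 := by
  obtain ⟨y₀, hy₀, h_gap⟩ := exists_pos_le_abs_im_of_resolventEnergy_le isCompact_Icc hν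
  refine ⟨max (max (2 / (a - e₁)) (2 / (e₂ - b))) ((L₂ - L₁) / y₀ ^ 2), fun E ζ h hζ => ?_⟩
  rw [max_mul_of_nonneg _ _ (sq_nonneg _), max_mul_of_nonneg _ _ (sq_nonneg _)]
  by_cases h_re : ζ.re ∈ Set.Icc a b
  · have hE := mem_Ioo_of_im_pos lower upper hζ h.map_eq
    have hy : y₀ ≤ ζ.im := abs_of_pos hζ ▸ h_gap ζ h_re h.energy_le
    refine le_max_of_le_right ?_
    calc min |E - L₁| |E - L₂| ≤ |E - L₁| := min_le_left _ _
      _ = E - L₁ := abs_of_pos (sub_pos.2 hE.1)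
      _ ≤ L₂ - L₁ := sub_le_sub_right hE.2.le _
      _ = (L₂ - L₁) / y₀ ^ 2 * y₀ ^ 2 := by field_simp
      _ ≤ (L₂ - L₁) / y₀ ^ 2 * ζ.im ^ 2 := by
        have : 0 ≤ L₂ - L₁ := by linarith [hE.1, hE.2]
        gcongr
  · refine le_max_of_le_left ?_
    rcases lt_or_ge ζ.re a with h_lt | h_ge
    · exact min_le_of_left_le (le_max_of_le_left (lower.abs_sub_le hζ h.map_eq (by linarith)))
    · have h_gt : b < ζ.re := not_le.1 fun h_le => h_re ⟨h_ge, h_le⟩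
      exact min_le_of_right_le (le_max_of_le_right (upper.abs_sub_le hζ h.map_eq (by linarith)))

theorem exists_sqrt_bounds (hν : ∀ x ∈ Set.Icc a b, 1 < resolventEnergy ν x)
    (lower : IsEdge ν 1 (a - e₁) R₁ e₁ L₁) (upper : IsEdge ν (-1) (e₂ - b) R₂ e₂ L₂) :
    ∃ C > 1, ∀ (E : ℝ) (ζ : ℂ), IsBoundaryPoint ν E ζ → E ∈ Set.Ioo L₁ L₂ →
      C⁻¹ * √(min |E - L₁| |E - L₂|) ≤ ζ.im ∧ ζ.im ≤ C * √(min |E - L₁| |E - L₂|) := by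
  obtain ⟨B, hB⟩ := exists_min_abs_sub_le_mul_sq_im hν lower upper
  have hA_nonneg := Real.sqrt_nonneg (max R₁ R₂)
  have hB_nonneg := Real.sqrt_nonneg B
  refine ⟨2 + √(max R₁ R₂) + √B, by linarith, fun E ζ h hE => ?_⟩
  have hζ := h.im_pos hν lower upper hE
  exact inv_mul_sqrt_le_and_le_mul_sqrt (by linarith) (by linarith) (by linarith)
    (le_min (abs_nonneg _) (abs_nonneg _)) hζ.le (sq_im_le_max_mul_min lower upper hζ h.map_eq)
    (hB E ζ h hζ)

end TwoEdges

theorem eventually_im_mem_Icc {ν : Measure ℝ} [IsProbabilityMeasure ν] {m : ℂ → ℂ}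
    (him : ∀ z : ℂ, 0 < z.im → 0 ≤ (m z).im)
    (heq : ∀ z : ℂ, 0 < z.im → m z = ∫ v : ℝ, ((v : ℂ) - z - m z)⁻¹ ∂ν) (E : ℝ) :
    ∀ᶠ η : ℝ in 𝓝[>] 0, (m (E + η * Complex.I)).im ∈ Set.Icc 0 1 := by
  filter_upwards [self_mem_nhdsWithin] with η (hη : 0 < η)
  have hz : 0 < ((E : ℂ) + η * Complex.I).im := by simpa using hη
  exact ⟨him _ hz, (le_abs_self _).trans ((Complex.abs_im_le_norm _).trans
    (norm_le_one_of_eq_integral_inv hz (him _ hz) (heq _ hz)))⟩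

theorem stmt_7_general (ν : Measure ℝ) [IsProbabilityMeasure ν]
    (a b : ℝ)
    (hsupp : ν (Set.Icc a b)ᶜ = 0)
    (hedge : ∀ x ∈ Set.Icc a b, 1 < ∫⁻ v, (ENNReal.ofReal ((v - x) ^ 2))⁻¹ ∂ν)
    (m : ℂ → ℂ)
    (him : ∀ z : ℂ, 0 < z.im → 0 ≤ (m z).im)
    (heq : ∀ z : ℂ, 0 < z.im → m z = ∫ v : ℝ, ((v : ℂ) - z - m z)⁻¹ ∂ν)
    (ζm ζp : ℝ)
    (hζm_out : ζm < a) (hζp_out : b < ζp)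
    (hζm : ∫ v, ((v - ζm) ^ 2)⁻¹ ∂ν = 1)
    (hζp : ∫ v, ((v - ζp) ^ 2)⁻¹ ∂ν = 1)
    (Lm Lp : ℝ)
    (hLm : Lm = ζm - ∫ v, (v - ζm)⁻¹ ∂ν)
    (hLp : Lp = ζp - ∫ v, (v - ζp)⁻¹ ∂ν) :
    ∃ C : ℝ, 1 < C ∧
      (∀ E : ℝ, E ∈ Set.Ioo Lm Lp →
        C⁻¹ * Real.sqrt (min |E - Lm| |E - Lp|)
            ≤ liminf (fun η : ℝ => (m (E + η * Complex.I)).im) (nhdsWithin 0 (Set.Ioi 0)) ∧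
        liminf (fun η : ℝ => (m (E + η * Complex.I)).im) (nhdsWithin 0 (Set.Ioi 0))
            ≤ limsup (fun η : ℝ => (m (E + η * Complex.I)).im) (nhdsWithin 0 (Set.Ioi 0)) ∧
        limsup (fun η : ℝ => (m (E + η * Complex.I)).im) (nhdsWithin 0 (Set.Ioi 0))
            ≤ C * Real.sqrt (min |E - Lm| |E - Lp|)) ∧
      (∀ E : ℝ, E ∉ Set.Icc Lm Lp →
        Tendsto (fun η : ℝ => (m (E + η * Complex.I)).im)
          (nhdsWithin 0 (Set.Ioi 0)) (nhds 0)) := by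
  have h_ae : ∀ᵐ v ∂ν, v ∈ Set.Icc a b := hsupp
  have lower : IsEdge ν 1 (a - ζm) (b - ζm) ζm Lm :=
    ⟨by norm_num, sub_pos.2 hζm_out, h_ae.mono fun v hv => by simpa using hv, hζm, hLm.symm⟩
  have upper : IsEdge ν (-1) (ζp - b) (ζp - a) ζp Lp :=
    ⟨by norm_num, sub_pos.2 hζp_out,
      h_ae.mono fun v hv => ⟨by linarith [hv.2], by linarith [hv.1]⟩, hζp, hLp.symm⟩
  have h_energy : ∀ x ∈ Set.Icc a b, 1 < resolventEnergy ν x := by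
    simpa only [resolventEnergy_ofReal] using hedge
  have h_cluster {E y : ℝ} :
      MapClusterPt y (𝓝[>] 0) (fun η : ℝ => (m (E + η * Complex.I)).im) →
        ∃ ζ, IsBoundaryPoint ν E ζ ∧ ζ.im = y :=
    exists_isBoundaryPoint_of_mapClusterPt (fun x hx => h_energy x
      (Measure.support_subset_of_isClosed isClosed_Icc h_ae hx)) him heq
  obtain ⟨C, hC, h_bounds⟩ := exists_sqrt_bounds h_energy lower upper
  refine ⟨C, hC, fun E hE => ?_, fun E hE => ?_⟩
  · obtain ⟨h_le, h_inf, h_sup⟩ := liminf_le_limsup_and_mem_of_mapClusterPt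
      (S := Set.Icc (C⁻¹ * √(min |E - Lm| |E - Lp|)) (C * √(min |E - Lm| |E - Lp|)))
      (eventually_im_mem_Icc him heq E) fun y hy => by
        obtain ⟨ζ, hζ, rfl⟩ := h_cluster hy
        exact h_bounds E ζ hζ hE
    exact ⟨h_inf.1, h_le, h_sup.2⟩
  · refine isCompact_Icc.tendsto_nhds_of_unique_mapClusterPt (eventually_im_mem_Icc him heq E)
      fun y _ hy => ?_
    obtain ⟨ζ, hζ, rfl⟩ := h_cluster hy
    by_contra h_ne
    exact hE (Set.Ioo_subset_Icc_self
      (mem_Ioo_of_im_pos lower upper (hζ.im_nonneg.lt_of_ne' h_ne) hζ.map_eq))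

/-- Under the standing assumptions there is `C > 1` such that for every
`E ∈ (L−, L+)`, `C⁻¹ √κ_E ≤ liminf_{η↓0} Im m(E+iη) ≤ limsup_{η↓0} Im m(E+iη) ≤ C √κ_E`,
and for every `E ∉ [L−, L+]`, `lim_{η↓0} Im m(E+iη) = 0` (`κ_E := min(|E−L−|,|E−L+|)`).
In particular, the deformed semicircle law is supported on `[L−,L+]` with strictly positive
density inside. -/
theorem stmt_7 (ν : Measure ℝ) [IsProbabilityMeasure ν]
    -- `[a,b]` is the smallest closed interval containing `supp ν`
    (a b : ℝ) (hab : a ≤ b)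
    (hsupp : ν (Set.Icc a b)ᶜ = 0)
    (hmin : ∀ a' b' : ℝ, ν (Set.Icc a' b')ᶜ = 0 → Set.Icc a b ⊆ Set.Icc a' b')
    -- `ν` is centered
    (hcent : ∫ v, v ∂ν = 0)
    -- edge assumption: `∫ dν(v)/(v − x)² ≥ 1 + ϖ` on `[a,b]` (value possibly `+∞`)
    (ϖ : ℝ) (hϖ : 0 < ϖ)
    (hedge : ∀ x ∈ Set.Icc a b,
      ENNReal.ofReal (1 + ϖ) ≤ ∫⁻ v, (ENNReal.ofReal ((v - x) ^ 2))⁻¹ ∂ν)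
    -- `m` is the Stieltjes transform of the deformed semicircle law
    (m : ℂ → ℂ)
    (hholo : DifferentiableOn ℂ m {z : ℂ | 0 < z.im})
    (him : ∀ z : ℂ, 0 < z.im → 0 ≤ (m z).im)
    (heq : ∀ z : ℂ, 0 < z.im → m z = ∫ v : ℝ, ((v : ℂ) - z - m z)⁻¹ ∂ν)
    (hbdd : ∀ E : ℝ, IsBoundedUnder (· ≤ ·) (nhdsWithin (0:ℝ) (Set.Ioi 0))
      (fun η : ℝ => (m (E + η * Complex.I)).im))
    -- `ζ− < ζ+` are the two real solutions of `∫ dν(v)/(v − ζ)² = 1`, outside `[a,b]`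
    (ζm ζp : ℝ) (hζζ : ζm < ζp)
    (hζm_out : ζm < a) (hζp_out : b < ζp)
    (hζm : ∫ v, ((v - ζm) ^ 2)⁻¹ ∂ν = 1)
    (hζp : ∫ v, ((v - ζp) ^ 2)⁻¹ ∂ν = 1)
    -- `L± := ζ± − ∫ dν(v)/(v − ζ±)` are the edges of the support of `ρ_fc`
    (Lm Lp : ℝ)
    (hLm : Lm = ζm - ∫ v, (v - ζm)⁻¹ ∂ν)
    (hLp : Lp = ζp - ∫ v, (v - ζp)⁻¹ ∂ν) :
    ∃ C : ℝ, 1 < C ∧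
      (∀ E : ℝ, E ∈ Set.Ioo Lm Lp →
        C⁻¹ * Real.sqrt (min |E - Lm| |E - Lp|)
            ≤ liminf (fun η : ℝ => (m (E + η * Complex.I)).im) (nhdsWithin 0 (Set.Ioi 0)) ∧
        liminf (fun η : ℝ => (m (E + η * Complex.I)).im) (nhdsWithin 0 (Set.Ioi 0))
            ≤ limsup (fun η : ℝ => (m (E + η * Complex.I)).im) (nhdsWithin 0 (Set.Ioi 0)) ∧
        limsup (fun η : ℝ => (m (E + η * Complex.I)).im) (nhdsWithin 0 (Set.Ioi 0))
            ≤ C * Real.sqrt (min |E - Lm| |E - Lp|)) ∧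
      (∀ E : ℝ, E ∉ Set.Icc Lm Lp →
        Tendsto (fun η : ℝ => (m (E + η * Complex.I)).im)
          (nhdsWithin 0 (Set.Ioi 0)) (nhds 0)) :=
  stmt_7_general ν a b hsupp
    (fun x hx => (ENNReal.one_lt_ofReal.2 (by linarith)).trans_le (hedge x hx)) m him heq ζm ζp
    hζm_out hζp_out hζm hζp Lm Lp hLm hLp
end

section
/- Under the standing assumptions on ν and on the solution m of the functional equation, there exists a constant C > 1 such that for all z = E + iη ∈ D′: if E ∈ [L−, L+] then C⁻¹ √(κ_E + η) ≤ Im m(z) ≤ C √(κ_E + η), while if E ∉ [L−, L+] then C⁻¹ η/√(κ_E + η) ≤ Im m(z) ≤ C η/√(κ_E + η). -/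
open MeasureTheory Filter

/-!
Put `w = z + m(z)`. The functional equation says that `m(z)` is the resolvent transform of `ν` at
`w` and that `z = F(w)` for `F(w) = w - ∫ dν(v)/(v - w)`, so one has to compare `Im w ≍ Im m(z)`
with `F(w)`. Since `Im F(w) = Im w · (1 - ∫ dν(v)/|v - w|²)` is positive, `∫ dν(v)/|v - w|² < 1`:
`m(z)` is therefore bounded and, by lower semicontinuity of that integral and compactness, the
assumption on `[a, b]` keeps `w` away from `[a, b]`.

Near the right edge, `∫ dν(v)/(v - ζ₊)² = 1` cancels the linear term of `F`, and with `U = w - ζ₊`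
one gets exactly `F(w) - L₊ = q U² + g |U|² U`, where `q, g` are positive integrals depending on
`w` and `q ≍ 1`. Together with `Im F(w) > 0` this gives `|F(w) - L₊| ≍ |U|²`. Moreover
`|U| ≲ Im w` if `Re F(w) ≤ L₊` and `b ≤ Re w`, while `Im F(w) ≍ Im w · |U|` if `Re F(w) ≥ L₊`.
The left edge is the reflection of the right one.
-/

open Asymptotics Complex Set Topology
open scoped ComplexConjugate

section Comparison

variable {α : Type*}

lemma isBigO_min {l : Filter α} {f g₁ g₂ : α → ℝ} (hg₁ : 0 ≤ g₁) (hg₂ : 0 ≤ g₂)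
    (h₁ : f =O[l] g₁) (h₂ : f =O[l] g₂) : f =O[l] fun x => min (g₁ x) (g₂ x) := by
  obtain ⟨c₁, hc₁, h₁⟩ := h₁.exists_nonneg
  obtain ⟨c₂, -, h₂⟩ := h₂.exists_nonneg
  refine .of_bound (max c₁ c₂) ?_
  filter_upwards [h₁.bound, h₂.bound] with x hx₁ hx₂
  rw [Real.norm_of_nonneg (hg₁ x)] at hx₁
  rw [Real.norm_of_nonneg (hg₂ x)] at hx₂
  rw [Real.norm_of_nonneg (le_min (hg₁ x) (hg₂ x)), mul_min_of_nonneg _ _ (le_max_of_le_left hc₁)]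
  refine le_min (hx₁.trans ?_) (hx₂.trans ?_) <;> gcongr
  exacts [hg₁ x, le_max_left _ _, hg₂ x, le_max_right _ _]

lemma isTheta_abs_re_add_abs_im (l : Filter α) (f : α → ℂ) :
    (fun x => |(f x).re| + |(f x).im|) =Θ[l] f := by
  refine ⟨.of_bound 2 (.of_forall fun x => ?_), .of_bound 1 (.of_forall fun x => ?_)⟩
  · rw [Real.norm_of_nonneg (by positivity)]
    linarith [abs_re_le_norm (f x), abs_im_le_norm (f x)]
  · rw [Real.norm_of_nonneg (by positivity), one_mul]
    exact norm_le_abs_re_add_abs_im (f x)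

lemma eventually_forall_le_of_isTheta_principal {s : Set α} {f g : α → ℝ}
    (hf : ∀ x ∈ s, 0 ≤ f x) (hg : ∀ x ∈ s, 0 ≤ g x) (h : f =Θ[𝓟 s] g) :
    ∀ᶠ C in atTop, ∀ x ∈ s, C⁻¹ * g x ≤ f x ∧ f x ≤ C * g x := by
  obtain ⟨C₁, hC₁⟩ := isBigO_principal.1 h.1
  obtain ⟨C₂, hC₂⟩ := isBigO_principal.1 h.2
  filter_upwards [eventually_ge_atTop C₁, eventually_ge_atTop C₂, eventually_gt_atTop 0]
    with C h₁ h₂ hC x hx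
  specialize hC₁ x hx
  specialize hC₂ x hx
  rw [Real.norm_of_nonneg (hf x hx), Real.norm_of_nonneg (hg x hx)] at hC₁ hC₂
  rw [inv_mul_le_iff₀ hC]
  exact ⟨hC₂.trans (by gcongr; exact hf x hx), hC₁.trans (by gcongr; exact hg x hx)⟩

end Comparison

/-- The normal form of `bianeMap` in the displacement `U` from an edge (see
`IsRightEdge.bianeMap_sub_eq_edgeMap`). The real coefficients are bounded and `q` is bounded
below, so `U ^ 2` is the leading term. -/
def edgeMap (q g : ℝ) (U : ℂ) : ℂ := U ^ 2 * q + normSq U * U * g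

section EdgeMap

variable {q g : ℝ} {U : ℂ}

lemma edgeMap_im (q g : ℝ) (U : ℂ) :
    (edgeMap q g U).im = U.im * (2 * U.re * q + normSq U * g) := by
  simp only [edgeMap, pow_two, add_im, mul_im, mul_re, ofReal_re, ofReal_im]
  ring

lemma edgeMap_re (q g : ℝ) (U : ℂ) :
    (edgeMap q g U).re = U.re * (2 * U.re * q + normSq U * g) - q * normSq U := by
  simp only [edgeMap, pow_two, add_re, mul_im, mul_re, ofReal_re, ofReal_im, normSq_apply]
  ring

lemma edgeMap_eq_sq_mul (q g : ℝ) (U : ℂ) : edgeMap q g U = U ^ 2 * (q + conj U * g) := by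
  rw [edgeMap, normSq_eq_conj_mul_self]
  ring

lemma nonneg_of_edgeMap_im_nonneg (hU : 0 < U.im) (him : 0 ≤ (edgeMap q g U).im) :
    0 ≤ 2 * U.re * q + normSq U * g :=
  nonneg_of_mul_nonneg_right (edgeMap_im q g U ▸ him) hU

lemma mul_normSq_le_norm_edgeMap (hg : 0 ≤ g) (hU : 0 < U.im)
    (him : 0 ≤ (edgeMap q g U).im) : q * normSq U ≤ ‖edgeMap q g U‖ := by
  rcases le_total 0 U.re with hre | hre
  · have hq_le : q ≤ ‖(q : ℂ) + conj U * g‖ :=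
      calc q ≤ ((q : ℂ) + conj U * g).re := by
            simpa using mul_nonneg hre hg
        _ ≤ _ := re_le_norm _
    rw [edgeMap_eq_sq_mul, norm_mul, norm_pow, ← normSq_eq_norm_sq, mul_comm]
    gcongr
    exact normSq_nonneg U
  · have hslope := nonneg_of_edgeMap_im_nonneg hU him
    calc q * normSq U ≤ -(edgeMap q g U).re := by
          rw [edgeMap_re]
          linarith [mul_nonpos_of_nonpos_of_nonneg hre hslope]
      _ ≤ ‖edgeMap q g U‖ := (neg_le_abs _).trans (abs_re_le_norm _)

lemma im_mul_norm_le_edgeMap_im (hU : 0 < U.im) (him : 0 ≤ (edgeMap q g U).im)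
    (hre : 0 ≤ (edgeMap q g U).re) : U.im * (q * ‖U‖) ≤ (edgeMap q g U).im := by
  have hslope := nonneg_of_edgeMap_im_nonneg hU him
  have hU_norm : 0 < ‖U‖ := hU.trans_le ((le_abs_self _).trans (abs_im_le_norm U))
  rw [edgeMap_im]
  gcongr
  refine le_of_mul_le_mul_left ?_ hU_norm
  calc ‖U‖ * (q * ‖U‖) = q * normSq U := by rw [normSq_eq_norm_sq]; ring
    _ ≤ U.re * (2 * U.re * q + normSq U * g) := by linarith [edgeMap_re q g U]
    _ ≤ ‖U‖ * (2 * U.re * q + normSq U * g) := by gcongr; exact re_le_norm U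

lemma abs_re_mul_le_of_edgeMap_re_nonpos (hq : 0 ≤ q) (hg : 0 ≤ g) (hU : 0 < U.im)
    (him : 0 ≤ (edgeMap q g U).im) (hre : (edgeMap q g U).re ≤ 0) (hqg : 0 ≤ q + U.re * g) :
    |U.re| * q ≤ U.im * (q + U.im * g) := by
  rcases le_total 0 U.re with hu | hu
  · have hsq : U.re ^ 2 * q ≤ U.im ^ 2 * q := by
      rw [edgeMap_re, normSq_apply] at hre
      have : 0 ≤ U.re * ((U.re * U.re + U.im * U.im) * g) :=
        mul_nonneg hu (mul_nonneg (by positivity) hg)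
      linarith
    have hle : U.re * q ≤ U.im * q := by
      rcases hq.eq_or_lt with rfl | hq_pos
      · simp
      · gcongr
        exact (sq_le_sq₀ hu hU.le).1 (le_of_mul_le_mul_right hsq hq_pos)
    rw [abs_of_nonneg hu]
    linarith [mul_nonneg hU.le (mul_nonneg hU.le hg)]
  · have hslope := nonneg_of_edgeMap_im_nonneg hU him
    rw [normSq_apply] at hslope
    rw [abs_of_nonpos hu]
    linarith [mul_nonpos_of_nonpos_of_nonneg hu hqg, mul_nonneg hU.le hq]

end EdgeMap

section EdgeMapAsymptotics

variable {α : Type*} {l : Filter α} {q g : α → ℝ} {U : α → ℂ}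

lemma isBigO_im (f : α → ℂ) : (fun x => (f x).im) =O[l] f :=
  .of_bound' (.of_forall fun x => abs_im_le_norm (f x))

lemma isBigO_re (f : α → ℂ) : (fun x => (f x).re) =O[l] f :=
  .of_bound' (.of_forall fun x => abs_re_le_norm (f x))

lemma isTheta_edgeMap (hq : q =Θ[l] fun _ => (1 : ℝ)) (hg : g =O[l] fun _ => (1 : ℝ))
    (hU : U =O[l] fun _ => (1 : ℝ)) (hq_nonneg : ∀ᶠ x in l, 0 ≤ q x)
    (hg_nonneg : ∀ᶠ x in l, 0 ≤ g x) (hU_pos : ∀ᶠ x in l, 0 < (U x).im)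
    (him : ∀ᶠ x in l, 0 ≤ (edgeMap (q x) (g x) (U x)).im) :
    (fun x => edgeMap (q x) (g x) (U x)) =Θ[l] fun x => U x ^ 2 := by
  constructor
  · have hconj : (fun x => ‖conj (U x)‖ * ‖g x‖) =O[l] fun _ => (1 : ℝ) := by
      simpa using hU.norm_left.mul hg.norm_left
    have hcoeff : (fun x => ‖(q x : ℂ) + conj (U x) * g x‖) =O[l] fun _ => (1 : ℝ) :=
      ((isBigO_ofReal_left.2 hq.1).add (.of_norm_left (by simpa using hconj))).norm_left
    refine .of_norm_norm ?_
    simpa [edgeMap_eq_sq_mul] using (isBigO_refl (fun x => ‖U x‖ ^ 2) l).mul hcoeff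
  · have hlower : (fun x => q x * ‖U x‖ ^ 2) =O[l] fun x => edgeMap (q x) (g x) (U x) := by
      refine .of_bound' ?_
      filter_upwards [hq_nonneg, hg_nonneg, hU_pos, him] with x hq hg hU him
      rw [Real.norm_of_nonneg (by positivity), ← normSq_eq_norm_sq]
      exact mul_normSq_le_norm_edgeMap hg hU him
    refine .of_norm_left (.trans ?_ hlower)
    simpa using hq.2.mul (isBigO_refl (fun x => ‖U x‖ ^ 2) l)

lemma isBigO_im_of_edgeMap_re_nonpos (hq : q =Θ[l] fun _ => (1 : ℝ))
    (hg : g =O[l] fun _ => (1 : ℝ)) (hU : U =O[l] fun _ => (1 : ℝ))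
    (hq_nonneg : ∀ᶠ x in l, 0 ≤ q x) (hg_nonneg : ∀ᶠ x in l, 0 ≤ g x)
    (hU_pos : ∀ᶠ x in l, 0 < (U x).im)
    (him : ∀ᶠ x in l, 0 ≤ (edgeMap (q x) (g x) (U x)).im)
    (hre : ∀ᶠ x in l, (edgeMap (q x) (g x) (U x)).re ≤ 0)
    (hqg : ∀ᶠ x in l, 0 ≤ q x + (U x).re * g x) : U =O[l] fun x => (U x).im := by
  have hre_mul : (fun x => (U x).re * q x) =O[l] fun x => (U x).im * (q x + (U x).im * g x) := by
    refine .of_bound' ?_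
    filter_upwards [hq_nonneg, hg_nonneg, hU_pos, him, hre, hqg] with x hq hg hU him hre hqg
    rw [norm_mul, Real.norm_of_nonneg hq, Real.norm_eq_abs]
    exact (abs_re_mul_le_of_edgeMap_re_nonpos hq hg hU him hre hqg).trans (le_abs_self _)
  have hcoeff : (fun x => q x + (U x).im * g x) =O[l] fun _ => (1 : ℝ) :=
    hq.1.add (by simpa using ((isBigO_im U).trans hU).mul hg)
  have hre_im : (fun x => (U x).re) =O[l] fun x => (U x).im := by
    have hre_theta := (isTheta_refl (fun x => (U x).re) l).mul hq
    simp only [mul_one] at hre_theta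
    exact hre_theta.2.trans (hre_mul.trans (by simpa using (isBigO_refl _ l).mul hcoeff))
  exact (isTheta_abs_re_add_abs_im l U).2.trans (hre_im.norm_left.add (isBigO_refl _ l).norm_left)

lemma isTheta_edgeMap_im_of_re_nonneg (hq : q =Θ[l] fun _ => (1 : ℝ))
    (hg : g =O[l] fun _ => (1 : ℝ)) (hU : U =O[l] fun _ => (1 : ℝ))
    (hq_nonneg : ∀ᶠ x in l, 0 ≤ q x) (hU_pos : ∀ᶠ x in l, 0 < (U x).im)
    (him : ∀ᶠ x in l, 0 ≤ (edgeMap (q x) (g x) (U x)).im)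
    (hre : ∀ᶠ x in l, 0 ≤ (edgeMap (q x) (g x) (U x)).re) :
    (fun x => (edgeMap (q x) (g x) (U x)).im) =Θ[l] fun x => (U x).im * ‖U x‖ := by
  constructor
  · have hre_mul : (fun x => 2 * (U x).re * q x) =O[l] fun x => ‖U x‖ := by
      simpa using (((isBigO_re U).norm_right).const_mul_left 2).mul hq.1
    have hsq_mul : (fun x => normSq (U x) * g x) =O[l] fun x => ‖U x‖ := by
      simpa [normSq_eq_norm_sq, pow_two] using
        (((isBigO_refl (fun x => ‖U x‖) l).mul hU.norm_left).mul hg)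
    simp only [edgeMap_im]
    exact (isBigO_refl _ l).mul (hre_mul.add hsq_mul)
  · have hlower : (fun x => (U x).im * (q x * ‖U x‖)) =O[l]
        fun x => (edgeMap (q x) (g x) (U x)).im := by
      refine .of_bound' ?_
      filter_upwards [hq_nonneg, hU_pos, him, hre] with x hq hU him hre
      rw [Real.norm_of_nonneg (by positivity)]
      exact (im_mul_norm_le_edgeMap_im hU him hre).trans (le_abs_self _)
    refine .trans ?_ hlower
    simpa using (isBigO_refl (fun x => (U x).im) l).mul (hq.2.mul (isBigO_refl (fun x => ‖U x‖) l))

end EdgeMapAsymptotics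

lemma integral_pos_of_ae_pos {α : Type*} [MeasurableSpace α] {μ : Measure α} [NeZero μ]
    {f : α → ℝ} (hf : Integrable f μ) (hpos : ∀ᵐ x ∂μ, 0 < f x) : 0 < ∫ x, f x ∂μ := by
  have hnonneg : 0 ≤ᵐ[μ] f := hpos.mono fun _ => le_of_lt
  refine (integral_nonneg_of_ae hnonneg).lt_of_ne' fun hzero => ?_
  obtain ⟨x, hx, hx'⟩ :=
    (((integral_eq_zero_iff_of_nonneg_ae hnonneg hf).1 hzero).and hpos).exists
  exact hx'.ne' hx

/-- Biane's map `w ↦ w - ∫ dν(v)/(v - w)`, the left inverse of `z ↦ z + m(z)`: a solution of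
`m = ∫ dν(v)/(v - z - m)` is the resolvent transform of `ν` at a point `w` with `bianeMap ν w = z`.
The edges of the spectrum are `L± = bianeMap ν ζ±`. -/
noncomputable def bianeMap (ν : Measure ℝ) (w : ℂ) : ℂ := w - resolventTransform ν w

/-- The integral `∫ f(v)/|v - w|² dν(v)`, which for `f = 1` is `Im ∫ dν(v)/(v - w)` divided by
`Im w`. -/
noncomputable def resolventMass (ν : Measure ℝ) (f : ℝ → ℝ) (w : ℂ) : ℝ :=
  ∫ v : ℝ, f v * (normSq (v - w))⁻¹ ∂ν

/-- The points of norm at most `r` in the upper half-plane that `bianeMap ν` maps into the upper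
half-plane, that is, for which `resolventMass ν 1 w < 1`. For large `r` it contains all `z + m(z)`
with `z` in a given bounded set. -/
def bianeDomain (ν : Measure ℝ) (r : ℝ) : Set ℂ :=
  {w | 0 < w.im ∧ ‖w‖ ≤ r ∧ 0 < (bianeMap ν w).im}

section Resolvent

variable {ν : Measure ℝ} {f : ℝ → ℝ} {w : ℂ}

lemma resolventTransform_eq_integral (ν : Measure ℝ) (w : ℂ) :
    resolventTransform ν w = ∫ v : ℝ, ((v : ℂ) - w)⁻¹ ∂ν := by
  simp only [resolventTransform, resolvent, Ring.inverse_eq_inv', coe_algebraMap]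

lemma inv_normSq_ofReal_sub_le (hw : 0 < w.im) (v : ℝ) :
    (normSq (v - w))⁻¹ ≤ (w.im ^ 2)⁻¹ := by
  gcongr
  rw [normSq_apply, sub_im, ofReal_im]
  linarith [mul_self_nonneg (v - w : ℂ).re]

lemma integrable_inv_normSq [IsFiniteMeasure ν] (hw : 0 < w.im) :
    Integrable (fun v : ℝ => (normSq (v - w))⁻¹) ν := by
  refine .of_bound (by fun_prop) (w.im ^ 2)⁻¹ (.of_forall fun v => ?_)
  rw [Real.norm_of_nonneg (inv_nonneg.2 (normSq_nonneg _))]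
  exact inv_normSq_ofReal_sub_le hw v

lemma integrable_mul_inv_normSq [IsFiniteMeasure ν] (hf : AEStronglyMeasurable f ν) {B : ℝ}
    (hB : ∀ᵐ v ∂ν, ‖f v‖ ≤ B) (hw : 0 < w.im) :
    Integrable (fun v : ℝ => f v * (normSq (v - w))⁻¹) ν :=
  (integrable_inv_normSq hw).bdd_mul hf hB

lemma integrable_inv_ofReal_sub [IsFiniteMeasure ν] (hw : 0 < w.im) :
    Integrable (fun v : ℝ => ((v : ℂ) - w)⁻¹) ν := by
  refine .of_bound (by fun_prop) w.im⁻¹ (.of_forall fun v => ?_)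
  rw [norm_inv]
  gcongr
  simpa [abs_of_pos hw] using abs_im_le_norm ((v : ℂ) - w)

lemma resolventTransform_im [IsFiniteMeasure ν] (hw : 0 < w.im) :
    (resolventTransform ν w).im = w.im * resolventMass ν 1 w := by
  rw [resolventTransform_eq_integral, resolventMass, ← integral_const_mul]
  refine (integral_im (integrable_inv_ofReal_sub hw)).symm.trans (integral_congr_ae (.of_forall ?_))
  intro v
  simp [div_eq_mul_inv]

lemma resolventTransform_im_nonneg [IsFiniteMeasure ν] (hw : 0 < w.im) :
    0 ≤ (resolventTransform ν w).im := by
  rw [resolventTransform_im hw]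
  refine mul_nonneg hw.le (integral_nonneg fun v => ?_)
  simpa using normSq_nonneg ((v : ℂ) - w)

lemma bianeMap_im [IsFiniteMeasure ν] (hw : 0 < w.im) :
    (bianeMap ν w).im = w.im * (1 - resolventMass ν 1 w) := by
  rw [bianeMap, sub_im, resolventTransform_im hw]
  ring

lemma resolventMass_one_lt_one [IsFiniteMeasure ν] (hw : 0 < w.im)
    (him : 0 < (bianeMap ν w).im) : resolventMass ν 1 w < 1 := by
  rw [bianeMap_im hw] at him
  exact sub_pos.1 (pos_of_mul_pos_right him hw.le)

lemma norm_resolventTransform_le [IsFiniteMeasure ν] (hw : 0 < w.im)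
    (hmass : resolventMass ν 1 w ≤ 1) : ‖resolventTransform ν w‖ ≤ (1 + ν.real univ) / 2 := by
  have hpt (v : ℝ) : ‖((v : ℂ) - w)⁻¹‖ ≤ ((normSq (v - w))⁻¹ + 1) / 2 := by
    rw [← map_inv₀, normSq_eq_norm_sq]
    linarith [sq_nonneg (‖((v : ℂ) - w)⁻¹‖ - 1)]
  calc ‖resolventTransform ν w‖ ≤ ∫ v : ℝ, ((normSq (v - w))⁻¹ + 1) / 2 ∂ν := by
        rw [resolventTransform_eq_integral]
        exact norm_integral_le_of_norm_le
          (((integrable_inv_normSq hw).add (integrable_const 1)).div_const 2) (.of_forall hpt)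
    _ = (resolventMass ν 1 w + ν.real univ) / 2 := by
        rw [integral_div, integral_add (integrable_inv_normSq hw) (integrable_const 1)]
        simp [resolventMass]
    _ ≤ _ := by gcongr

lemma isBigO_resolventMass_one [IsFiniteMeasure ν] {B : ℝ} (hB : ∀ᵐ v ∂ν, ‖f v‖ ≤ B) (r : ℝ) :
    resolventMass ν f =O[𝓟 (bianeDomain ν r)] fun _ => (1 : ℝ) := by
  refine isBigO_principal.2 ⟨|B|, fun w hw => ?_⟩
  have hpt : ∀ᵐ v ∂ν, ‖f v * (normSq (v - w))⁻¹‖ ≤ |B| * (normSq (v - w))⁻¹ := by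
    filter_upwards [hB] with v hv
    rw [norm_mul, Real.norm_of_nonneg (inv_nonneg.2 (normSq_nonneg _))]
    gcongr
    exacts [inv_nonneg.2 (normSq_nonneg _), hv.trans (le_abs_self B)]
  calc ‖resolventMass ν f w‖ ≤ ∫ v : ℝ, |B| * (normSq (v - w))⁻¹ ∂ν :=
        norm_integral_le_of_norm_le ((integrable_inv_normSq hw.1).const_mul _) hpt
    _ = |B| * resolventMass ν 1 w := by simp [resolventMass, integral_const_mul]
    _ ≤ |B| * ‖(1 : ℝ)‖ := by
        rw [norm_one]
        gcongr
        exact (resolventMass_one_lt_one hw.1 hw.2.2).le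

lemma isTheta_resolventMass_one [IsFiniteMeasure ν] [NeZero ν] (hf : AEStronglyMeasurable f ν)
    {B : ℝ} (hf_pos : ∀ᵐ v ∂ν, 0 < f v) (hB : ∀ᵐ v ∂ν, ‖f v‖ ≤ B) (r : ℝ) :
    resolventMass ν f =Θ[𝓟 (bianeDomain ν r)] fun _ => (1 : ℝ) := by
  refine ⟨isBigO_resolventMass_one hB r, ?_⟩
  let h (v : ℝ) : ℝ := f v * ((|v| + |r| + 1) ^ 2)⁻¹
  have hh : Integrable h ν := by
    refine Integrable.bdd_mul (c := B) (.of_bound (by fun_prop) 1 (.of_forall fun v => ?_)) hf hB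
    rw [Real.norm_of_nonneg (by positivity)]
    exact inv_le_one_of_one_le₀ (one_le_pow₀ (by linarith [abs_nonneg v, abs_nonneg r]))
  have hh_pos : 0 < ∫ v, h v ∂ν := by
    refine integral_pos_of_ae_pos hh ?_
    filter_upwards [hf_pos] with v hv
    positivity
  refine (isBigO_const_left_iff_pos_le_norm one_ne_zero).2
    ⟨∫ v, h v ∂ν, hh_pos, eventually_principal.2 fun w hw => ?_⟩
  refine le_trans (integral_mono_ae hh (integrable_mul_inv_normSq hf hB hw.1) ?_) (le_abs_self _)
  filter_upwards [hf_pos] with v hv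
  have hne : (v : ℂ) - w ≠ 0 := fun h0 => hw.1.ne' (by simpa using congrArg im h0)
  have hnorm : ‖(v : ℂ) - w‖ ≤ |v| + |r| + 1 := by
    have := norm_sub_le (v : ℂ) w
    rw [norm_real, Real.norm_eq_abs] at this
    linarith [hw.2.1.trans (le_abs_self r)]
  have : 0 < normSq ((v : ℂ) - w) := normSq_pos.2 hne
  dsimp only [h]
  gcongr
  rw [normSq_eq_norm_sq]
  gcongr

lemma isTheta_resolventTransform_im [IsFiniteMeasure ν] [NeZero ν] (r : ℝ) :
    (fun w => (resolventTransform ν w).im) =Θ[𝓟 (bianeDomain ν r)] im := by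
  have hmass : resolventMass ν 1 =Θ[𝓟 (bianeDomain ν r)] fun _ => (1 : ℝ) :=
    isTheta_resolventMass_one (B := 1) aestronglyMeasurable_const
      (.of_forall fun _ => one_pos) (.of_forall fun _ => norm_one.le) r
  have hcongr : (fun w => (resolventTransform ν w).im) =ᶠ[𝓟 (bianeDomain ν r)]
      fun w => w.im * resolventMass ν 1 w :=
    eventually_principal.2 fun w hw => resolventTransform_im hw.1
  simpa using hcongr.trans_isTheta ((isTheta_refl im _).mul hmass)

end Resolvent

/-- `ζ` is the right edge parameter of `ν`: it lies to the right of a bound `b` for the support, and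
`∫ dν(v)/(v - ζ)² = 1`. -/
structure IsRightEdge (ν : Measure ℝ) (b ζ : ℝ) : Prop where
  ae_le : ∀ᵐ v ∂ν, v ≤ b
  lt : b < ζ
  integral_inv_sq : ∫ v, ((v - ζ) ^ 2)⁻¹ ∂ν = 1

lemma bianeMap_ofReal (ν : Measure ℝ) (x : ℝ) :
    bianeMap ν x = ((x - ∫ v, (v - x)⁻¹ ∂ν : ℝ) : ℂ) := by
  rw [bianeMap, resolventTransform_eq_integral, ofReal_sub, ← integral_complex_ofReal]
  simp only [ofReal_inv, ofReal_sub]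

/-- `|E - L| + η` for `E + iη = bianeMap ν w` and `L` the edge `bianeMap ν ζ`. -/
noncomputable def edgeDist (ν : Measure ℝ) (ζ : ℝ) (w : ℂ) : ℝ :=
  |(bianeMap ν w).re - (bianeMap ν ζ).re| + (bianeMap ν w).im

lemma edgeDist_nonneg {ν : Measure ℝ} {ζ : ℝ} {w : ℂ} (him : 0 ≤ (bianeMap ν w).im) :
    0 ≤ edgeDist ν ζ w :=
  add_nonneg (abs_nonneg _) him

lemma edgeMap_inv_mul_inv_normSq {x : ℝ} {U : ℂ} (hx : x ≠ 0) (hU : (x : ℂ) + U ≠ 0) :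
    edgeMap x⁻¹ (x ^ 2)⁻¹ U * (normSq (x + U))⁻¹ = U * (x ^ 2 : ℂ)⁻¹ + (x + U)⁻¹ - (x : ℂ)⁻¹ := by
  have hx : (x : ℂ) ≠ 0 := ofReal_ne_zero.2 hx
  have hnormSq : (normSq (x + U) : ℂ) = (x + conj U) * (x + U) := by
    rw [normSq_eq_conj_mul_self, map_add, conj_ofReal]
  have hU' : (x : ℂ) + conj U ≠ 0 := by
    rw [← conj_ofReal, ← map_add]
    exact (map_ne_zero _).2 hU
  rw [edgeMap_eq_sq_mul, ofReal_inv (normSq _), hnormSq]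
  push_cast
  field_simp
  ring

lemma integral_edgeMap_mul_inv_normSq {ν : Measure ℝ} {f g : ℝ → ℝ} {w : ℂ}
    (hf : Integrable (fun v : ℝ => f v * (normSq (v - w))⁻¹) ν)
    (hg : Integrable (fun v : ℝ => g v * (normSq (v - w))⁻¹) ν) (U : ℂ) :
    ∫ v : ℝ, edgeMap (f v) (g v) U * (normSq (v - w))⁻¹ ∂ν =
      edgeMap (resolventMass ν f w) (resolventMass ν g w) U := by
  simp only [edgeMap, resolventMass, ← integral_complex_ofReal, ← integral_const_mul]
  rw [← integral_add (hf.ofReal.const_mul _) (hg.ofReal.const_mul _)]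
  refine integral_congr_ae (.of_forall fun v => ?_)
  push_cast
  ring

lemma resolventMass_inv_sq_nonneg (ν : Measure ℝ) (ζ : ℝ) (w : ℂ) :
    0 ≤ resolventMass ν (fun v => ((ζ - v) ^ 2)⁻¹) w :=
  integral_nonneg fun _ => mul_nonneg (by positivity) (inv_nonneg.2 (normSq_nonneg _))

lemma bianeMap_sub_im (ν : Measure ℝ) (ζ : ℝ) (w : ℂ) :
    (bianeMap ν w - bianeMap ν ζ).im = (bianeMap ν w).im := by
  rw [sub_im, bianeMap_ofReal, ofReal_im, sub_zero]

lemma isBigO_sub_ofReal (ν : Measure ℝ) (ζ r : ℝ) :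
    (fun w : ℂ => w - ζ) =O[𝓟 (bianeDomain ν r)] fun _ => (1 : ℝ) := by
  refine isBigO_principal.2 ⟨r + ‖(ζ : ℂ)‖, fun w hw => ?_⟩
  rw [norm_one, mul_one]
  exact (norm_sub_le _ _).trans (by gcongr; exact hw.2.1)

namespace IsRightEdge

variable {ν : Measure ℝ} {b ζ : ℝ}

lemma neZero (h : IsRightEdge ν b ζ) : NeZero ν := by
  refine ⟨fun h0 => ?_⟩
  simpa [h0] using h.integral_inv_sq

lemma ae_inv_pos (h : IsRightEdge ν b ζ) : ∀ᵐ v ∂ν, 0 < (ζ - v)⁻¹ := by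
  filter_upwards [h.ae_le] with v hv
  exact inv_pos.2 (sub_pos.2 (hv.trans_lt h.lt))

lemma ae_norm_inv_le (h : IsRightEdge ν b ζ) : ∀ᵐ v ∂ν, ‖(ζ - v)⁻¹‖ ≤ (ζ - b)⁻¹ := by
  filter_upwards [h.ae_le, h.ae_inv_pos] with v hv hpos
  rw [Real.norm_of_nonneg hpos.le]
  gcongr
  exact sub_pos.2 h.lt

lemma ae_norm_inv_sq_le (h : IsRightEdge ν b ζ) :
    ∀ᵐ v ∂ν, ‖((ζ - v) ^ 2)⁻¹‖ ≤ ((ζ - b)⁻¹) ^ 2 := by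
  filter_upwards [h.ae_norm_inv_le] with v hv
  rw [← inv_pow, norm_pow]
  gcongr

lemma isTheta_resolventMass_inv [IsFiniteMeasure ν] (h : IsRightEdge ν b ζ) (r : ℝ) :
    resolventMass ν (fun v => (ζ - v)⁻¹) =Θ[𝓟 (bianeDomain ν r)] fun _ => (1 : ℝ) :=
  have := h.neZero
  isTheta_resolventMass_one (by fun_prop) h.ae_inv_pos h.ae_norm_inv_le r

lemma bianeMap_sub_eq_edgeMap [IsFiniteMeasure ν] (h : IsRightEdge ν b ζ) {w : ℂ}
    (hw : 0 < w.im) :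
    bianeMap ν w - bianeMap ν ζ = edgeMap (resolventMass ν (fun v => (ζ - v)⁻¹) w)
      (resolventMass ν (fun v => ((ζ - v) ^ 2)⁻¹) w) (w - ζ) := by
  have hsq_one : ∫ v : ℝ, ((ζ - v : ℂ) ^ 2)⁻¹ ∂ν = 1 := by
    rw [← ofReal_one, ← h.integral_inv_sq, ← integral_complex_ofReal]
    simp only [ofReal_inv, ofReal_pow, ofReal_sub, sub_sq_comm]
  have hsq : Integrable (fun v : ℝ => ((ζ - v : ℂ) ^ 2)⁻¹) ν :=
    .of_integral_ne_zero (hsq_one ▸ one_ne_zero)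
  have hinv : Integrable (fun v : ℝ => (ζ - v : ℂ)⁻¹) ν := by
    simpa using (Integrable.of_bound (by fun_prop) _ h.ae_norm_inv_le).ofReal (𝕜 := ℂ)
  have hdiff : Integrable (fun v : ℝ => (w - ζ) * ((ζ - v : ℂ) ^ 2)⁻¹ - (v - w : ℂ)⁻¹) ν :=
    (hsq.const_mul _).sub (integrable_inv_ofReal_sub hw)
  have hedge : ∫ v : ℝ, (v - ζ : ℂ)⁻¹ ∂ν = -∫ v : ℝ, (ζ - v : ℂ)⁻¹ ∂ν := by
    simp only [← integral_neg, ← inv_neg, neg_sub]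
  calc bianeMap ν w - bianeMap ν ζ
      = ∫ v : ℝ, (w - ζ) * ((ζ - v : ℂ) ^ 2)⁻¹ - (v - w : ℂ)⁻¹ - (ζ - v : ℂ)⁻¹ ∂ν := by
        rw [integral_sub hdiff hinv, integral_sub (hsq.const_mul _) (integrable_inv_ofReal_sub hw),
          integral_const_mul, hsq_one, bianeMap, bianeMap, resolventTransform_eq_integral,
          resolventTransform_eq_integral, hedge]
        ring
    _ = ∫ v : ℝ, edgeMap (ζ - v)⁻¹ ((ζ - v) ^ 2)⁻¹ (w - ζ) * (normSq (v - w))⁻¹ ∂ν := by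
        refine integral_congr_ae ?_
        filter_upwards [h.ae_inv_pos] with v hv
        have hvw : ((ζ - v : ℝ) : ℂ) + (w - ζ) = -(v - w) := by push_cast; ring
        have hne : ((ζ - v : ℝ) : ℂ) + (w - ζ) ≠ 0 :=
          fun h0 => hw.ne' (by simpa using congrArg im h0)
        rw [← normSq_neg, ← hvw, edgeMap_inv_mul_inv_normSq (inv_pos.1 hv).ne' hne, hvw, inv_neg]
        push_cast
        ring
    _ = _ := integral_edgeMap_mul_inv_normSq
        (integrable_mul_inv_normSq (by fun_prop) h.ae_norm_inv_le hw)
        (integrable_mul_inv_normSq (by fun_prop) h.ae_norm_inv_sq_le hw) _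

lemma resolventMass_inv_nonneg (h : IsRightEdge ν b ζ) (w : ℂ) :
    0 ≤ resolventMass ν (fun v => (ζ - v)⁻¹) w := by
  refine integral_nonneg_of_ae ?_
  filter_upwards [h.ae_inv_pos] with v hv
  exact mul_nonneg hv.le (inv_nonneg.2 (normSq_nonneg _))

lemma resolventMass_inv_add_nonneg [IsFiniteMeasure ν] (h : IsRightEdge ν b ζ) {w : ℂ}
    (hw : 0 < w.im) {x : ℝ} (hx : b ≤ x) :
    0 ≤ resolventMass ν (fun v => (ζ - v)⁻¹) w +
      (x - ζ) * resolventMass ν (fun v => ((ζ - v) ^ 2)⁻¹) w := by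
  rw [resolventMass, resolventMass, ← integral_const_mul,
    ← integral_add (integrable_mul_inv_normSq (by fun_prop) h.ae_norm_inv_le hw)
      ((integrable_mul_inv_normSq (by fun_prop) h.ae_norm_inv_sq_le hw).const_mul _)]
  refine integral_nonneg_of_ae ?_
  filter_upwards [h.ae_le, h.ae_inv_pos] with v hv hpos
  have hne : ζ - v ≠ 0 := (inv_pos.1 hpos).ne'
  calc 0 ≤ (x - v) * ((ζ - v) ^ 2)⁻¹ * (normSq (v - w))⁻¹ :=
        mul_nonneg (mul_nonneg (by linarith) (by positivity)) (inv_nonneg.2 (normSq_nonneg _))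
    _ = _ := by
        field_simp
        ring

lemma isBigO_resolventMass_inv_sq [IsFiniteMeasure ν] (h : IsRightEdge ν b ζ) (r : ℝ) :
    resolventMass ν (fun v => ((ζ - v) ^ 2)⁻¹) =O[𝓟 (bianeDomain ν r)] fun _ => (1 : ℝ) :=
  isBigO_resolventMass_one h.ae_norm_inv_sq_le r

section Asymptotics

variable [IsFiniteMeasure ν] {l : Filter ℂ} {r : ℝ}

lemma eventually_edgeMap_im_nonneg (h : IsRightEdge ν b ζ) (hl : ∀ᶠ w in l, w ∈ bianeDomain ν r) :
    ∀ᶠ w in l, 0 ≤ (edgeMap (resolventMass ν (fun v => (ζ - v)⁻¹) w)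
      (resolventMass ν (fun v => ((ζ - v) ^ 2)⁻¹) w) (w - ζ)).im := by
  filter_upwards [hl] with w hw
  rw [← h.bianeMap_sub_eq_edgeMap hw.1, bianeMap_sub_im]
  exact hw.2.2.le

lemma isTheta_bianeMap_sub (h : IsRightEdge ν b ζ) (hl : ∀ᶠ w in l, w ∈ bianeDomain ν r) :
    (fun w => bianeMap ν w - bianeMap ν ζ) =Θ[l] fun w => (w - ζ) ^ 2 := by
  have hmono := le_principal_iff.2 hl
  have hedge := isTheta_edgeMap ((h.isTheta_resolventMass_inv r).mono hmono)
    ((h.isBigO_resolventMass_inv_sq r).mono hmono) ((isBigO_sub_ofReal ν ζ r).mono hmono)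
    (.of_forall h.resolventMass_inv_nonneg) (.of_forall (resolventMass_inv_sq_nonneg ν ζ))
    (hl.mono fun w hw => by simpa using hw.1) (h.eventually_edgeMap_im_nonneg hl)
  exact EventuallyEq.trans_isTheta (hl.mono fun w hw => h.bianeMap_sub_eq_edgeMap hw.1) hedge

lemma isBigO_sub_im (h : IsRightEdge ν b ζ) (hl : ∀ᶠ w in l, w ∈ bianeDomain ν r)
    (hb : ∀ᶠ w in l, b ≤ w.re) (hre : ∀ᶠ w in l, (bianeMap ν w).re ≤ (bianeMap ν ζ).re) :
    (fun w : ℂ => w - ζ) =O[l] im := by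
  have hmono := le_principal_iff.2 hl
  have hedge := isBigO_im_of_edgeMap_re_nonpos ((h.isTheta_resolventMass_inv r).mono hmono)
    ((h.isBigO_resolventMass_inv_sq r).mono hmono) ((isBigO_sub_ofReal ν ζ r).mono hmono)
    (.of_forall h.resolventMass_inv_nonneg) (.of_forall (resolventMass_inv_sq_nonneg ν ζ))
    (hl.mono fun w hw => by simpa using hw.1) (h.eventually_edgeMap_im_nonneg hl) ?_ ?_
  · simpa using hedge
  · filter_upwards [hl, hre] with w hw hre
    rw [← h.bianeMap_sub_eq_edgeMap hw.1, sub_re]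
    exact sub_nonpos.2 hre
  · filter_upwards [hl, hb] with w hw hb
    simpa using h.resolventMass_inv_add_nonneg hw.1 hb

lemma isTheta_bianeMap_im (h : IsRightEdge ν b ζ) (hl : ∀ᶠ w in l, w ∈ bianeDomain ν r)
    (hre : ∀ᶠ w in l, (bianeMap ν ζ).re ≤ (bianeMap ν w).re) :
    (fun w => (bianeMap ν w).im) =Θ[l] fun w => w.im * ‖w - ζ‖ := by
  have hmono := le_principal_iff.2 hl
  have hedge := isTheta_edgeMap_im_of_re_nonneg ((h.isTheta_resolventMass_inv r).mono hmono)
    ((h.isBigO_resolventMass_inv_sq r).mono hmono) ((isBigO_sub_ofReal ν ζ r).mono hmono)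
    (.of_forall h.resolventMass_inv_nonneg) (hl.mono fun w hw => by simpa using hw.1)
    (h.eventually_edgeMap_im_nonneg hl) ?_
  · refine EventuallyEq.trans_isTheta ?_ (by simpa using hedge)
    filter_upwards [hl] with w hw
    rw [← h.bianeMap_sub_eq_edgeMap hw.1, bianeMap_sub_im]
  · filter_upwards [hl, hre] with w hw hre
    rw [← h.bianeMap_sub_eq_edgeMap hw.1, sub_re]
    exact sub_nonneg.2 hre

lemma isTheta_sqrt_edgeDist (h : IsRightEdge ν b ζ) (hl : ∀ᶠ w in l, w ∈ bianeDomain ν r) :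
    (fun w => √(edgeDist ν ζ w)) =Θ[l] fun w => ‖w - ζ‖ := by
  have hsq : edgeDist ν ζ =Θ[l] fun w => ‖w - ζ‖ ^ 2 := by
    refine EventuallyEq.trans_isTheta (hl.mono fun w hw => ?_)
      ((isTheta_abs_re_add_abs_im l fun w => bianeMap ν w - bianeMap ν ζ).trans ?_)
    · rw [edgeDist, sub_re, bianeMap_sub_im, abs_of_pos hw.2.2]
    · simpa using (h.isTheta_bianeMap_sub hl).norm_right
  have hsqrt := hsq.rpow (r := 1 / 2) (hl.mono fun w hw => edgeDist_nonneg hw.2.2.le)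
    (.of_forall fun w => sq_nonneg _)
  simpa only [← Real.sqrt_eq_rpow, Real.sqrt_sq (norm_nonneg _)] using hsqrt

lemma isBigO_im_sqrt_edgeDist (h : IsRightEdge ν b ζ) (hl : ∀ᶠ w in l, w ∈ bianeDomain ν r) :
    im =O[l] fun w => √(edgeDist ν ζ w) := by
  refine .trans ?_ (h.isTheta_sqrt_edgeDist hl).2
  simpa using (isBigO_im (l := l) fun w : ℂ => w - ζ).norm_right

lemma isBigO_sqrt_edgeDist_im (h : IsRightEdge ν b ζ) (hl : ∀ᶠ w in l, w ∈ bianeDomain ν r)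
    (hb : ∀ᶠ w in l, b ≤ w.re) (hre : ∀ᶠ w in l, (bianeMap ν w).re ≤ (bianeMap ν ζ).re) :
    (fun w => √(edgeDist ν ζ w)) =O[l] im :=
  (h.isTheta_sqrt_edgeDist hl).1.trans (h.isBigO_sub_im hl hb hre).norm_left

lemma isTheta_bianeMap_im_mul_sqrt (h : IsRightEdge ν b ζ)
    (hl : ∀ᶠ w in l, w ∈ bianeDomain ν r)
    (hre : ∀ᶠ w in l, (bianeMap ν ζ).re ≤ (bianeMap ν w).re) :
    (fun w => (bianeMap ν w).im) =Θ[l] fun w => w.im * √(edgeDist ν ζ w) :=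
  (h.isTheta_bianeMap_im hl hre).trans
    ((isTheta_refl im l).mul (h.isTheta_sqrt_edgeDist hl).symm)

end Asymptotics

end IsRightEdge

/-- `ζ` is the left edge parameter of `ν`: it lies to the left of a bound `a` for the support, and
`∫ dν(v)/(v - ζ)² = 1`. -/
structure IsLeftEdge (ν : Measure ℝ) (a ζ : ℝ) : Prop where
  le_ae : ∀ᵐ v ∂ν, a ≤ v
  lt : ζ < a
  integral_inv_sq : ∫ v, ((v - ζ) ^ 2)⁻¹ ∂ν = 1

section Reflection

variable {ν : Measure ℝ} {ζ r : ℝ} {w : ℂ}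

lemma bianeMap_map_neg (ν : Measure ℝ) (w : ℂ) :
    bianeMap (ν.map Neg.neg) (-conj w) = -conj (bianeMap ν w) := by
  have hint : ∫ v : ℝ, ((v : ℂ) - -conj w)⁻¹ ∂(ν.map Neg.neg) =
      -conj (∫ v : ℝ, ((v : ℂ) - w)⁻¹ ∂ν) := by
    rw [measurableEmbedding_neg.integral_map, ← integral_conj, ← integral_neg]
    congr with v
    rw [map_inv₀, map_sub, conj_ofReal, ← inv_neg]
    push_cast
    ring
  rw [bianeMap, bianeMap, resolventTransform_eq_integral, resolventTransform_eq_integral, hint,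
    map_sub]
  ring

lemma neg_conj_mem_bianeDomain (hw : w ∈ bianeDomain ν r) :
    -conj w ∈ bianeDomain (ν.map Neg.neg) r := by
  simpa [bianeDomain, bianeMap_map_neg] using hw

lemma bianeMap_map_neg_ofReal (ν : Measure ℝ) (x : ℝ) :
    bianeMap (ν.map Neg.neg) (-x) = -conj (bianeMap ν x) := by
  rw [← bianeMap_map_neg, conj_ofReal]

lemma edgeDist_map_neg (ν : Measure ℝ) (ζ : ℝ) (w : ℂ) :
    edgeDist (ν.map Neg.neg) (-ζ) (-conj w) = edgeDist ν ζ w := by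
  rw [edgeDist, edgeDist, ofReal_neg, bianeMap_map_neg, bianeMap_map_neg_ofReal]
  simp [neg_add_eq_sub, abs_sub_comm]

end Reflection

namespace IsLeftEdge

variable {ν : Measure ℝ} {a ζ : ℝ}

lemma reflect (h : IsLeftEdge ν a ζ) : IsRightEdge (ν.map Neg.neg) (-a) (-ζ) where
  ae_le := by
    rw [measurableEmbedding_neg.ae_map_iff]
    exact h.le_ae.mono fun v hv => neg_le_neg hv
  lt := neg_lt_neg h.lt
  integral_inv_sq := by
    rw [measurableEmbedding_neg.integral_map, ← h.integral_inv_sq]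
    congr with v
    ring

variable [IsFiniteMeasure ν] {l : Filter ℂ} {r : ℝ}

lemma isBigO_im_sqrt_edgeDist (h : IsLeftEdge ν a ζ) (hl : ∀ᶠ w in l, w ∈ bianeDomain ν r) :
    im =O[l] fun w => √(edgeDist ν ζ w) := by
  have := h.reflect.isBigO_im_sqrt_edgeDist (l := l.map fun w => -conj w)
    (hl.mono fun w => neg_conj_mem_bianeDomain)
  simpa [Function.comp_def, edgeDist_map_neg] using isBigO_map.1 this

lemma isBigO_sqrt_edgeDist_im (h : IsLeftEdge ν a ζ) (hl : ∀ᶠ w in l, w ∈ bianeDomain ν r)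
    (ha : ∀ᶠ w in l, w.re ≤ a) (hre : ∀ᶠ w in l, (bianeMap ν ζ).re ≤ (bianeMap ν w).re) :
    (fun w => √(edgeDist ν ζ w)) =O[l] im := by
  have := h.reflect.isBigO_sqrt_edgeDist_im (l := l.map fun w => -conj w)
    (hl.mono fun w => neg_conj_mem_bianeDomain) (ha.mono fun w hw => by simpa using hw)
    (hre.mono fun w hw => by simpa [bianeMap_map_neg, bianeMap_map_neg_ofReal] using hw)
  simpa [Function.comp_def, edgeDist_map_neg] using isBigO_map.1 this

lemma isTheta_bianeMap_im_mul_sqrt (h : IsLeftEdge ν a ζ)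
    (hl : ∀ᶠ w in l, w ∈ bianeDomain ν r)
    (hre : ∀ᶠ w in l, (bianeMap ν w).re ≤ (bianeMap ν ζ).re) :
    (fun w => (bianeMap ν w).im) =Θ[l] fun w => w.im * √(edgeDist ν ζ w) := by
  have := h.reflect.isTheta_bianeMap_im_mul_sqrt (l := l.map fun w => -conj w)
    (hl.mono fun w => neg_conj_mem_bianeDomain)
    (hre.mono fun w hw => by simpa [bianeMap_map_neg, bianeMap_map_neg_ofReal] using hw)
  constructor
  · simpa [Function.comp_def, edgeDist_map_neg, bianeMap_map_neg] using isBigO_map.1 this.1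
  · simpa [Function.comp_def, edgeDist_map_neg, bianeMap_map_neg] using isBigO_map.1 this.2

end IsLeftEdge

section Bulk

lemma lowerSemicontinuous_lintegral {X α : Type*} [TopologicalSpace X] [FirstCountableTopology X]
    [MeasurableSpace α] {μ : Measure α} {f : X → α → ENNReal} (hf_meas : ∀ x, Measurable (f x))
    (hf : ∀ a, LowerSemicontinuous fun x => f x a) :
    LowerSemicontinuous fun x => ∫⁻ a, f x a ∂μ :=
  lowerSemicontinuous_iff_le_liminf.2 fun x =>
    (lintegral_mono fun a => (hf a).le_liminf x).trans (lintegral_liminf_le hf_meas)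

variable {ν : Measure ℝ} {a b : ℝ}

lemma lintegral_inv_normSq [IsFiniteMeasure ν] {w : ℂ} (hw : 0 < w.im) :
    ∫⁻ v : ℝ, (ENNReal.ofReal (normSq (v - w)))⁻¹ ∂ν = ENNReal.ofReal (resolventMass ν 1 w) := by
  simp only [resolventMass, Pi.one_apply, one_mul]
  rw [ofReal_integral_eq_lintegral_ofReal (integrable_inv_normSq hw)
    (.of_forall fun v => inv_nonneg.2 (normSq_nonneg _))]
  congr with v
  refine (ENNReal.ofReal_inv_of_pos (normSq_pos.2 fun h0 => hw.ne' ?_)).symm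
  simpa using congrArg im h0

lemma exists_pos_le_im_of_one_lt_lintegral [IsFiniteMeasure ν]
    (hedge : ∀ x ∈ Icc a b, 1 < ∫⁻ v, (ENNReal.ofReal ((v - x) ^ 2))⁻¹ ∂ν) :
    ∃ ε > 0, ∀ w : ℂ, 0 < w.im → 0 < (bianeMap ν w).im → w.re ∈ Icc a b → ε ≤ w.im := by
  let mass (w : ℂ) := ∫⁻ v : ℝ, (ENNReal.ofReal (normSq (v - w)))⁻¹ ∂ν
  have hopen : IsOpen {w | 1 < mass w} := by
    refine (lowerSemicontinuous_lintegral (fun w => by fun_prop) fun v => ?_).isOpen_preimage 1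
    exact (ENNReal.continuous_ofReal.comp
      (continuous_normSq.comp (by fun_prop))).inv.lowerSemicontinuous
  have hsub : ofReal '' Icc a b ⊆ {w | 1 < mass w} := by
    rintro _ ⟨x, hx, rfl⟩
    simpa [mass, ← ofReal_sub, normSq_ofReal, ← pow_two] using hedge x hx
  obtain ⟨ε, hε, hthick⟩ :=
    (isCompact_Icc.image continuous_ofReal).exists_thickening_subset_open hopen hsub
  refine ⟨ε, hε, fun w hw him hre => le_of_not_gt fun hlt => ?_⟩
  have hmem : w ∈ Metric.thickening ε (ofReal '' Icc a b) := by
    refine Metric.mem_thickening_iff.2 ⟨w.re, mem_image_of_mem _ hre, ?_⟩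
    rwa [dist_of_re_eq (ofReal_re _).symm, ofReal_im, Real.dist_0_eq_abs, abs_of_pos hw]
  have hlarge : 1 < ∫⁻ v : ℝ, (ENNReal.ofReal (normSq (v - w)))⁻¹ ∂ν := hthick hmem
  rw [lintegral_inv_normSq hw, ENNReal.one_lt_ofReal] at hlarge
  exact hlarge.not_gt (resolventMass_one_lt_one hw him)

lemma isBigO_one_im_of_re_mem_Icc [IsFiniteMeasure ν] {l : Filter ℂ} {r : ℝ}
    (hedge : ∀ x ∈ Icc a b, 1 < ∫⁻ v, (ENNReal.ofReal ((v - x) ^ 2))⁻¹ ∂ν)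
    (hl : ∀ᶠ w in l, w ∈ bianeDomain ν r) (hre : ∀ᶠ w in l, w.re ∈ Icc a b) :
    (fun _ => (1 : ℝ)) =O[l] im := by
  obtain ⟨ε, hε, h⟩ := exists_pos_le_im_of_one_lt_lintegral hedge
  refine (isBigO_const_left_iff_pos_le_norm one_ne_zero).2 ⟨ε, hε, ?_⟩
  filter_upwards [hl, hre] with w hw hre
  exact (h w hw.1 hw.2.2 hre).trans (le_abs_self _)

end Bulk

section TwoEdges

variable {ν : Measure ℝ} {a b ζm ζp : ℝ}

lemma IsRightEdge.le_bianeMap_re (h : IsRightEdge ν b ζp) : ζp ≤ (bianeMap ν ζp).re := by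
  rw [bianeMap_ofReal, ofReal_re]
  have : ∫ v, (v - ζp)⁻¹ ∂ν ≤ 0 := by
    refine integral_nonpos_of_ae ?_
    filter_upwards [h.ae_inv_pos] with v hv
    rw [← neg_sub, inv_neg]
    exact neg_nonpos.2 hv.le
  linarith

lemma IsLeftEdge.bianeMap_re_le (h : IsLeftEdge ν a ζm) : (bianeMap ν ζm).re ≤ ζm := by
  have := h.reflect.le_bianeMap_re
  rw [ofReal_neg, bianeMap_map_neg_ofReal, neg_re, conj_re] at this
  exact neg_le_neg_iff.1 this

lemma IsLeftEdge.bianeMap_re_le_bianeMap_re (hm : IsLeftEdge ν a ζm) (hp : IsRightEdge ν b ζp) :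
    (bianeMap ν ζm).re ≤ (bianeMap ν ζp).re := by
  have := hp.neZero
  obtain ⟨v, hav, hvb⟩ := (hm.le_ae.and hp.ae_le).exists
  linarith [hm.bianeMap_re_le, hp.le_bianeMap_re, hm.lt, hp.lt]

lemma min_edgeDist_eq_left {w : ℂ} (hedges : (bianeMap ν ζm).re ≤ (bianeMap ν ζp).re)
    (hw : (bianeMap ν w).re ≤ (bianeMap ν ζm).re) :
    min (edgeDist ν ζm w) (edgeDist ν ζp w) = edgeDist ν ζm w := by
  rw [min_eq_left_iff, edgeDist, edgeDist, abs_of_nonpos (by linarith), abs_of_nonpos (by linarith)]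
  linarith

lemma min_edgeDist_eq_right {w : ℂ} (hedges : (bianeMap ν ζm).re ≤ (bianeMap ν ζp).re)
    (hw : (bianeMap ν ζp).re ≤ (bianeMap ν w).re) :
    min (edgeDist ν ζm w) (edgeDist ν ζp w) = edgeDist ν ζp w := by
  rw [min_eq_right_iff, edgeDist, edgeDist, abs_of_nonneg (by linarith),
    abs_of_nonneg (by linarith)]
  linarith

variable [IsFiniteMeasure ν] {l : Filter ℂ} {r : ℝ}

lemma isBigO_sqrt_edgeDist_im_of_re_mem_Icc (hp : IsRightEdge ν b ζp)
    (hedge : ∀ x ∈ Icc a b, 1 < ∫⁻ v, (ENNReal.ofReal ((v - x) ^ 2))⁻¹ ∂ν)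
    (hl : ∀ᶠ w in l, w ∈ bianeDomain ν r) (hab : ∀ᶠ w in l, w.re ∈ Icc a b) :
    (fun w => √(edgeDist ν ζp w)) =O[l] im :=
  (hp.isTheta_sqrt_edgeDist hl).1.trans
    (((isBigO_sub_ofReal ν ζp r).mono (le_principal_iff.2 hl)).norm_left.trans
      (isBigO_one_im_of_re_mem_Icc hedge hl hab))

lemma isBigO_sqrt_min_edgeDist_im (hm : IsLeftEdge ν a ζm) (hp : IsRightEdge ν b ζp)
    (hedge : ∀ x ∈ Icc a b, 1 < ∫⁻ v, (ENNReal.ofReal ((v - x) ^ 2))⁻¹ ∂ν)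
    (hl : ∀ᶠ w in l, w ∈ bianeDomain ν r)
    (hin : ∀ᶠ w in l, (bianeMap ν w).re ∈ Icc (bianeMap ν ζm).re (bianeMap ν ζp).re) :
    (fun w => √(min (edgeDist ν ζm w) (edgeDist ν ζp w))) =O[l] im := by
  have hle_m : (fun w => √(min (edgeDist ν ζm w) (edgeDist ν ζp w))) =O[l]
      fun w => √(edgeDist ν ζm w) := by
    refine .of_bound' (.of_forall fun w => ?_)
    simpa only [Real.norm_of_nonneg (Real.sqrt_nonneg _)] using Real.sqrt_le_sqrt (min_le_left _ _)
  have hle_p : (fun w => √(min (edgeDist ν ζm w) (edgeDist ν ζp w))) =O[l]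
      fun w => √(edgeDist ν ζp w) := by
    refine .of_bound' (.of_forall fun w => ?_)
    simpa only [Real.norm_of_nonneg (Real.sqrt_nonneg _)] using Real.sqrt_le_sqrt (min_le_right _ _)
  have hleft : (fun w => √(edgeDist ν ζm w)) =O[l ⊓ 𝓟 {w | w.re ≤ a}] im :=
    hm.isBigO_sqrt_edgeDist_im (hl.filter_mono inf_le_left)
      (mem_inf_of_right (mem_principal_self _))
      ((hin.mono fun w hw => hw.1).filter_mono inf_le_left)
  have hright : (fun w => √(edgeDist ν ζp w)) =O[l ⊓ 𝓟 {w | b ≤ w.re}] im :=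
    hp.isBigO_sqrt_edgeDist_im (hl.filter_mono inf_le_left)
      (mem_inf_of_right (mem_principal_self _))
      ((hin.mono fun w hw => hw.2).filter_mono inf_le_left)
  have hbulk : (fun w => √(edgeDist ν ζp w)) =O[l ⊓ 𝓟 {w | w.re ∈ Icc a b}] im :=
    isBigO_sqrt_edgeDist_im_of_re_mem_Icc hp hedge (hl.filter_mono inf_le_left)
      (mem_inf_of_right (mem_principal_self _))
  have hcover : l ≤ l ⊓ 𝓟 {w | w.re ≤ a} ⊔ l ⊓ 𝓟 {w | b ≤ w.re} ⊔ l ⊓ 𝓟 {w | w.re ∈ Icc a b} := by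
    rw [← inf_sup_left, ← inf_sup_left, sup_principal, sup_principal]
    refine le_inf le_rfl (le_principal_iff.2 (univ_mem' fun w => ?_))
    rcases le_total w.re a with hwa | hwa
    · exact .inl (.inl hwa)
    · exact (le_total b w.re).elim (fun hwb => .inl (.inr hwb)) fun hwb => .inr ⟨hwa, hwb⟩
  exact ((((hle_m.mono inf_le_left).trans hleft).sup ((hle_p.mono inf_le_left).trans hright)).sup
    ((hle_p.mono inf_le_left).trans hbulk)).mono hcover

lemma isTheta_im_sqrt_min_edgeDist (hm : IsLeftEdge ν a ζm) (hp : IsRightEdge ν b ζp)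
    (hedge : ∀ x ∈ Icc a b, 1 < ∫⁻ v, (ENNReal.ofReal ((v - x) ^ 2))⁻¹ ∂ν)
    (hl : ∀ᶠ w in l, w ∈ bianeDomain ν r)
    (hin : ∀ᶠ w in l, (bianeMap ν w).re ∈ Icc (bianeMap ν ζm).re (bianeMap ν ζp).re) :
    im =Θ[l] fun w => √(min (edgeDist ν ζm w) (edgeDist ν ζp w)) := by
  refine ⟨?_, isBigO_sqrt_min_edgeDist_im hm hp hedge hl hin⟩
  simpa only [Real.sqrt_monotone.map_min] using
    isBigO_min (fun w => Real.sqrt_nonneg (edgeDist ν ζm w))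
      (fun w => Real.sqrt_nonneg (edgeDist ν ζp w))
      (hm.isBigO_im_sqrt_edgeDist hl) (hp.isBigO_im_sqrt_edgeDist hl)

lemma isTheta_bianeMap_im_mul_sqrt_min_edgeDist (hm : IsLeftEdge ν a ζm) (hp : IsRightEdge ν b ζp)
    (hl : ∀ᶠ w in l, w ∈ bianeDomain ν r)
    (hout : ∀ᶠ w in l, (bianeMap ν w).re ∉ Icc (bianeMap ν ζm).re (bianeMap ν ζp).re) :
    (fun w => (bianeMap ν w).im) =Θ[l]
      fun w => w.im * √(min (edgeDist ν ζm w) (edgeDist ν ζp w)) := by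
  have hedges := hm.bianeMap_re_le_bianeMap_re hp
  have hleft : (fun w => (bianeMap ν w).im)
      =Θ[l ⊓ 𝓟 {w | (bianeMap ν w).re ≤ (bianeMap ν ζm).re}]
        fun w => w.im * √(min (edgeDist ν ζm w) (edgeDist ν ζp w)) := by
    refine (hm.isTheta_bianeMap_im_mul_sqrt (hl.filter_mono inf_le_left)
      (mem_inf_of_right (mem_principal_self _))).trans_eventuallyEq ?_
    filter_upwards [mem_inf_of_right (mem_principal_self _)] with w hw
    rw [min_edgeDist_eq_left hedges hw]
  have hright : (fun w => (bianeMap ν w).im)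
      =Θ[l ⊓ 𝓟 {w | (bianeMap ν ζp).re ≤ (bianeMap ν w).re}]
        fun w => w.im * √(min (edgeDist ν ζm w) (edgeDist ν ζp w)) := by
    refine (hp.isTheta_bianeMap_im_mul_sqrt (hl.filter_mono inf_le_left)
      (mem_inf_of_right (mem_principal_self _))).trans_eventuallyEq ?_
    filter_upwards [mem_inf_of_right (mem_principal_self _)] with w hw
    rw [min_edgeDist_eq_right hedges hw]
  have hcover : l ≤ l ⊓ 𝓟 {w | (bianeMap ν w).re ≤ (bianeMap ν ζm).re} ⊔
      l ⊓ 𝓟 {w | (bianeMap ν ζp).re ≤ (bianeMap ν w).re} := by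
    rw [← inf_sup_left, sup_principal]
    refine le_inf le_rfl (le_principal_iff.2 (hout.mono fun w hw => ?_))
    exact (not_and_or.1 hw).imp (fun h => (not_le.1 h).le) fun h => (not_le.1 h).le
  exact (hleft.sup hright).mono hcover

lemma isTheta_im_div_sqrt_min_edgeDist (hm : IsLeftEdge ν a ζm) (hp : IsRightEdge ν b ζp)
    (hl : ∀ᶠ w in l, w ∈ bianeDomain ν r)
    (hout : ∀ᶠ w in l, (bianeMap ν w).re ∉ Icc (bianeMap ν ζm).re (bianeMap ν ζp).re) :
    im =Θ[l] fun w => (bianeMap ν w).im / √(min (edgeDist ν ζm w) (edgeDist ν ζp w)) := by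
  refine EventuallyEq.trans_isTheta (hl.mono fun w hw => ?_)
    ((isTheta_bianeMap_im_mul_sqrt_min_edgeDist hm hp hl hout).div (isTheta_refl _ l)).symm
  have hpos (ζ : ℝ) : 0 < edgeDist ν ζ w := add_pos_of_nonneg_of_pos (abs_nonneg _) hw.2.2
  exact (mul_div_cancel_right₀ _ (Real.sqrt_pos.2 (lt_min (hpos ζm) (hpos ζp))).ne').symm

end TwoEdges

section StieltjesTransform

variable {ν : Measure ℝ} [IsFiniteMeasure ν] {a b ζm ζp : ℝ}

lemma eventually_forall_resolventTransform_im_bounds_of_mem (hm : IsLeftEdge ν a ζm)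
    (hp : IsRightEdge ν b ζp)
    (hedge : ∀ x ∈ Icc a b, 1 < ∫⁻ v, (ENNReal.ofReal ((v - x) ^ 2))⁻¹ ∂ν) (r : ℝ) :
    ∀ᶠ C in atTop, ∀ w ∈ bianeDomain ν r,
      (bianeMap ν w).re ∈ Icc (bianeMap ν ζm).re (bianeMap ν ζp).re →
        C⁻¹ * √(min (edgeDist ν ζm w) (edgeDist ν ζp w)) ≤ (resolventTransform ν w).im ∧
        (resolventTransform ν w).im ≤ C * √(min (edgeDist ν ζm w) (edgeDist ν ζp w)) := by
  have := hp.neZero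
  let S := bianeDomain ν r ∩
    {w | (bianeMap ν w).re ∈ Icc (bianeMap ν ζm).re (bianeMap ν ζp).re}
  have hS : ∀ᶠ w in 𝓟 S, w ∈ bianeDomain ν r := eventually_principal.2 fun w hw => hw.1
  have hTheta := ((isTheta_resolventTransform_im (ν := ν) r).mono (le_principal_iff.2 hS)).trans
    (isTheta_im_sqrt_min_edgeDist hm hp hedge hS (eventually_principal.2 fun w hw => hw.2))
  filter_upwards [eventually_forall_le_of_isTheta_principal
    (fun w hw => resolventTransform_im_nonneg hw.1.1) (fun w _ => Real.sqrt_nonneg _) hTheta]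
    with C hC w hw hin using hC w ⟨hw, hin⟩

lemma eventually_forall_resolventTransform_im_bounds_of_notMem (hm : IsLeftEdge ν a ζm)
    (hp : IsRightEdge ν b ζp) (r : ℝ) :
    ∀ᶠ C in atTop, ∀ w ∈ bianeDomain ν r,
      (bianeMap ν w).re ∉ Icc (bianeMap ν ζm).re (bianeMap ν ζp).re →
        C⁻¹ * ((bianeMap ν w).im / √(min (edgeDist ν ζm w) (edgeDist ν ζp w))) ≤
          (resolventTransform ν w).im ∧
        (resolventTransform ν w).im ≤
          C * ((bianeMap ν w).im / √(min (edgeDist ν ζm w) (edgeDist ν ζp w))) := by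
  have := hp.neZero
  let S := bianeDomain ν r ∩
    {w | (bianeMap ν w).re ∉ Icc (bianeMap ν ζm).re (bianeMap ν ζp).re}
  have hS : ∀ᶠ w in 𝓟 S, w ∈ bianeDomain ν r := eventually_principal.2 fun w hw => hw.1
  have hTheta := ((isTheta_resolventTransform_im (ν := ν) r).mono (le_principal_iff.2 hS)).trans
    (isTheta_im_div_sqrt_min_edgeDist hm hp hS (eventually_principal.2 fun w hw => hw.2))
  filter_upwards [eventually_forall_le_of_isTheta_principal
    (fun w hw => resolventTransform_im_nonneg hw.1.1)
    (fun w hw => div_nonneg hw.1.2.2.le (Real.sqrt_nonneg _)) hTheta]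
    with C hC w hw hout using hC w ⟨hw, hout⟩

end StieltjesTransform

section SelfConsistentEquation

variable {ν : Measure ℝ} {z M : ℂ}

lemma resolventTransform_add_eq_of_eq_integral (hM : M = ∫ v : ℝ, ((v : ℂ) - z - M)⁻¹ ∂ν) :
    resolventTransform ν (z + M) = M := by
  rw [resolventTransform_eq_integral]
  simpa only [sub_sub] using hM.symm

lemma bianeMap_add_eq_of_eq_integral (hM : M = ∫ v : ℝ, ((v : ℂ) - z - M)⁻¹ ∂ν) :
    bianeMap ν (z + M) = z := by
  rw [bianeMap, resolventTransform_add_eq_of_eq_integral hM, add_sub_cancel_right]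

lemma add_mem_bianeDomain_of_eq_integral [IsFiniteMeasure ν] {R : ℝ} (hz : 0 < z.im) (hR : ‖z‖ ≤ R)
    (hM_im : 0 ≤ M.im) (hM : M = ∫ v : ℝ, ((v : ℂ) - z - M)⁻¹ ∂ν) :
    z + M ∈ bianeDomain ν (R + (1 + ν.real univ) / 2) := by
  have hw : 0 < (z + M).im := add_pos_of_pos_of_nonneg hz hM_im
  have him : 0 < (bianeMap ν (z + M)).im := by rwa [bianeMap_add_eq_of_eq_integral hM]
  have hM_norm := norm_resolventTransform_le hw (resolventMass_one_lt_one hw him).le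
  rw [resolventTransform_add_eq_of_eq_integral hM] at hM_norm
  exact ⟨hw, (norm_add_le z M).trans (add_le_add hR hM_norm), him⟩

lemma min_edgeDist_add_of_eq_integral (hM : M = ∫ v : ℝ, ((v : ℂ) - z - M)⁻¹ ∂ν) (ζm ζp : ℝ) :
    min (edgeDist ν ζm (z + M)) (edgeDist ν ζp (z + M)) =
      min |z.re - (bianeMap ν ζm).re| |z.re - (bianeMap ν ζp).re| + z.im := by
  rw [edgeDist, edgeDist, bianeMap_add_eq_of_eq_integral hM, min_add_add_right]

end SelfConsistentEquation

theorem stmt_8_general (ν : Measure ℝ) [IsFiniteMeasure ν] (a b : ℝ) (hsupp : ν (Icc a b)ᶜ = 0)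
    (hedge : ∀ x ∈ Icc a b, 1 < ∫⁻ v, (ENNReal.ofReal ((v - x) ^ 2))⁻¹ ∂ν)
    (ζm ζp : ℝ) (hζm_out : ζm < a) (hζp_out : b < ζp)
    (hζm : ∫ v, ((v - ζm) ^ 2)⁻¹ ∂ν = 1) (hζp : ∫ v, ((v - ζp) ^ 2)⁻¹ ∂ν = 1)
    (Lm Lp : ℝ) (hLm : Lm = ζm - ∫ v, (v - ζm)⁻¹ ∂ν) (hLp : Lp = ζp - ∫ v, (v - ζp)⁻¹ ∂ν)
    (E₀ η₀ : ℝ) :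
    ∃ C : ℝ, 1 < C ∧ ∀ z M : ℂ, |z.re| ≤ E₀ → 0 < z.im → z.im ≤ η₀ → 0 ≤ M.im →
      M = ∫ v : ℝ, ((v : ℂ) - z - M)⁻¹ ∂ν →
        (z.re ∈ Icc Lm Lp →
          C⁻¹ * √(min |z.re - Lm| |z.re - Lp| + z.im) ≤ M.im ∧
          M.im ≤ C * √(min |z.re - Lm| |z.re - Lp| + z.im)) ∧
        (z.re ∉ Icc Lm Lp →
          C⁻¹ * (z.im / √(min |z.re - Lm| |z.re - Lp| + z.im)) ≤ M.im ∧
          M.im ≤ C * (z.im / √(min |z.re - Lm| |z.re - Lp| + z.im))) := by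
  have hmem : ∀ᵐ v ∂ν, v ∈ Icc a b := mem_ae_iff.2 hsupp
  have hm : IsLeftEdge ν a ζm := ⟨hmem.mono fun v hv => hv.1, hζm_out, hζm⟩
  have hp : IsRightEdge ν b ζp := ⟨hmem.mono fun v hv => hv.2, hζp_out, hζp⟩
  have hLm' : (bianeMap ν ζm).re = Lm := by rw [bianeMap_ofReal, ofReal_re, hLm]
  have hLp' : (bianeMap ν ζp).re = Lp := by rw [bianeMap_ofReal, ofReal_re, hLp]
  let r := E₀ + η₀ + (1 + ν.real univ) / 2
  obtain ⟨C, hC, hin, hout⟩ := ((eventually_gt_atTop 1).and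
    ((eventually_forall_resolventTransform_im_bounds_of_mem hm hp hedge r).and
      (eventually_forall_resolventTransform_im_bounds_of_notMem hm hp r))).exists
  refine ⟨C, hC, fun z M hre him him_le hM_im hM => ?_⟩
  have hz : ‖z‖ ≤ E₀ + η₀ :=
    (norm_le_abs_re_add_abs_im z).trans (add_le_add hre ((abs_of_pos him).trans_le him_le))
  have hw := add_mem_bianeDomain_of_eq_integral him hz hM_im hM
  specialize hin _ hw
  specialize hout _ hw
  simp only [min_edgeDist_add_of_eq_integral hM, bianeMap_add_eq_of_eq_integral hM,
    resolventTransform_add_eq_of_eq_integral hM, hLm', hLp'] at hin hout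
  exact ⟨hin, hout⟩

/-- Under the standing assumptions there is `C > 1` such that for all
`z = E + iη ∈ D′`: if `E ∈ [L−, L+]` then `C⁻¹ √(κ_E + η) ≤ Im m(z) ≤ C √(κ_E + η)`,
while if `E ∉ [L−, L+]` then `C⁻¹ η/√(κ_E + η) ≤ Im m(z) ≤ C η/√(κ_E + η)`. -/
theorem stmt_8 (ν : Measure ℝ) [IsProbabilityMeasure ν]
    -- `[a,b]` is the smallest closed interval containing `supp ν`
    (a b : ℝ) (hab : a ≤ b)
    (hsupp : ν (Set.Icc a b)ᶜ = 0)
    (hmin : ∀ a' b' : ℝ, ν (Set.Icc a' b')ᶜ = 0 → Set.Icc a b ⊆ Set.Icc a' b')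
    -- `ν` is centered
    (hcent : ∫ v, v ∂ν = 0)
    -- edge assumption: `∫ dν(v)/(v − x)² ≥ 1 + ϖ` on `[a,b]` (value possibly `+∞`)
    (ϖ : ℝ) (hϖ : 0 < ϖ)
    (hedge : ∀ x ∈ Set.Icc a b,
      ENNReal.ofReal (1 + ϖ) ≤ ∫⁻ v, (ENNReal.ofReal ((v - x) ^ 2))⁻¹ ∂ν)
    -- `m` is the Stieltjes transform of the deformed semicircle law
    (m : ℂ → ℂ)
    (hholo : DifferentiableOn ℂ m {z : ℂ | 0 < z.im})
    (him : ∀ z : ℂ, 0 < z.im → 0 ≤ (m z).im)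
    (heq : ∀ z : ℂ, 0 < z.im → m z = ∫ v : ℝ, ((v : ℂ) - z - m z)⁻¹ ∂ν)
    (hbdd : ∀ E : ℝ, IsBoundedUnder (· ≤ ·) (nhdsWithin (0:ℝ) (Set.Ioi 0))
      (fun η : ℝ => (m (E + η * Complex.I)).im))
    -- `ζ− < ζ+` are the two real solutions of `∫ dν(v)/(v − ζ)² = 1`, outside `[a,b]`
    (ζm ζp : ℝ) (hζζ : ζm < ζp)
    (hζm_out : ζm < a) (hζp_out : b < ζp)
    (hζm : ∫ v, ((v - ζm) ^ 2)⁻¹ ∂ν = 1)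
    (hζp : ∫ v, ((v - ζp) ^ 2)⁻¹ ∂ν = 1)
    -- `L± := ζ± − ∫ dν(v)/(v − ζ±)` are the edges of the support of `ρ_fc`
    (Lm Lp : ℝ)
    (hLm : Lm = ζm - ∫ v, (v - ζm)⁻¹ ∂ν)
    (hLp : Lp = ζp - ∫ v, (v - ζp)⁻¹ ∂ν) :
    ∃ C : ℝ, 1 < C ∧
      ∀ z : ℂ, |z.re| ≤ 1 + max |Lm| Lp → 0 < z.im → z.im ≤ 3 →
        (z.re ∈ Set.Icc Lm Lp →
          C⁻¹ * Real.sqrt (min |z.re - Lm| |z.re - Lp| + z.im) ≤ (m z).im ∧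
          (m z).im ≤ C * Real.sqrt (min |z.re - Lm| |z.re - Lp| + z.im)) ∧
        (z.re ∉ Set.Icc Lm Lp →
          C⁻¹ * (z.im / Real.sqrt (min |z.re - Lm| |z.re - Lp| + z.im)) ≤ (m z).im ∧
          (m z).im ≤ C * (z.im / Real.sqrt (min |z.re - Lm| |z.re - Lp| + z.im))) := by
  obtain ⟨C, hC, hbounds⟩ := stmt_8_general ν a b hsupp
    (fun x hx => lt_of_lt_of_le (ENNReal.one_lt_ofReal.2 (by linarith)) (hedge x hx))
    ζm ζp hζm_out hζp_out hζm hζp Lm Lp hLm hLp (1 + max |Lm| Lp) 3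
  exact ⟨C, hC, fun z hre h_im hle => hbounds z (m z) hre h_im hle (him z h_im) (heq z h_im)⟩
end

section
/- Under the standing assumptions on ν and on the solution m of the functional equation, there exist r > 0, a constant c₊ > 0, and functions B, C analytic on the complex disc {|w| < r}, real-valued on the reals, with B(0) = 0, c₊ + B(x) > 0 and C(x) < 0 for all real x ∈ (−r, r), such that for every E ∈ ℝ with |E − L+| < r the limits lim_{η↓0} Im m(E+iη) and lim_{η↓0} Re m(E+iη) exist and: if E ≤ L+, then lim_{η↓0} Im m(E+iη) = √(L+ − E) · (c₊ + B(−(L+ − E))) and lim_{η↓0} Re m(E+iη) = C(−(L+ − E)); if E ≥ L+, then lim_{η↓0} Im m(E+iη) = 0 and lim_{η↓0} Re m(E+iη) = √(E − L+) · (c₊ + B(E − L+)) + C(E − L+). -/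
open MeasureTheory Filter
open scoped ComplexConjugate Topology

/-!
Let `F ζ = ζ - ∫ dν(v) / (v - ζ)`. The functional equation says that `F (z + m z) = z`, and `F` is
injective on the points of the upper half plane that it maps into the upper half plane. Hence
`z + m z` can be recognised by exhibiting any such preimage of `z`.

Since `∫ dν(v) / (v - ζ₊)² = 1`, the derivative of `F` vanishes at `ζ₊`, and
`F ζ = L₊ + (ζ - ζ₊)² K ζ` with `K` analytic and positive at `ζ₊`. Inverting `(ζ - ζ₊) √(K ζ)`
gives an analytic `h`, real on the reals and with `h' 0 > 0`, such that `F (h w) = L₊ + w²`. For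
`u` in the upper half plane near `0`, `h (√u)` is thus the preimage of `L₊ + u`, so
`L₊ + u + m (L₊ + u) = h (√u)`. The even and odd parts of `h` are functions of `w²`, and this
becomes `m (L₊ + u) = √u B u + C u`, in which one lets `u` tend to the real axis.
-/

lemma complexSqrt_sq (z : ℂ) : z.sqrt ^ 2 = z :=
  Complex.cpow_nat_inv_pow z two_ne_zero

lemma complexSqrt_of_im_nonneg {z : ℂ} (hz : 0 ≤ z.im) :
    z.sqrt = √((‖z‖ + z.re) / 2) + √((‖z‖ - z.re) / 2) * Complex.I := by
  rw [Complex.sqrt_eq_real_add_ite, if_pos hz, one_mul]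

lemma complexSqrt_ofReal (x : ℝ) : (x : ℂ).sqrt = √x + √(-x) * Complex.I := by
  rw [complexSqrt_of_im_nonneg (Complex.ofReal_im x).ge, Complex.norm_real, Real.norm_eq_abs,
    Complex.ofReal_re]
  rcases le_total 0 x with hx | hx
  · simp [abs_of_nonneg hx, Real.sqrt_eq_zero_of_nonpos (neg_nonpos.2 hx)]
  · have hsum : (-x - x) / 2 = -x := by ring
    simp [abs_of_nonpos hx, Real.sqrt_eq_zero_of_nonpos hx, hsum]

lemma complexSqrt_im_pos {z : ℂ} (hz : 0 < z.im) : 0 < z.sqrt.im := by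
  have hlt : z.re < ‖z‖ := (le_abs_self _).trans_lt (Complex.abs_re_lt_norm.2 hz.ne')
  rw [complexSqrt_of_im_nonneg hz.le]
  simpa using hlt

lemma continuousOn_complexSqrt : ContinuousOn Complex.sqrt {z | 0 ≤ z.im} := by
  refine ContinuousOn.congr (Continuous.continuousOn ?_) fun z hz => complexSqrt_of_im_nonneg hz
  fun_prop

lemma tendsto_complexSqrt_nhds_zero : Tendsto Complex.sqrt (𝓝 0) (𝓝 0) := by
  have := Complex.continuousAt_cpow_const_of_re_pos (z := 0) (w := 2⁻¹) (by simp) (by norm_num)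
  rwa [ContinuousAt, Complex.zero_cpow (by norm_num)] at this

lemma differentiableAt_complexSqrt {z : ℂ} (hz : z ∈ Complex.slitPlane) :
    DifferentiableAt ℂ Complex.sqrt z :=
  differentiableAt_id.cpow_const hz

lemma analyticAt_dslope {𝕜 E : Type*} [NontriviallyNormedField 𝕜] [NormedAddCommGroup E]
    [NormedSpace 𝕜 E] {f : 𝕜 → E} {x : 𝕜} (hf : AnalyticAt 𝕜 f x) :
    AnalyticAt 𝕜 (dslope f x) x := by
  obtain ⟨p, hp⟩ := hf
  exact hp.has_fpower_series_dslope_fslope.analyticAt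

section EvenOddDecomposition

variable {f h A B : ℂ → ℂ}

lemma apply_eq_of_even_of_sq_eq_sq (hf : f.Even) {w z : ℂ} (hwz : w ^ 2 = z ^ 2) : f w = f z := by
  rcases sq_eq_sq_iff_eq_or_eq_neg.1 hwz with rfl | rfl
  exacts [rfl, hf z]

lemma differentiableAt_comp_complexSqrt_of_even (hf : f.Even) {u : ℂ} (hu : u ≠ 0)
    (hd : ∀ w, w ^ 2 = u → DifferentiableAt ℂ f w) :
    DifferentiableAt ℂ (fun x => f x.sqrt) u := by
  rcases Complex.mem_slitPlane_or_neg_mem_slitPlane hu with hs | hs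
  · exact (hd _ (complexSqrt_sq u)).comp u (differentiableAt_complexSqrt hs)
  · -- On the branch cut of `√u`, evenness lets us use the other square root `i √(-u)`.
    have hsq (x : ℂ) : (Complex.I * (-x).sqrt) ^ 2 = x := by
      rw [mul_pow, complexSqrt_sq, Complex.I_sq, neg_one_mul, neg_neg]
    have heq : (fun x : ℂ => f x.sqrt) = fun x => f (Complex.I * (-x).sqrt) := funext fun x =>
      apply_eq_of_even_of_sq_eq_sq hf ((complexSqrt_sq x).trans (hsq x).symm)
    rw [heq]
    have hsqrt : DifferentiableAt ℂ (fun x : ℂ => Complex.I * (-x).sqrt) u :=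
      ((differentiableAt_complexSqrt hs).comp u differentiableAt_id.neg).const_mul _
    exact (hd _ (hsq u)).comp u hsqrt

lemma exists_analyticAt_comp_sq_of_even (hf : f.Even) (hfa : AnalyticAt ℂ f 0) :
    ∃ A : ℂ → ℂ, AnalyticAt ℂ A 0 ∧ ∀ w, f w = A (w ^ 2) := by
  refine ⟨fun u => f u.sqrt, ?_, fun w =>
    apply_eq_of_even_of_sq_eq_sq hf (complexSqrt_sq (w ^ 2)).symm⟩
  refine Complex.analyticAt_of_differentiable_on_punctured_nhds_of_continuousAt ?_ ?_
  · obtain ⟨r, hr, hball⟩ := Metric.eventually_nhds_iff_ball.1 hfa.eventually_analyticAt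
    filter_upwards [self_mem_nhdsWithin,
      nhdsWithin_le_nhds (Metric.ball_mem_nhds 0 (sq_pos_of_pos hr))] with u hu hur
    refine differentiableAt_comp_complexSqrt_of_even hf hu fun w hw =>
      (hball w ?_).differentiableAt
    rw [mem_ball_zero_iff, ← hw, norm_pow] at hur
    exact mem_ball_zero_iff.2 (lt_of_pow_lt_pow_left₀ 2 hr.le hur)
  · have := hfa.continuousAt.tendsto.comp tendsto_complexSqrt_nhds_zero
    simpa [ContinuousAt, Function.comp_def] using this

lemma exists_even_odd_decomposition (hh : AnalyticAt ℂ h 0) :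
    ∃ A B : ℂ → ℂ, AnalyticAt ℂ A 0 ∧ AnalyticAt ℂ B 0 ∧ ∀ w, h w = A (w ^ 2) + w * B (w ^ 2) := by
  have hneg : AnalyticAt ℂ (fun w => h (-w)) 0 :=
    AnalyticAt.fun_comp (by simpa using hh) analyticAt_id.neg
  set e : ℂ → ℂ := fun w => (h w + h (-w)) / 2 with he
  set o : ℂ → ℂ := fun w => (h w - h (-w)) / 2 with ho
  have hodd (w : ℂ) : o (-w) = -o w := by simp only [ho, neg_neg]; ring
  have hslope : (dslope o 0).Even := fun w => by
    rcases eq_or_ne w 0 with rfl | hw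
    · rw [neg_zero]
    · rw [dslope_of_ne _ hw, dslope_of_ne _ (neg_ne_zero.2 hw), slope_def_field, slope_def_field,
        hodd, show o 0 = 0 by simp [ho]]
      ring
  obtain ⟨A, hA, hAe⟩ := exists_analyticAt_comp_sq_of_even (f := e)
    (fun w => by simp only [he, neg_neg, add_comm]) ((hh.add hneg).div_const)
  obtain ⟨B, hB, hBo⟩ := exists_analyticAt_comp_sq_of_even hslope
    (analyticAt_dslope (hh.sub hneg).div_const)
  refine ⟨A, B, hA, hB, fun w => ?_⟩
  have hmul : w * dslope o 0 w = o w := by simpa [ho] using sub_smul_dslope o 0 w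
  rw [← hAe, ← hBo, hmul]
  simp only [he, ho]
  ring

lemma eventually_nhds_zero_of_sq {p : ℂ → Prop} (hp : ∀ᶠ w in 𝓝 (0 : ℂ), p (w ^ 2)) :
    ∀ᶠ u in 𝓝 (0 : ℂ), p u :=
  (tendsto_complexSqrt_nhds_zero.eventually hp).mono fun u hu => complexSqrt_sq u ▸ hu

lemma conj_symm_even_part (hdec : ∀ w, h w = A (w ^ 2) + w * B (w ^ 2))
    (hconj : ∀ᶠ w in 𝓝 0, h (conj w) = conj (h w)) :
    ∀ᶠ u in 𝓝 0, A (conj u) = conj (A u) := by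
  have hneg : ∀ᶠ w in 𝓝 0, h (conj (-w)) = conj (h (-w)) :=
    (continuous_neg.tendsto' (0 : ℂ) 0 neg_zero).eventually hconj
  refine eventually_nhds_zero_of_sq ?_
  filter_upwards [hconj, hneg] with w h₁ h₂
  simp only [hdec, map_add, map_mul, map_neg, neg_sq, ← map_pow] at h₁ h₂
  linear_combination (h₁ + h₂) / 2

lemma conj_symm_odd_part (hB : ContinuousAt B 0) (hdec : ∀ w, h w = A (w ^ 2) + w * B (w ^ 2))
    (hconj : ∀ᶠ w in 𝓝 0, h (conj w) = conj (h w)) :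
    ∀ᶠ u in 𝓝 0, B (conj u) = conj (B u) := by
  have hneg : ∀ᶠ w in 𝓝 0, h (conj (-w)) = conj (h (-w)) :=
    (continuous_neg.tendsto' (0 : ℂ) 0 neg_zero).eventually hconj
  have hpunct : ∀ᶠ u in 𝓝 0, u ≠ 0 → B (conj u) = conj (B u) := by
    refine eventually_nhds_zero_of_sq ?_
    filter_upwards [hconj, hneg] with w h₁ h₂ hw
    have hw' : conj w ≠ 0 := by simpa using hw
    simp only [hdec, map_add, map_mul, map_neg, neg_sq, ← map_pow] at h₁ h₂
    exact mul_left_cancel₀ hw' (by linear_combination (h₁ - h₂) / 2)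
  have hBc : ContinuousAt (fun u => B (conj u)) 0 :=
    ContinuousAt.comp' (by simpa using hB) Complex.continuous_conj.continuousAt
  exact (hBc.eventuallyEq_nhds_iff_eventuallyEq_nhdsNE
    (Complex.continuous_conj.continuousAt.comp hB)).1 (eventually_nhdsWithin_iff.2 hpunct)

lemma hasDerivAt_zero_odd_part (hA : DifferentiableAt ℂ A 0) (hB : DifferentiableAt ℂ B 0)
    (hdec : ∀ w, h w = A (w ^ 2) + w * B (w ^ 2)) : HasDerivAt h (B 0) 0 := by
  have hsq : HasDerivAt (fun w : ℂ => w ^ 2) 0 0 := by simpa using hasDerivAt_pow 2 (0 : ℂ)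
  have hA' := hA.hasDerivAt.comp_of_eq 0 hsq (by simp)
  have hB' := hB.hasDerivAt.comp_of_eq 0 hsq (by simp)
  rw [show h = _ from funext hdec]
  exact (hA'.add ((hasDerivAt_id 0).mul hB')).congr_deriv (by simp)

end EvenOddDecomposition

section LocalInverse

lemma tendsto_conj_nhds_ofReal (x : ℝ) : Tendsto (fun z : ℂ => conj z) (𝓝 x) (𝓝 x) :=
  Complex.continuous_conj.tendsto' _ _ (Complex.conj_ofReal x)

lemma exists_conj_symm_local_inverse {g : ℂ → ℂ} {x : ℝ} (hg : AnalyticAt ℂ g x)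
    (hconj : ∀ᶠ ζ in 𝓝 (x : ℂ), g (conj ζ) = conj (g ζ)) (hderiv : deriv g x ≠ 0) :
    ∃ h : ℂ → ℂ, AnalyticAt ℂ h (g x) ∧ h (g x) = x ∧ HasDerivAt h (deriv g x)⁻¹ (g x) ∧
      (∀ᶠ w in 𝓝 (g x), g (h w) = w) ∧ ∀ᶠ w in 𝓝 (g x), h (conj w) = conj (h w) := by
  have hstrict := hg.hasStrictDerivAt
  set h := hstrict.localInverse _ _ _ hderiv
  have hinv : ∀ᶠ w in 𝓝 (g x), g (h w) = w := hstrict.eventually_right_inverse hderiv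
  have hx : h (g x) = x := (hstrict.eventually_left_inverse hderiv).self_of_nhds
  have hh : HasStrictDerivAt h (deriv g x)⁻¹ (g x) := hstrict.to_localInverse hderiv
  have hcont : Tendsto h (𝓝 (g x)) (𝓝 x) := by
    simpa only [ContinuousAt, hx] using hh.hasDerivAt.continuousAt
  refine ⟨h, hg.analyticAt_localInverse hderiv, hx, hh.hasDerivAt, hinv, ?_⟩
  filter_upwards [hinv, hcont.eventually hconj, ((tendsto_conj_nhds_ofReal x).comp hcont).eventually
    (hstrict.eventually_left_inverse hderiv)] with w hw hgw hleft
  rwa [Function.comp_apply, hgw, hw] at hleft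

-- By strict differentiability, `h w - h (conj w) = 2i Im (h w)` is close to `2i c Im w`.
lemma eventually_im_pos_of_conj_symm {h : ℂ → ℂ} {x c : ℝ} (hc : 0 < c)
    (hderiv : HasStrictDerivAt h c x) (hconj : ∀ᶠ w in 𝓝 (x : ℂ), h (conj w) = conj (h w)) :
    ∀ᶠ w in 𝓝 (x : ℂ), 0 < w.im → 0 < (h w).im := by
  have hpair : Tendsto (fun w : ℂ => (w, conj w)) (𝓝 x) (𝓝 ((x : ℂ), (x : ℂ))) :=
    tendsto_id.prodMk_nhds (tendsto_conj_nhds_ofReal x)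
  filter_upwards [hconj,
    hpair.eventually (hderiv.hasStrictFDerivAt.isLittleO.def (half_pos hc))] with w hw hbound hpos
  have hdiff : h w - conj (h w) - (w - conj w) * c =
      ((2 * ((h w).im - c * w.im) : ℝ) : ℂ) * Complex.I := by
    rw [Complex.sub_conj, Complex.sub_conj]
    push_cast
    ring
  simp only [ContinuousLinearMap.toSpanSingleton_apply, smul_eq_mul] at hbound
  rw [hw, hdiff, Complex.sub_conj, norm_mul, norm_mul, Complex.norm_I, mul_one, mul_one,
    Complex.norm_real, Complex.norm_real, Real.norm_eq_abs, Real.norm_of_nonneg (by positivity)]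
    at hbound
  nlinarith [(abs_le.1 hbound).1, mul_pos hc hpos]

lemma complexSqrt_conj {z : ℂ} (hz : z ∈ Complex.slitPlane) : (conj z).sqrt = conj z.sqrt := by
  rw [Complex.sqrt, Complex.conj_cpow _ _ (Complex.slitPlane_arg_ne_pi hz), map_inv₀, map_ofNat,
    Complex.sqrt]

lemma exists_sqrt_parametrization {K : ℂ → ℂ} {x k : ℝ} (hK : AnalyticAt ℂ K x)
    (hconj : ∀ᶠ ζ in 𝓝 (x : ℂ), K (conj ζ) = conj (K ζ)) (hk : 0 < k) (hKx : K x = k) :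
    ∃ h : ℂ → ℂ, ∃ c : ℝ, 0 < c ∧ AnalyticAt ℂ h 0 ∧ h 0 = x ∧ HasDerivAt h c 0 ∧
      (∀ᶠ w in 𝓝 0, h (conj w) = conj (h w)) ∧
      ∀ᶠ w in 𝓝 0, (h w - x) ^ 2 * K (h w) = w ^ 2 := by
  have hslit : K x ∈ Complex.slitPlane := by
    rw [hKx]
    exact Complex.ofReal_mem_slitPlane.2 hk
  set g : ℂ → ℂ := fun ζ => (ζ - x) * (K ζ).sqrt with hgdef
  have hsqrt : AnalyticAt ℂ (fun ζ => (K ζ).sqrt) x := hK.cpow analyticAt_const hslit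
  have hg : AnalyticAt ℂ g x := (analyticAt_id.sub analyticAt_const).mul hsqrt
  have hgx : g x = 0 := by simp [hgdef]
  have hgconj : ∀ᶠ ζ in 𝓝 (x : ℂ), g (conj ζ) = conj (g ζ) := by
    filter_upwards [hconj, hK.continuousAt (Complex.isOpen_slitPlane.mem_nhds hslit)]
      with ζ hζ hmem
    simp only [hgdef, hζ, complexSqrt_conj hmem, map_mul, map_sub, Complex.conj_ofReal]
  have hgderiv : deriv g x = (√k : ℂ) := by
    have hmul : HasDerivAt g _ x :=
      ((hasDerivAt_id (x : ℂ)).sub_const (x : ℂ)).mul hsqrt.differentiableAt.hasDerivAt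
    simpa [hKx, complexSqrt_ofReal, Real.sqrt_eq_zero_of_nonpos (neg_nonpos.2 hk.le)]
      using hmul.deriv
  have hsqrtk : 0 < √k := Real.sqrt_pos.2 hk
  obtain ⟨h, hh, hx, hderiv, hinv, hhconj⟩ := exists_conj_symm_local_inverse hg hgconj
    (hgderiv ▸ Complex.ofReal_ne_zero.2 hsqrtk.ne')
  rw [hgx] at hh hx hderiv hinv hhconj
  rw [hgderiv, ← Complex.ofReal_inv] at hderiv
  refine ⟨h, (√k)⁻¹, inv_pos.2 hsqrtk, hh, hx, hderiv, hhconj, hinv.mono fun w hw => ?_⟩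
  rw [← complexSqrt_sq (K (h w)), ← mul_pow]
  exact congrArg (· ^ 2) hw

end LocalInverse

/-- The Stieltjes transform `ζ ↦ ∫ dν(v) / (v - ζ)` of a measure on the real line, with the sign
convention making it map the upper half plane to itself. -/
noncomputable def stieltjesTransform (ν : Measure ℝ) (ζ : ℂ) : ℂ :=
  ∫ v : ℝ, ((v : ℂ) - ζ)⁻¹ ∂ν

/-- The left inverse `ζ ↦ ζ - ∫ dν(v) / (v - ζ)` of the subordination function `z ↦ z + m z`:
the functional equation for `m` says that it maps `z + m z` to `z`. -/
noncomputable def invSubordination (ν : Measure ℝ) (ζ : ℂ) : ℂ :=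
  ζ - stieltjesTransform ν ζ

/-- The measure `dν(v) / (v - x)²`, whose Stieltjes transform is the second-order Taylor remainder
at `x` of the one of `ν`. Since `0⁻¹ = 0`, it has no mass at `x`. -/
noncomputable def invSqTilt (ν : Measure ℝ) (x : ℝ) : Measure ℝ :=
  ν.withDensity fun v => ENNReal.ofReal ((v - x) ^ 2)⁻¹

section StieltjesTransform

variable {ν : Measure ℝ} {b x δ : ℝ} {ζ : ℂ}

lemma abs_im_le_norm_ofReal_sub (v : ℝ) (ζ : ℂ) : |ζ.im| ≤ ‖(v : ℂ) - ζ‖ := by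
  simpa using Complex.abs_im_le_norm ((v : ℂ) - ζ)

lemma re_sub_le_norm_ofReal_sub {v : ℝ} (hv : v ≤ b) (ζ : ℂ) : ζ.re - b ≤ ‖(v : ℂ) - ζ‖ := by
  have h := (neg_le_abs _).trans (Complex.abs_re_le_norm ((v : ℂ) - ζ))
  simp only [Complex.sub_re, Complex.ofReal_re] at h
  linarith

lemma stieltjesTransform_conj (ν : Measure ℝ) (ζ : ℂ) :
    stieltjesTransform ν (conj ζ) = conj (stieltjesTransform ν ζ) := by
  simp [stieltjesTransform, ← integral_conj]

lemma stieltjesTransform_ofReal (ν : Measure ℝ) (x : ℝ) :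
    stieltjesTransform ν x = (∫ v, (v - x)⁻¹ ∂ν : ℝ) := by
  simp [stieltjesTransform, ← integral_complex_ofReal]

lemma memLp_inv_sub [IsFiniteMeasure ν] (hδ : 0 < δ) (hζ : ∀ᵐ v : ℝ ∂ν, δ ≤ ‖(v : ℂ) - ζ‖)
    (p : ENNReal) : MemLp (fun v : ℝ => ((v : ℂ) - ζ)⁻¹) p ν := by
  refine MemLp.of_bound (Measurable.aestronglyMeasurable (by fun_prop)) δ⁻¹ (hζ.mono fun v hv => ?_)
  rw [norm_inv]
  exact inv_anti₀ hδ hv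

lemma differentiableAt_stieltjesTransform [IsFiniteMeasure ν] (hδ : 0 < δ)
    (hζ : ∀ᵐ v : ℝ ∂ν, δ ≤ ‖(v : ℂ) - ζ‖) : DifferentiableAt ℂ (stieltjesTransform ν) ζ := by
  have hball : ∀ᵐ v : ℝ ∂ν, ∀ z ∈ Metric.ball ζ (δ / 2), δ / 2 ≤ ‖(v : ℂ) - z‖ := by
    filter_upwards [hζ] with v hv z hz
    have htri := norm_sub_le_norm_sub_add_norm_sub (v : ℂ) z ζ
    rw [mem_ball_iff_norm] at hz
    linarith
  refine (hasDerivAt_integral_of_dominated_loc_of_deriv_le (s := Metric.ball ζ (δ / 2))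
    (F := fun z (v : ℝ) => ((v : ℂ) - z)⁻¹) (F' := fun z (v : ℝ) => (((v : ℂ) - z) ^ 2)⁻¹)
    (bound := fun _ => ((δ / 2) ^ 2)⁻¹) (Metric.ball_mem_nhds _ (half_pos hδ))
    (.of_forall fun z => Measurable.aestronglyMeasurable (by fun_prop))
    ((memLp_inv_sub hδ hζ 1).integrable le_rfl) (Measurable.aestronglyMeasurable (by fun_prop))
    ?_ (integrable_const _) ?_).2.differentiableAt
  · filter_upwards [hball] with v hv z hz
    rw [norm_inv, norm_pow]
    gcongr
    exact hv z hz
  · filter_upwards [hball] with v hv z hz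
    have hne : (v : ℂ) - z ≠ 0 := norm_pos_iff.1 ((half_pos hδ).trans_le (hv z hz))
    exact (((hasDerivAt_id z).const_sub (v : ℂ)).inv hne).congr_deriv (by simp)

lemma analyticAt_stieltjesTransform [IsFiniteMeasure ν] (hν : ∀ᵐ v ∂ν, v ≤ b) (hζ : b < ζ.re) :
    AnalyticAt ℂ (stieltjesTransform ν) ζ := by
  have hopen : IsOpen {z : ℂ | b < z.re} := isOpen_lt continuous_const Complex.continuous_re
  refine DifferentiableOn.analyticAt (fun z hz => ?_) (hopen.mem_nhds hζ)
  exact (differentiableAt_stieltjesTransform (sub_pos.2 hz)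
    (hν.mono fun v hv => re_sub_le_norm_ofReal_sub hv z)).differentiableWithinAt

lemma integral_inv_sub_neg [IsFiniteMeasure ν] [NeZero ν] (hν : ∀ᵐ v ∂ν, v ≤ b) (hx : b < x) :
    ∫ v, (v - x)⁻¹ ∂ν < 0 := by
  have hpos : ∀ᵐ v ∂ν, 0 < (x - v)⁻¹ := hν.mono fun v hv => inv_pos.2 (by linarith)
  have hbound : ∀ᵐ v ∂ν, ‖(x - v)⁻¹‖ ≤ (x - b)⁻¹ := by
    filter_upwards [hν, hpos] with v hv hvpos
    rw [Real.norm_of_nonneg hvpos.le]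
    exact inv_anti₀ (sub_pos.2 hx) (by linarith)
  have hint : Integrable (fun v => (x - v)⁻¹) ν :=
    .of_bound (Measurable.aestronglyMeasurable (by fun_prop)) _ hbound
  have hsupp : Function.support (fun v => (x - v)⁻¹) =ᵐ[ν] Set.univ :=
    eventuallyEq_univ.2 (hpos.mono fun v hv => hv.ne')
  have := (integral_pos_iff_support_of_nonneg_ae (hpos.mono fun v hv => hv.le) hint).2
    (by rw [measure_congr hsupp]; exact NeZero.pos _)
  rw [← neg_pos, ← integral_neg]
  simpa only [← inv_neg, neg_sub] using this

section NonReal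

variable [IsFiniteMeasure ν]

lemma memLp_inv_sub_of_im_ne_zero (hζ : ζ.im ≠ 0) (p : ENNReal) :
    MemLp (fun v : ℝ => ((v : ℂ) - ζ)⁻¹) p ν :=
  memLp_inv_sub (abs_pos.2 hζ) (ae_of_all _ fun v => abs_im_le_norm_ofReal_sub v ζ) p

lemma stieltjesTransform_im (hζ : ζ.im ≠ 0) :
    (stieltjesTransform ν ζ).im = ζ.im * ∫ v : ℝ, ‖((v : ℂ) - ζ)⁻¹‖ ^ 2 ∂ν := by
  have him := integral_im ((memLp_inv_sub_of_im_ne_zero (ν := ν) hζ 1).integrable le_rfl)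
  rw [stieltjesTransform, ← RCLike.im_eq_complex_im, ← him, ← integral_const_mul]
  refine integral_congr_ae (ae_of_all _ fun v => ?_)
  simp [Complex.sq_norm, div_eq_mul_inv]

lemma stieltjesTransform_sub {ξ : ℂ} (hζ : ζ.im ≠ 0) (hξ : ξ.im ≠ 0) :
    stieltjesTransform ν ζ - stieltjesTransform ν ξ =
      (ζ - ξ) * ∫ v : ℝ, ((v : ℂ) - ζ)⁻¹ * ((v : ℂ) - ξ)⁻¹ ∂ν := by
  have hne {z : ℂ} (hz : z.im ≠ 0) (v : ℝ) : (v : ℂ) - z ≠ 0 :=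
    norm_pos_iff.1 ((abs_pos.2 hz).trans_le (abs_im_le_norm_ofReal_sub v z))
  rw [stieltjesTransform, stieltjesTransform, ← integral_const_mul,
    ← integral_sub ((memLp_inv_sub_of_im_ne_zero hζ 1).integrable le_rfl)
      ((memLp_inv_sub_of_im_ne_zero hξ 1).integrable le_rfl)]
  refine integral_congr_ae (ae_of_all _ fun v => ?_)
  simp only [inv_sub_inv (hne hζ v) (hne hξ v), sub_sub_sub_cancel_left, div_eq_mul_inv, mul_inv]

lemma integral_norm_inv_sub_sq_lt_one (hζ : 0 < ζ.im) (hF : 0 < (invSubordination ν ζ).im) :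
    ∫ v : ℝ, ‖((v : ℂ) - ζ)⁻¹‖ ^ 2 ∂ν < 1 := by
  rw [invSubordination, Complex.sub_im, stieltjesTransform_im hζ.ne'] at hF
  by_contra! hge
  nlinarith

-- If `F ζ = F ξ` with `ζ ≠ ξ`, then `∫ (v - ζ)⁻¹ (v - ξ)⁻¹ dν = 1`, which the arithmetic-geometric
-- mean inequality excludes because `∫ |v - ζ|⁻² dν` and `∫ |v - ξ|⁻² dν` are both less than `1`.
lemma injOn_invSubordination :
    Set.InjOn (invSubordination ν) {ζ | 0 < ζ.im ∧ 0 < (invSubordination ν ζ).im} := by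
  rintro ζ ⟨hζ, hFζ⟩ ξ ⟨hξ, hFξ⟩ hF
  by_contra hne
  have hprod : ∫ v : ℝ, ((v : ℂ) - ζ)⁻¹ * ((v : ℂ) - ξ)⁻¹ ∂ν = 1 := by
    refine mul_left_cancel₀ (sub_ne_zero.2 hne) ?_
    rw [← stieltjesTransform_sub hζ.ne' hξ.ne']
    simp only [invSubordination] at hF
    linear_combination -hF
  have hint {z : ℂ} (hz : 0 < z.im) : Integrable (fun v : ℝ => ‖((v : ℂ) - z)⁻¹‖ ^ 2 / 2) ν :=
    ((memLp_inv_sub_of_im_ne_zero hz.ne' 2).integrable_norm_pow two_ne_zero).div_const 2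
  have hamgm : ‖∫ v : ℝ, ((v : ℂ) - ζ)⁻¹ * ((v : ℂ) - ξ)⁻¹ ∂ν‖ ≤
      ∫ v : ℝ, (‖((v : ℂ) - ζ)⁻¹‖ ^ 2 / 2 + ‖((v : ℂ) - ξ)⁻¹‖ ^ 2 / 2) ∂ν := by
    refine norm_integral_le_of_norm_le ((hint hζ).add (hint hξ)) (ae_of_all _ fun v => ?_)
    rw [norm_mul]
    linarith [two_mul_le_add_sq ‖((v : ℂ) - ζ)⁻¹‖ ‖((v : ℂ) - ξ)⁻¹‖]
  rw [hprod, norm_one, integral_add (hint hζ) (hint hξ), integral_div, integral_div] at hamgm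
  linarith [integral_norm_inv_sub_sq_lt_one hζ hFζ, integral_norm_inv_sub_sq_lt_one hξ hFξ]

end NonReal

lemma isProbabilityMeasure_invSqTilt (hx : ∫ v, ((v - x) ^ 2)⁻¹ ∂ν = 1) :
    IsProbabilityMeasure (invSqTilt ν x) := by
  have hint : Integrable (fun v => ((v - x) ^ 2)⁻¹) ν := .of_integral_ne_zero (by simp [hx])
  constructor
  rw [invSqTilt, withDensity_apply _ .univ, Measure.restrict_univ,
    ← ofReal_integral_eq_lintegral_ofReal hint (ae_of_all _ fun v => by positivity), hx,
    ENNReal.ofReal_one]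

lemma stieltjesTransform_invSqTilt (ν : Measure ℝ) (x : ℝ) (ζ : ℂ) :
    stieltjesTransform (invSqTilt ν x) ζ =
      ∫ v : ℝ, (((v : ℂ) - x) ^ 2)⁻¹ * ((v : ℂ) - ζ)⁻¹ ∂ν := by
  rw [stieltjesTransform, invSqTilt, integral_withDensity_eq_integral_toReal_smul (by fun_prop)
    (ae_of_all _ fun v => ENNReal.ofReal_lt_top)]
  refine integral_congr_ae (ae_of_all _ fun v => ?_)
  simp [ENNReal.toReal_ofReal (inv_nonneg.2 (sq_nonneg (v - x)))]

lemma stieltjesTransform_eq_expansion [IsFiniteMeasure ν] (hν : ∀ᵐ v ∂ν, v ≤ b) (hx : b < x)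
    (hζ : b < ζ.re) :
    stieltjesTransform ν ζ = stieltjesTransform ν x + (ζ - x) * (∫ v, ((v - x) ^ 2)⁻¹ ∂ν : ℝ) +
      (ζ - x) ^ 2 * stieltjesTransform (invSqTilt ν x) ζ := by
  have hmem {z : ℂ} (hz : b < z.re) : MemLp (fun v : ℝ => ((v : ℂ) - z)⁻¹) ⊤ ν :=
    memLp_inv_sub (sub_pos.2 hz) (hν.mono fun v hv => re_sub_le_norm_ofReal_sub hv z) ⊤
  have hx' : b < (x : ℂ).re := hx
  have hsq : MemLp (fun v : ℝ => (((v : ℂ) - x) ^ 2)⁻¹) ⊤ ν := by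
    simpa only [sq, mul_inv] using (hmem hx').mul' (r := ⊤) (hmem hx')
  have hint₀ := (hmem hx').integrable le_top
  have hint₁ := (hsq.integrable le_top).const_mul (ζ - x)
  have hint₂ := (((hmem hζ).mul' hsq (r := ⊤)).integrable le_top).const_mul ((ζ - x) ^ 2)
  have hcast : ((∫ v, ((v - x) ^ 2)⁻¹ ∂ν : ℝ) : ℂ) = ∫ v : ℝ, (((v : ℂ) - x) ^ 2)⁻¹ ∂ν := by
    simp [← integral_complex_ofReal]
  rw [stieltjesTransform_invSqTilt, hcast, stieltjesTransform, stieltjesTransform,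
    ← integral_const_mul, ← integral_const_mul, ← integral_add hint₀ hint₁,
    ← integral_add (hint₀.fun_add hint₁) hint₂]
  refine integral_congr_ae (hν.mono fun v hv => ?_)
  have hne {z : ℂ} (hz : b < z.re) : (v : ℂ) - z ≠ 0 :=
    norm_pos_iff.1 ((sub_pos.2 hz).trans_le (re_sub_le_norm_ofReal_sub hv z))
  have hvx := hne hx'
  have hvζ := hne hζ
  field_simp
  ring

end StieltjesTransform

section EdgeExpansion

variable {ν : Measure ℝ} [IsFiniteMeasure ν] {b x L : ℝ} {m : ℂ → ℂ}

-- To second order, `F ζ = F x - (ζ - x)² ∫ dν(v) / ((v - x)² (v - ζ))`, and the integral is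
-- negative at `ζ = x`.
lemma exists_invSubordination_parametrization (hν : ∀ᵐ v ∂ν, v ≤ b) (hx : b < x)
    (hcrit : ∫ v, ((v - x) ^ 2)⁻¹ ∂ν = 1) :
    ∃ h : ℂ → ℂ, ∃ c : ℝ, 0 < c ∧ AnalyticAt ℂ h 0 ∧ h 0 = x ∧ HasDerivAt h c 0 ∧
      (∀ᶠ w in 𝓝 0, h (conj w) = conj (h w)) ∧
      ∀ᶠ w in 𝓝 0, invSubordination ν (h w) = invSubordination ν x + w ^ 2 := by
  have := isProbabilityMeasure_invSqTilt hcrit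
  have hμ : ∀ᵐ v ∂(invSqTilt ν x), v ≤ b := (withDensity_absolutelyContinuous ν _).ae_le hν
  obtain ⟨h, c, hc, hh, hhx, hderiv, hconj, hsq⟩ :=
    exists_sqrt_parametrization (analyticAt_stieltjesTransform hμ (ζ := x) hx).neg
      (.of_forall fun ζ => by simp [stieltjesTransform_conj])
      (neg_pos.2 (integral_inv_sub_neg hμ hx)) (by simp [stieltjesTransform_ofReal])
  refine ⟨h, c, hc, hh, hhx, hderiv, hconj, ?_⟩
  have hre : ∀ᶠ w in 𝓝 0, b < (h w).re :=
    (Complex.continuous_re.continuousAt.comp hh.continuousAt).eventually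
      (lt_mem_nhds (by simpa [hhx] using hx))
  filter_upwards [hsq, hre] with w hw hwre
  rw [Pi.neg_apply] at hw
  rw [invSubordination, invSubordination, stieltjesTransform_eq_expansion hν hx hwre, hcrit, ← hw]
  push_cast
  ring

lemma eventually_add_eq_parametrization {h : ℂ → ℂ} {c : ℝ}
    (him : ∀ z : ℂ, 0 < z.im → 0 ≤ (m z).im)
    (hm : ∀ z : ℂ, 0 < z.im → invSubordination ν (z + m z) = z) (hc : 0 < c)
    (hderiv : HasStrictDerivAt h c 0) (hconj : ∀ᶠ w in 𝓝 0, h (conj w) = conj (h w))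
    (hF : ∀ᶠ w in 𝓝 0, invSubordination ν (h w) = L + w ^ 2) :
    ∀ᶠ u in 𝓝 (0 : ℂ), 0 < u.im → L + u + m (L + u) = h u.sqrt := by
  have hpos : ∀ᶠ w in 𝓝 (0 : ℂ), 0 < w.im → 0 < (h w).im := by
    simpa using eventually_im_pos_of_conj_symm (x := 0) hc (by simpa using hderiv)
      (by simpa using hconj)
  filter_upwards [tendsto_complexSqrt_nhds_zero.eventually hpos,
    tendsto_complexSqrt_nhds_zero.eventually hF] with u hupos huF hu
  have hz : 0 < (L + u : ℂ).im := by simpa using hu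
  rw [complexSqrt_sq] at huF
  refine injOn_invSubordination (ν := ν) ⟨?_, ?_⟩ ⟨hupos (complexSqrt_im_pos hu), ?_⟩ ?_
  · rw [Complex.add_im]
    linarith [him _ hz]
  · rwa [hm _ hz]
  · rwa [huF]
  · rw [hm _ hz, huF]

lemma exists_edge_expansion (hν : ∀ᵐ v ∂ν, v ≤ b) (hx : b < x)
    (hcrit : ∫ v, ((v - x) ^ 2)⁻¹ ∂ν = 1) (him : ∀ z : ℂ, 0 < z.im → 0 ≤ (m z).im)
    (hm : ∀ z : ℂ, 0 < z.im → invSubordination ν (z + m z) = z)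
    (hL : L = x - ∫ v, (v - x)⁻¹ ∂ν) :
    ∃ (c : ℝ) (B C : ℂ → ℂ), 0 < c ∧ B 0 = c ∧ C 0 = (∫ v, (v - x)⁻¹ ∂ν : ℝ) ∧
      AnalyticAt ℂ B 0 ∧ AnalyticAt ℂ C 0 ∧
      (∀ᶠ u in 𝓝 0, B (conj u) = conj (B u)) ∧ (∀ᶠ u in 𝓝 0, C (conj u) = conj (C u)) ∧
      ∀ᶠ u in 𝓝 (0 : ℂ), 0 < u.im → m (L + u) = u.sqrt * B u + C u := by
  obtain ⟨h, c, hc, hh, hhx, hderiv, hconj, hF⟩ :=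
    exists_invSubordination_parametrization hν hx hcrit
  obtain ⟨A, B, hA, hB, hdec⟩ := exists_even_odd_decomposition hh
  have hA₀ : A 0 = x := by simpa [hhx] using (hdec 0).symm
  have hFx : invSubordination ν x = L := by
    rw [invSubordination, stieltjesTransform_ofReal, hL, Complex.ofReal_sub]
  rw [hFx] at hF
  have hstrict : HasStrictDerivAt h c 0 := hderiv.deriv ▸ hh.hasStrictDerivAt
  refine ⟨c, B, fun u => A u - L - u, hc,
    (hasDerivAt_zero_odd_part hA.differentiableAt hB.differentiableAt hdec).unique hderiv,
    by simp [hA₀, hL], hB, (hA.sub analyticAt_const).sub analyticAt_id,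
    conj_symm_odd_part hB.continuousAt hdec hconj, ?_, ?_⟩
  · filter_upwards [conj_symm_even_part hdec hconj] with u hu
    simp [hu]
  · filter_upwards [eventually_add_eq_parametrization him hm hc hstrict hconj hF] with u hu hpos
    have hmu := hu hpos
    rw [hdec, complexSqrt_sq] at hmu
    linear_combination hmu

lemma exists_radius_edge_expansion (hν : ∀ᵐ v ∂ν, v ≤ b) (hx : b < x)
    (hcrit : ∫ v, ((v - x) ^ 2)⁻¹ ∂ν = 1) (him : ∀ z : ℂ, 0 < z.im → 0 ≤ (m z).im)
    (hm : ∀ z : ℂ, 0 < z.im → invSubordination ν (z + m z) = z)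
    (hL : L = x - ∫ v, (v - x)⁻¹ ∂ν) :
    ∃ (r c : ℝ) (B C : ℂ → ℂ), 0 < r ∧ 0 < c ∧ B 0 = c ∧
      AnalyticOnNhd ℂ B (Metric.ball 0 r) ∧ AnalyticOnNhd ℂ C (Metric.ball 0 r) ∧
      (∀ t : ℝ, |t| < r → (B t).im = 0 ∧ (C t).im = 0) ∧
      (∀ t : ℝ, |t| < r → 0 < (B t).re ∧ (C t).re < 0) ∧
      ∀ u ∈ Metric.ball 0 r, 0 < u.im → m (L + u) = u.sqrt * B u + C u := by
  obtain ⟨c, B, C, hc, hB₀, hC₀, hB, hC, hBconj, hCconj, hexp⟩ :=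
    exists_edge_expansion hν hx hcrit him hm hL
  have : NeZero ν := ⟨fun h => by simp [h] at hcrit⟩
  have hBpos : ∀ᶠ u in 𝓝 0, 0 < (B u).re :=
    (Complex.continuous_re.continuousAt.comp hB.continuousAt).eventually
      (lt_mem_nhds (by simpa [hB₀] using hc))
  have hCneg : ∀ᶠ u in 𝓝 0, (C u).re < 0 :=
    (Complex.continuous_re.continuousAt.comp hC.continuousAt).eventually
      (gt_mem_nhds (by simpa [hC₀] using integral_inv_sub_neg hν hx))
  obtain ⟨r, hr, hball⟩ := Metric.eventually_nhds_iff_ball.1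
    (hB.eventually_analyticAt.and <| hC.eventually_analyticAt.and <| hBconj.and <| hCconj.and <|
      hBpos.and <| hCneg.and hexp)
  have hmem {t : ℝ} (ht : |t| < r) : (t : ℂ) ∈ Metric.ball 0 r := by simpa using ht
  refine ⟨r, c, B, C, hr, hc, hB₀, fun u hu => (hball u hu).1, fun u hu => (hball u hu).2.1,
    fun t ht => ?_, fun t ht => ?_, fun u hu => (hball u hu).2.2.2.2.2.2⟩
  · obtain ⟨-, -, hBt, hCt, -⟩ := hball t (hmem ht)
    rw [Complex.conj_ofReal] at hBt hCt
    exact ⟨Complex.conj_eq_iff_im.1 hBt.symm, Complex.conj_eq_iff_im.1 hCt.symm⟩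
  · obtain ⟨-, -, -, -, hBt, hCt, -⟩ := hball t (hmem ht)
    exact ⟨hBt, hCt⟩

lemma tendsto_ofReal_add_mul_I (t : ℝ) :
    Tendsto (fun η : ℝ => (t + η * Complex.I : ℂ)) (𝓝[>] 0) (𝓝[{u | 0 < u.im}] t) := by
  have hcont : Continuous fun η : ℝ => (t + η * Complex.I : ℂ) := by fun_prop
  refine tendsto_nhdsWithin_iff.2 ⟨(hcont.tendsto' 0 t (by simp)).mono_left nhdsWithin_le_nhds, ?_⟩
  filter_upwards [self_mem_nhdsWithin] with η hη
  simpa using hη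

lemma tendsto_of_sqrt_expansion {f B C : ℂ → ℂ} {t : ℝ} (hB : ContinuousAt B t)
    (hC : ContinuousAt C t) (hf : ∀ᶠ u in 𝓝 (t : ℂ), 0 < u.im → f u = u.sqrt * B u + C u) :
    Tendsto f (𝓝[{u | 0 < u.im}] t) (𝓝 ((√t + √(-t) * Complex.I) * B t + C t)) := by
  have hsqrt : Tendsto Complex.sqrt (𝓝[{u | 0 < u.im}] t) (𝓝 (t : ℂ).sqrt) :=
    (continuousOn_complexSqrt t (Complex.ofReal_im t).ge).mono_left
      (nhdsWithin_mono _ fun u (hu : 0 < u.im) => hu.le)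
  rw [← complexSqrt_ofReal]
  refine ((hsqrt.mul (hB.mono_left nhdsWithin_le_nhds)).add
    (hC.mono_left nhdsWithin_le_nhds)).congr' (eventually_nhdsWithin_iff.2 ?_)
  exact hf.mono fun u hu hpos => (hu hpos).symm

lemma tendsto_boundary_value {B C : ℂ → ℂ} {E : ℝ} (hB : ContinuousAt B (E - L : ℝ))
    (hC : ContinuousAt C (E - L : ℝ)) (hBim : (B (E - L : ℝ)).im = 0)
    (hCim : (C (E - L : ℝ)).im = 0)
    (hexp : ∀ᶠ u in 𝓝 ((E - L : ℝ) : ℂ), 0 < u.im → m (L + u) = u.sqrt * B u + C u) :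
    Tendsto (fun η : ℝ => (m (E + η * Complex.I)).im) (𝓝[>] 0)
        (𝓝 (√(L - E) * (B (E - L : ℝ)).re)) ∧
      Tendsto (fun η : ℝ => (m (E + η * Complex.I)).re) (𝓝[>] 0)
        (𝓝 (√(E - L) * (B (E - L : ℝ)).re + (C (E - L : ℝ)).re)) := by
  have hlim := (tendsto_of_sqrt_expansion hB hC hexp).comp (tendsto_ofReal_add_mul_I (E - L))
  have hpath (η : ℝ) : (L : ℂ) + ((E - L : ℝ) + η * Complex.I) = E + η * Complex.I := by
    push_cast
    ring
  simp only [Function.comp_def, hpath, neg_sub] at hlim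
  constructor
  · simpa [hBim, hCim, Function.comp_def, -Complex.ofReal_sub] using
      (Complex.continuous_im.tendsto _).comp hlim
  · simpa [hBim, hCim, Function.comp_def, -Complex.ofReal_sub] using
      (Complex.continuous_re.tendsto _).comp hlim

end EdgeExpansion

theorem stmt_11_general (ν : Measure ℝ) [IsFiniteMeasure ν] (b : ℝ) (hν : ∀ᵐ v ∂ν, v ≤ b)
    (m : ℂ → ℂ) (him : ∀ z : ℂ, 0 < z.im → 0 ≤ (m z).im)
    (heq : ∀ z : ℂ, 0 < z.im → m z = ∫ v : ℝ, ((v : ℂ) - z - m z)⁻¹ ∂ν)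
    (ζp : ℝ) (hζp_out : b < ζp) (hζp : ∫ v, ((v - ζp) ^ 2)⁻¹ ∂ν = 1)
    (Lp : ℝ) (hLp : Lp = ζp - ∫ v, (v - ζp)⁻¹ ∂ν) :
    ∃ r : ℝ, 0 < r ∧ ∃ cp : ℝ, 0 < cp ∧ ∃ Bf Cf : ℂ → ℂ,
      AnalyticOnNhd ℂ Bf (Metric.ball 0 r) ∧ AnalyticOnNhd ℂ Cf (Metric.ball 0 r) ∧
      (∀ x : ℝ, |x| < r → (Bf (x : ℂ)).im = 0 ∧ (Cf (x : ℂ)).im = 0) ∧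
      Bf 0 = 0 ∧
      (∀ x : ℝ, |x| < r → 0 < cp + (Bf (x : ℂ)).re ∧ (Cf (x : ℂ)).re < 0) ∧
      ∀ E : ℝ, |E - Lp| < r →
        (E ≤ Lp →
          Tendsto (fun η : ℝ => (m (E + η * Complex.I)).im) (nhdsWithin 0 (Set.Ioi 0))
            (nhds (Real.sqrt (Lp - E) * (cp + (Bf ((-(Lp - E) : ℝ) : ℂ)).re))) ∧
          Tendsto (fun η : ℝ => (m (E + η * Complex.I)).re) (nhdsWithin 0 (Set.Ioi 0))
            (nhds ((Cf ((-(Lp - E) : ℝ) : ℂ)).re))) ∧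
        (Lp ≤ E →
          Tendsto (fun η : ℝ => (m (E + η * Complex.I)).im) (nhdsWithin 0 (Set.Ioi 0))
            (nhds 0) ∧
          Tendsto (fun η : ℝ => (m (E + η * Complex.I)).re) (nhdsWithin 0 (Set.Ioi 0))
            (nhds (Real.sqrt (E - Lp) * (cp + (Bf ((E - Lp : ℝ) : ℂ)).re)
              + (Cf ((E - Lp : ℝ) : ℂ)).re))) := by
  have hm (z : ℂ) (hz : 0 < z.im) : invSubordination ν (z + m z) = z := by
    simp only [invSubordination, stieltjesTransform, ← sub_sub, ← heq z hz, add_sub_cancel_right]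
  obtain ⟨r, c, B, C, hr, hc, hB₀, hB, hC, hreal, hsign, hexp⟩ :=
    exists_radius_edge_expansion hν hζp_out hζp him hm hLp
  refine ⟨r, hr, c, hc, fun u => B u - c, C, hB.sub analyticOnNhd_const, hC,
    fun t ht => by simpa using hreal t ht, by simp [hB₀], fun t ht => by simpa using hsign t ht,
    fun E hE => ?_⟩
  have hmem : ((E - Lp : ℝ) : ℂ) ∈ Metric.ball 0 r := by simpa [← Complex.ofReal_sub] using hE
  obtain ⟨him_lim, hre_lim⟩ := tendsto_boundary_value (hB _ hmem).continuousAt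
    (hC _ hmem).continuousAt (hreal _ hE).1 (hreal _ hE).2
    (mem_of_superset (Metric.isOpen_ball.mem_nhds hmem) hexp)
  simp only [neg_sub, Complex.sub_re, Complex.ofReal_re, add_sub_cancel]
  refine ⟨fun hEL => ⟨him_lim, ?_⟩, fun hLE => ⟨?_, hre_lim⟩⟩
  · simpa [Real.sqrt_eq_zero_of_nonpos (sub_nonpos.2 hEL)] using hre_lim
  · simpa [Real.sqrt_eq_zero_of_nonpos (sub_nonpos.2 hLE)] using him_lim

/-- (Square-root edge expansion at the upper edge `L+`.)  Under the
standing assumptions there exist `r > 0`, `c₊ > 0` and functions `Bf, Cf` analytic on the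
disc `{|w| < r}`, real-valued on the reals, with `Bf 0 = 0`, `c₊ + Bf > 0` and `Cf < 0` on
`(−r, r)`, such that for every real `E` with `|E − L+| < r` the boundary limits of
`Im m(E+iη)` and `Re m(E+iη)` as `η ↓ 0` exist and are given by
`√(L+−E)(c₊ + Bf(−(L+−E)))` and `Cf(−(L+−E))` for `E ≤ L+`, and by `0` and
`√(E−L+)(c₊ + Bf(E−L+)) + Cf(E−L+)` for `E ≥ L+`. -/
theorem stmt_11 (ν : Measure ℝ) [IsProbabilityMeasure ν]
    -- `[a,b]` is the smallest closed interval containing `supp ν`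
    (a b : ℝ) (hab : a ≤ b)
    (hsupp : ν (Set.Icc a b)ᶜ = 0)
    (hmin : ∀ a' b' : ℝ, ν (Set.Icc a' b')ᶜ = 0 → Set.Icc a b ⊆ Set.Icc a' b')
    -- `ν` is centered
    (hcent : ∫ v, v ∂ν = 0)
    -- edge assumption: `∫ dν(v)/(v − x)² ≥ 1 + ϖ` on `[a,b]` (value possibly `+∞`)
    (ϖ : ℝ) (hϖ : 0 < ϖ)
    (hedge : ∀ x ∈ Set.Icc a b,
      ENNReal.ofReal (1 + ϖ) ≤ ∫⁻ v, (ENNReal.ofReal ((v - x) ^ 2))⁻¹ ∂ν)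
    -- `m` is the Stieltjes transform of the deformed semicircle law
    (m : ℂ → ℂ)
    (hholo : DifferentiableOn ℂ m {z : ℂ | 0 < z.im})
    (him : ∀ z : ℂ, 0 < z.im → 0 ≤ (m z).im)
    (heq : ∀ z : ℂ, 0 < z.im → m z = ∫ v : ℝ, ((v : ℂ) - z - m z)⁻¹ ∂ν)
    (hbdd : ∀ E : ℝ, IsBoundedUnder (· ≤ ·) (nhdsWithin (0:ℝ) (Set.Ioi 0))
      (fun η : ℝ => (m (E + η * Complex.I)).im))
    -- `ζ− < ζ+` are the two real solutions of `∫ dν(v)/(v − ζ)² = 1`, outside `[a,b]`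
    (ζm ζp : ℝ) (hζζ : ζm < ζp)
    (hζm_out : ζm < a) (hζp_out : b < ζp)
    (hζm : ∫ v, ((v - ζm) ^ 2)⁻¹ ∂ν = 1)
    (hζp : ∫ v, ((v - ζp) ^ 2)⁻¹ ∂ν = 1)
    -- `L± := ζ± − ∫ dν(v)/(v − ζ±)` are the edges of the support of `ρ_fc`
    (Lm Lp : ℝ)
    (hLm : Lm = ζm - ∫ v, (v - ζm)⁻¹ ∂ν)
    (hLp : Lp = ζp - ∫ v, (v - ζp)⁻¹ ∂ν) :
    ∃ r : ℝ, 0 < r ∧ ∃ cp : ℝ, 0 < cp ∧ ∃ Bf Cf : ℂ → ℂ,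
      AnalyticOnNhd ℂ Bf (Metric.ball 0 r) ∧ AnalyticOnNhd ℂ Cf (Metric.ball 0 r) ∧
      (∀ x : ℝ, |x| < r → (Bf (x : ℂ)).im = 0 ∧ (Cf (x : ℂ)).im = 0) ∧
      Bf 0 = 0 ∧
      (∀ x : ℝ, |x| < r → 0 < cp + (Bf (x : ℂ)).re ∧ (Cf (x : ℂ)).re < 0) ∧
      ∀ E : ℝ, |E - Lp| < r →
        (E ≤ Lp →
          Tendsto (fun η : ℝ => (m (E + η * Complex.I)).im) (nhdsWithin 0 (Set.Ioi 0))
            (nhds (Real.sqrt (Lp - E) * (cp + (Bf ((-(Lp - E) : ℝ) : ℂ)).re))) ∧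
          Tendsto (fun η : ℝ => (m (E + η * Complex.I)).re) (nhdsWithin 0 (Set.Ioi 0))
            (nhds ((Cf ((-(Lp - E) : ℝ) : ℂ)).re))) ∧
        (Lp ≤ E →
          Tendsto (fun η : ℝ => (m (E + η * Complex.I)).im) (nhdsWithin 0 (Set.Ioi 0))
            (nhds 0) ∧
          Tendsto (fun η : ℝ => (m (E + η * Complex.I)).re) (nhdsWithin 0 (Set.Ioi 0))
            (nhds (Real.sqrt (E - Lp) * (cp + (Bf ((E - Lp : ℝ) : ℂ)).re)
              + (Cf ((E - Lp : ℝ) : ℂ)).re))) := by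
  have hν : ∀ᵐ v ∂ν, v ∈ Set.Icc a b := mem_ae_iff.2 hsupp
  exact stmt_11_general ν b (hν.mono fun _ hv => hv.2) m him heq ζp hζp_out hζp Lp hLp
end
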